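/- Let (ρ, u, B) be a smooth solution of the isentropic compressible MHD system with Navier-slip boundary conditions on Ω. Then for every 2 ≤ p < ∞ there is a constant C depending only on p, μ, and Ω such that: (i) ‖∇𝒫u‖_{L^p} + ‖ω‖_{L^p} ≤ C(‖ρu̇‖_{L²} + ‖B·∇B‖_{L²})^{1−2/p}‖∇u‖_{L²}^{2/p} + C‖∇u‖_{L²}; (ii) ‖F‖_{H¹} ≤ C(‖ρu̇‖_{L²} + ‖∇u‖_{L²} + ‖|B||∇B|‖_{L²} + ‖B‖²_{L⁴}); and (iii) ‖F‖_{L^p} ≤ C[(2μ+λ)‖div u‖_{L²} + ‖P−P̄‖_{L²}]^{2/p}(‖ρu̇‖_{L²} + ‖∇u‖_{L²} + ‖|B||∇B|‖_{L²})^{1−2/p} + C‖B‖²_{L^{2p}}. -/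

import Mathlib

noncomputable section

open MeasureTheory Real Set Filter Topology Bornology

/-- Points of the plane (with an equivalent norm to the Euclidean one). -/
abbrev V2 := Fin 2 → ℝ

namespace MHD

/-- `i`-th partial derivative of a scalar field. -/
def pd (i : Fin 2) (f : V2 → ℝ) (x : V2) : ℝ :=
  fderiv ℝ f x (Pi.single i 1)

/-- Gradient of a scalar field. -/
def grad (f : V2 → ℝ) (x : V2) : V2 := fun i => pd i f x

/-- Divergence of a planar vector field. -/
def div2 (u : V2 → V2) (x : V2) : ℝ := ∑ i, pd i (fun y => u y i) x

/-- (Scalar) curl of a planar vector field. -/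
def curl2 (u : V2 → V2) (x : V2) : ℝ :=
  pd 0 (fun y => u y 1) x - pd 1 (fun y => u y 0) x

/-- Laplacian of a scalar field. -/
def lap (f : V2 → ℝ) (x : V2) : ℝ := ∑ j, pd j (pd j f) x

/-- Euclidean inner product on the plane. -/
def dot (a b : V2) : ℝ := ∑ i, a i * b i

/-- Squared Euclidean norm on the plane. -/
def nsq (a : V2) : ℝ := ∑ i, (a i) ^ 2

/-- Rotation by -90 degrees : `perp (n¹,n²) = (n²,−n¹)`. -/
def perp (v : V2) : V2 := ![v 1, -(v 0)]

/-- Squared Frobenius norm of the spatial gradient of a vector field. -/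
def gnsq (u : V2 → V2) (x : V2) : ℝ := ∑ i, ∑ j, (pd j (fun y => u y i) x) ^ 2

/-- Squared Frobenius norm of the second spatial gradient of a vector field. -/
def g2nsq (u : V2 → V2) (x : V2) : ℝ :=
  ∑ i, ∑ j, ∑ k, (pd k (fun y => pd j (fun z => u z i) y) x) ^ 2

/-- `Lᵖ(Ω)` norm of a scalar field. -/
def LpS (p : ℝ) (Ω : Set V2) (f : V2 → ℝ) : ℝ :=
  (∫ x in Ω, |f x| ^ p) ^ (1 / p)

/-- `Lᵖ(Ω)` norm of a vector field (Euclidean norm pointwise). -/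
def LpV (p : ℝ) (Ω : Set V2) (u : V2 → V2) : ℝ :=
  (∫ x in Ω, (nsq (u x)) ^ (p / 2)) ^ (1 / p)

/-- `Lᵖ(Ω)` norm of the gradient of a vector field. -/
def LpG (p : ℝ) (Ω : Set V2) (u : V2 → V2) : ℝ :=
  (∫ x in Ω, (gnsq u x) ^ (p / 2)) ^ (1 / p)

/-- `Lᵖ(Ω)` norm of the second gradient of a vector field. -/
def LpG2 (p : ℝ) (Ω : Set V2) (u : V2 → V2) : ℝ :=
  (∫ x in Ω, (g2nsq u x) ^ (p / 2)) ^ (1 / p)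

/-- Average of a scalar field over `Ω`. -/
def avg (Ω : Set V2) (f : V2 → ℝ) : ℝ := (∫ x in Ω, f x) / (volume Ω).toReal

/-- Time derivative of a time dependent scalar field. -/
def dt (f : ℝ → V2 → ℝ) (t : ℝ) (x : V2) : ℝ := deriv (fun s => f s x) t

/-- Time derivative of a time dependent vector field. -/
def dtV (u : ℝ → V2 → V2) (t : ℝ) (x : V2) : V2 := fun i => dt (fun s y => u s y i) t x

/-- Material derivative `u̇ = u_t + (u·∇)u` of the velocity field itself. -/
def matD (u : ℝ → V2 → V2) (t : ℝ) (x : V2) : V2 := fun i =>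
  dt (fun s y => u s y i) t x + dot (u t x) (grad (fun y => u t y i) x)

/-- The material derivative `(div u)· = (div u)_t + u·∇ div u`. -/
def divdot (u : ℝ → V2 → V2) (t : ℝ) (x : V2) : ℝ :=
  deriv (fun s => div2 (u s) x) t + dot (u t x) (grad (fun y => div2 (u t) y) x)

/-- Average pressure `P̄` at time `t`. -/
def Pbar (Ω : Set V2) (a γ : ℝ) (ρ : ℝ → V2 → ℝ) (t : ℝ) : ℝ :=
  avg Ω (fun x => a * ρ t x ^ γ)

/-- Effective viscous flux `F = (2μ+λ) div u − (P − P̄) − |B|²/2`. -/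
def Fflux (Ω : Set V2) (a γ μ lam : ℝ) (ρ : ℝ → V2 → ℝ) (u B : ℝ → V2 → V2)
    (t : ℝ) (x : V2) : ℝ :=
  (2 * μ + lam) * div2 (u t) x - (a * ρ t x ^ γ - Pbar Ω a γ ρ t) - nsq (B t x) / 2

/-- Potential energy density `G(ρ)`. -/
def Gpot (a γ ρb : ℝ) (r : ℝ) : ℝ :=
  r * ∫ ξ in ρb..r, (a * ξ ^ γ - a * ρb ^ γ) / ξ ^ 2

/-- Initial total energy `C₀`. -/
def C0 (Ω : Set V2) (a γ : ℝ) (ρ₀ : V2 → ℝ) (u₀ B₀ : V2 → V2) : ℝ :=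
  ∫ x in Ω, (ρ₀ x * nsq (u₀ x) / 2 + nsq (B₀ x) / 2 + Gpot a γ (avg Ω ρ₀) (ρ₀ x))

/-- The time weight `σ(t) = min{1,t}`. -/
def tw (t : ℝ) : ℝ := min 1 t

/-- Smoothness (in time and space) of a time dependent scalar field. -/
def Smooth2 (f : ℝ → V2 → ℝ) : Prop := ContDiff ℝ (⊤ : ℕ∞) (fun p : ℝ × V2 => f p.1 p.2)

/-- Smoothness (in time and space) of a time dependent vector field. -/
def Smooth2V (u : ℝ → V2 → V2) : Prop := ∀ i, Smooth2 (fun t x => u t x i)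

/-- A bounded domain with smooth boundary, given by a smooth defining function `φ`,
with outward unit normal `n` on the boundary. -/
structure SmoothDomain (Ω : Set V2) (n : V2 → V2) : Prop where
  nonempty : Ω.Nonempty
  bounded : IsBounded Ω
  defining : ∃ φ : V2 → ℝ, ContDiff ℝ (⊤ : ℕ∞) φ ∧ Ω = {x | φ x < 0} ∧
      frontier Ω = {x | φ x = 0} ∧
      (∀ x ∈ frontier Ω, grad φ x ≠ 0) ∧
      (∀ x ∈ frontier Ω, n x = (Real.sqrt (nsq (grad φ x)))⁻¹ • grad φ x)

/-- Outward unit normal on the boundary of a convex domain, characterized by the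
supporting hyperplane property. -/
def ConvexOuterNormal (Ω : Set V2) (n : V2 → V2) : Prop :=
  ∀ x ∈ frontier Ω, nsq (n x) = 1 ∧ ∀ y ∈ closure Ω, dot (n x) (y - x) ≤ 0

/-- Membership in `H¹(Ω)` for (a smooth representative of) a vector field. -/
def InH1V (Ω : Set V2) (f : V2 → V2) : Prop :=
  (∀ i, Differentiable ℝ fun x => f x i) ∧
  IntegrableOn (fun x => nsq (f x)) Ω volume ∧ IntegrableOn (fun x => gnsq f x) Ω volume

/-- Classical (pointwise) solution of the isentropic compressible MHD system with
Navier-slip boundary conditions, for times in the set `I`. -/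
structure IsMHDSol (Ω : Set V2) (n : V2 → V2) (a γ μ lam ν : ℝ) (I : Set ℝ)
    (ρ : ℝ → V2 → ℝ) (u B : ℝ → V2 → V2) : Prop where
  mass : ∀ t ∈ I, ∀ x ∈ Ω,
    dt ρ t x + div2 (fun y j => ρ t y * u t y j) x = 0
  momentum : ∀ t ∈ I, ∀ x ∈ Ω, ∀ i,
    dt (fun s y => ρ s y * u s y i) t x
      + (∑ j, pd j (fun y => ρ t y * u t y i * u t y j) x)
      + pd i (fun y => a * ρ t y ^ γ) x
    = μ * lap (fun y => u t y i) x
      + (μ + lam) * pd i (fun y => div2 (u t) y) x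
      + dot (B t x) (grad (fun y => B t y i) x)
      - pd i (fun y => nsq (B t y)) x / 2
  magnetic : ∀ t ∈ I, ∀ x ∈ Ω, ∀ i,
    dt (fun s y => B s y i) t x + dot (u t x) (grad (fun y => B t y i) x)
      - dot (B t x) (grad (fun y => u t y i) x) + B t x i * div2 (u t) x
    = ν * lap (fun y => B t y i) x
  divB : ∀ t ∈ I, ∀ x ∈ Ω, div2 (B t) x = 0
  slipU : ∀ t ∈ I, ∀ x ∈ frontier Ω, dot (u t x) (n x) = 0 ∧ curl2 (u t) x = 0
  slipB : ∀ t ∈ I, ∀ x ∈ frontier Ω, dot (B t x) (n x) = 0 ∧ curl2 (B t) x = 0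

/-!
Write `f = (2μ+λ) div u − (P − P̄)`, so that `F = f − |B|²/2`. The momentum equation reads
`∇F − μ ∇^⊥ω = ρu̇ − B·∇B`. Since `ω` vanishes on `∂Ω`, its tangential derivative does too, so
`∇F` and `∇^⊥ω` are orthogonal in `L²(Ω)` and each of `‖∇F‖`, `μ‖∇ω‖` is at most
`‖ρu̇‖ + ‖B·∇B‖`.

Estimates (ii) and (iii) follow from the Poincaré and Gagliardo–Nirenberg inequalities for `f`,
whose mean is zero because `u·n = 0`.

For (i) the point is to bound `∇²v` in `L²` by `v`, `∇v` and `∇ curl v` when `v` is solenoidal and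
tangent to `∂Ω = {φ = 0}`. On a convex domain a function `k` vanishing on `∂Ω` satisfies
`∫ |∇²k|² ≤ ∫ (Δk)²`, since the boundary term of the integration by parts has a sign. This applies
to `k = v·∇φ` and `k = φ v⁰`, whose Laplacians are of lower order because `Δv = -∇^⊥ curl v`, and
the two Hessians control `∇²v` because `φ² + |∇φ|² > 0`. Interpolation does the rest.
-/

open scoped ContDiff

/-! ### Calculus in the plane -/

section Calculus

variable {f g : V2 → ℝ} {x : V2}

lemma pd_add (i : Fin 2) (hf : DifferentiableAt ℝ f x) (hg : DifferentiableAt ℝ g x) :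
    pd i (fun y => f y + g y) x = pd i f x + pd i g x := by
  rw [pd, fderiv_fun_add hf hg]
  rfl

lemma pd_sub (i : Fin 2) (hf : DifferentiableAt ℝ f x) (hg : DifferentiableAt ℝ g x) :
    pd i (fun y => f y - g y) x = pd i f x - pd i g x := by
  rw [pd, fderiv_fun_sub hf hg]
  rfl

lemma pd_neg (i : Fin 2) (f : V2 → ℝ) (x : V2) : pd i (fun y => -f y) x = -pd i f x := by
  rw [pd, fderiv_fun_neg]
  rfl

lemma pd_mul (i : Fin 2) (hf : DifferentiableAt ℝ f x) (hg : DifferentiableAt ℝ g x) :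
    pd i (fun y => f y * g y) x = pd i f x * g x + f x * pd i g x := by
  rw [pd, fderiv_fun_mul hf hg]
  simp only [pd, add_apply, smul_apply, smul_eq_mul]
  ring

lemma pd_const (i : Fin 2) (c : ℝ) (x : V2) : pd i (fun _ => c) x = 0 := by
  simp [pd]

lemma pd_congr {Ω : Set V2} (hΩ : IsOpen Ω) (hfg : ∀ y ∈ Ω, f y = g y) (i : Fin 2)
    (hx : x ∈ Ω) : pd i f x = pd i g x := by
  rw [pd, pd, (eventuallyEq_of_mem (hΩ.mem_nhds hx) hfg).fderiv_eq]

lemma contDiff_pd {m n : WithTop ℕ∞} (hf : ContDiff ℝ n f) (hmn : m + 1 ≤ n) (i : Fin 2) :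
    ContDiff ℝ m (pd i f) :=
  (hf.fderiv_right hmn).clm_apply contDiff_const

lemma continuous_pd (hf : ContDiff ℝ 1 f) (i : Fin 2) : Continuous (pd i f) :=
  (hf.continuous_fderiv one_ne_zero).clm_apply continuous_const

lemma differentiable_pd (hf : ContDiff ℝ 2 f) (i : Fin 2) : Differentiable ℝ (pd i f) :=
  (contDiff_pd (m := 1) hf (by norm_num) i).differentiable one_ne_zero

lemma pd_comm (hf : ContDiff ℝ 2 f) (i j : Fin 2) (x : V2) :
    pd i (pd j f) x = pd j (pd i f) x := by
  have pd_pd_eq (i j : Fin 2) :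
      pd i (pd j f) x = fderiv ℝ (fderiv ℝ f) x (Pi.single i 1) (Pi.single j 1) := by
    have hd : DifferentiableAt ℝ (fderiv ℝ f) x :=
      (hf.fderiv_right (m := 1) (by norm_num)).differentiable one_ne_zero x
    change fderiv ℝ (fun y => fderiv ℝ f y (Pi.single j 1)) x _ = _
    rw [fderiv_clm_apply hd (differentiableAt_const _)]
    simp
  rw [pd_pd_eq, pd_pd_eq]
  exact (hf.contDiffAt.isSymmSndFDerivAt (by simp)).eq _ _

lemma fderiv_apply_eq_dot (f : V2 → ℝ) (x w : V2) : fderiv ℝ f x w = dot w (grad f x) := by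
  have hw : w = w 0 • (Pi.single 0 1 : V2) + w 1 • (Pi.single 1 1 : V2) := by
    ext i; fin_cases i <;> simp
  conv_lhs => rw [hw]
  simp only [map_add, map_smul, dot, grad, pd, Fin.sum_univ_two, smul_eq_mul]

lemma hasDerivAt_along_line (hf : Differentiable ℝ f) (x w : V2) (s : ℝ) :
    HasDerivAt (fun r : ℝ => f (x + r • w)) (dot w (grad f (x + s • w))) s := by
  rw [← fderiv_apply_eq_dot]
  have hline : HasDerivAt (fun r : ℝ => x + r • w) w s := by
    simpa using ((hasDerivAt_id s).smul_const w).const_add x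
  exact (hf _).hasFDerivAt.comp_hasDerivAt s hline

lemma contDiff_grad {m n : WithTop ℕ∞} (hf : ContDiff ℝ n f) (hmn : m + 1 ≤ n) :
    ContDiff ℝ m (grad f) :=
  contDiff_pi.2 fun i => contDiff_pd hf hmn i

lemma continuous_grad (hf : ContDiff ℝ 1 f) : Continuous (grad f) :=
  continuous_pi fun i => continuous_pd hf i

lemma continuous_div2 {X : V2 → V2} (hX : ContDiff ℝ 1 X) : Continuous (div2 X) :=
  continuous_finsetSum _ fun i _ => continuous_pd (contDiff_pi.1 hX i) i

lemma continuous_curl2 {X : V2 → V2} (hX : ContDiff ℝ 1 X) : Continuous (curl2 X) :=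
  (continuous_pd (contDiff_pi.1 hX 1) 0).sub (continuous_pd (contDiff_pi.1 hX 0) 1)

lemma continuous_gnsq {X : V2 → V2} (hX : ContDiff ℝ 1 X) : Continuous (gnsq X) :=
  continuous_finsetSum _ fun i _ => continuous_finsetSum _ fun j _ =>
    (continuous_pd (contDiff_pi.1 hX i) j).pow 2

lemma gnsq_nonneg (X : V2 → V2) (x : V2) : 0 ≤ gnsq X x := by
  unfold gnsq
  positivity

lemma sq_pd_le_gnsq (X : V2 → V2) (i j : Fin 2) (x : V2) :
    pd j (fun y => X y i) x ^ 2 ≤ gnsq X x :=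
  (Finset.single_le_sum (f := fun j => pd j (fun y => X y i) x ^ 2) (fun _ _ => sq_nonneg _)
    (Finset.mem_univ j)).trans
    (Finset.single_le_sum (f := fun i => ∑ j, pd j (fun y => X y i) x ^ 2)
      (fun _ _ => Finset.sum_nonneg fun _ _ => sq_nonneg _) (Finset.mem_univ i))

end Calculus

section Algebra

lemma dot_perp_self (a : V2) : dot (perp a) a = 0 := by
  simp only [dot, perp, Fin.sum_univ_two, Matrix.cons_val_zero, Matrix.cons_val_one,
    Matrix.cons_val_fin_one]
  ring

lemma dot_self (a : V2) : dot a a = nsq a := by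
  simp only [dot, nsq, sq]

lemma nsq_nonneg (a : V2) : 0 ≤ nsq a := by
  unfold nsq
  positivity

lemma nsq_pos {a : V2} (ha : a ≠ 0) : 0 < nsq a := by
  refine (nsq_nonneg a).lt_of_ne' fun h => ha ?_
  rw [nsq, Finset.sum_eq_zero_iff_of_nonneg fun i _ => sq_nonneg _] at h
  ext i
  simpa using h i (Finset.mem_univ i)

@[fun_prop]
lemma continuous_dot {X : Type*} [TopologicalSpace X] {a b : X → V2} (ha : Continuous a)
    (hb : Continuous b) : Continuous fun x => dot (a x) (b x) :=
  continuous_finsetSum _ fun i _ => ((continuous_pi_iff.1 ha i).mul (continuous_pi_iff.1 hb i))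

@[fun_prop]
lemma continuous_nsq {X : Type*} [TopologicalSpace X] {a : X → V2} (ha : Continuous a) :
    Continuous fun x => nsq (a x) :=
  continuous_finsetSum _ fun i _ => (continuous_pi_iff.1 ha i).pow 2

end Algebra

lemma integral_pd_eq_zero {f : V2 → ℝ} (hf : ContDiff ℝ 1 f) (hsupp : HasCompactSupport f)
    (i : Fin 2) : ∫ x, pd i f x = 0 := by
  have hpd : Integrable (pd i f) :=
    (continuous_pd hf i).integrable_of_hasCompactSupport (hsupp.fderiv_apply ℝ _)
  have h := integral_mul_fderiv_eq_neg_fderiv_mul_of_integrable (μ := (volume : Measure V2))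
    (f := fun _ : V2 => (1 : ℝ)) (g := f) (v := Pi.single i 1) (by simp)
    (by simp only [one_mul]; exact hpd)
    (by simpa using hf.continuous.integrable_of_hasCompactSupport hsupp)
    (fun _ _ => differentiableAt_const _) (fun x _ => hf.differentiable one_ne_zero x)
  simpa [pd] using h

lemma integrableOn_of_isBounded {X E : Type*} [MetricSpace X] [ProperSpace X] [MeasurableSpace X]
    [OpensMeasurableSpace X] [NormedAddCommGroup E]
    {ν : Measure X} [IsFiniteMeasureOnCompacts ν] {S : Set X} (hS : IsBounded S) {f : X → E}
    (hf : Continuous f) : IntegrableOn f S ν :=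
  (hf.continuousOn.integrableOn_compact hS.isCompact_closure).mono_set subset_closure

/-! ### The divergence theorem as an inequality -/

/-- `φ` is a defining function of the bounded smooth domain `Ω = {φ < 0}`, so that `∇φ / |∇φ|` is
the outward unit normal on `∂Ω`. -/
structure IsDefiningFunction (φ : V2 → ℝ) (Ω : Set V2) : Prop where
  isBounded : IsBounded Ω
  contDiff : ContDiff ℝ ∞ φ
  eq_setOf_neg : Ω = {x | φ x < 0}
  frontier_eq : frontier Ω = {x | φ x = 0}
  grad_ne_zero : ∀ x ∈ frontier Ω, grad φ x ≠ 0

/-- The cutoff `χ_ε`, a smooth function of `-φ / ε` which is `1` where `φ ≤ -2ε` and `0` where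
`φ ≥ -ε`. -/
def boundaryCutoff (φ : V2 → ℝ) (ε : ℝ) (x : V2) : ℝ := smoothTransition (-φ x / ε - 1)

/-- The nonnegative density `δ_ε` with `∇χ_ε = -δ_ε ∇φ`; as `ε → 0` it concentrates on the
boundary. -/
def boundaryLayer (φ : V2 → ℝ) (ε : ℝ) (x : V2) : ℝ :=
  deriv smoothTransition (-φ x / ε - 1) / ε

section Cutoff

variable {φ : V2 → ℝ} {ε : ℝ} {x : V2}

lemma contDiff_boundaryCutoff {n : ℕ∞} (hφ : ContDiff ℝ n φ) (ε : ℝ) :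
    ContDiff ℝ n (boundaryCutoff φ ε) :=
  smoothTransition.contDiff.comp ((hφ.neg.div_const ε).sub contDiff_const)

lemma continuous_boundaryLayer (hφ : Continuous φ) (ε : ℝ) : Continuous (boundaryLayer φ ε) :=
  (((smoothTransition.contDiff (n := 1)).continuous_deriv le_rfl).comp
    ((hφ.neg.div_const ε).sub continuous_const)).div_const ε

lemma pd_boundaryCutoff (hφ : DifferentiableAt ℝ φ x) (ε : ℝ) (i : Fin 2) :
    pd i (boundaryCutoff φ ε) x = -(boundaryLayer φ ε x * pd i φ x) := by
  have harg : HasFDerivAt (fun y => -φ y / ε - 1) (ε⁻¹ • -fderiv ℝ φ x) x := by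
    simpa only [div_eq_inv_mul] using (hφ.hasFDerivAt.fun_neg.const_mul ε⁻¹).sub_const 1
  have htransition : HasDerivAt smoothTransition (deriv smoothTransition (-φ x / ε - 1))
      (-φ x / ε - 1) :=
    ((smoothTransition.contDiff (n := 1)).differentiable one_ne_zero _).hasDerivAt
  have hcutoff := (htransition.comp_hasFDerivAt x harg).fderiv
  rw [pd, show boundaryCutoff φ ε = smoothTransition ∘ fun y => -φ y / ε - 1 from rfl, hcutoff]
  simp only [pd, boundaryLayer, smul_apply, neg_apply, smul_eq_mul]
  ring

lemma boundaryCutoff_nonneg (φ : V2 → ℝ) (ε : ℝ) (x : V2) : 0 ≤ boundaryCutoff φ ε x :=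
  smoothTransition.nonneg _

lemma boundaryCutoff_le_one (φ : V2 → ℝ) (ε : ℝ) (x : V2) : boundaryCutoff φ ε x ≤ 1 :=
  smoothTransition.le_one _

lemma boundaryCutoff_eq_zero (hε : 0 < ε) (hx : -ε ≤ φ x) : boundaryCutoff φ ε x = 0 := by
  refine smoothTransition.zero_of_nonpos (sub_nonpos.2 ?_)
  rw [div_le_one hε]
  linarith

lemma boundaryCutoff_eq_one (hε : 0 < ε) (hx : φ x ≤ -(2 * ε)) : boundaryCutoff φ ε x = 1 := by
  refine smoothTransition.one_of_one_le (le_sub_iff_add_le.2 ?_)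
  rw [le_div_iff₀ hε]
  linarith

lemma boundaryLayer_nonneg (φ : V2 → ℝ) (hε : 0 < ε) (x : V2) : 0 ≤ boundaryLayer φ ε x :=
  div_nonneg smoothTransition.monotone.deriv_nonneg hε.le

lemma deriv_smoothTransition_eq_zero {s : ℝ} (hs : s < 0 ∨ 1 < s) :
    deriv smoothTransition s = 0 := by
  rcases hs with hs | hs
  · have h : smoothTransition =ᶠ[𝓝 s] fun _ => 0 := by
      filter_upwards [Iio_mem_nhds hs] with y hy using smoothTransition.zero_of_nonpos hy.le
    simp [h.deriv_eq]
  · have h : smoothTransition =ᶠ[𝓝 s] fun _ => 1 := by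
      filter_upwards [Ioi_mem_nhds hs] with y hy using smoothTransition.one_of_one_le hy.le
    simp [h.deriv_eq]

lemma boundaryLayer_eq_zero (hε : 0 < ε) (hx : φ x < -(2 * ε) ∨ 0 ≤ φ x) :
    boundaryLayer φ ε x = 0 := by
  rw [boundaryLayer, deriv_smoothTransition_eq_zero, zero_div]
  rcases hx with hx | hx
  · right
    rw [lt_sub_iff_add_lt, lt_div_iff₀ hε]
    linarith
  · left
    have : -φ x / ε ≤ 0 := div_nonpos_of_nonpos_of_nonneg (by linarith) hε.le
    linarith

end Cutoff

namespace IsDefiningFunction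

variable {Ω : Set V2} {φ : V2 → ℝ} {x : V2} (hφ : IsDefiningFunction φ Ω)
include hφ

lemma mem_iff : x ∈ Ω ↔ φ x < 0 := by
  conv_lhs => rw [hφ.eq_setOf_neg]
  rfl

lemma mem_frontier_iff : x ∈ frontier Ω ↔ φ x = 0 := by
  rw [hφ.frontier_eq]
  rfl

lemma isOpen : IsOpen Ω := by
  rw [hφ.eq_setOf_neg]
  exact isOpen_lt hφ.contDiff.continuous continuous_const

lemma mem_closure_iff : x ∈ closure Ω ↔ φ x ≤ 0 := by
  rw [closure_eq_self_union_frontier, mem_union, hφ.mem_iff, hφ.mem_frontier_iff, le_iff_lt_or_eq]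

lemma contDiff_of_le {n : WithTop ℕ∞} [ENat.LEInfty n] : ContDiff ℝ n φ :=
  hφ.contDiff.of_le ENat.LEInfty.out

lemma continuous_grad : Continuous (grad φ) := MHD.continuous_grad hφ.contDiff_of_le

lemma contDiff_grad : ContDiff ℝ ∞ (grad φ) := MHD.contDiff_grad hφ.contDiff (by simp)

lemma hasCompactSupport {f : V2 → ℝ} (hf : ∀ x, 0 ≤ φ x → f x = 0) : HasCompactSupport f :=
  HasCompactSupport.intro hφ.isBounded.isCompact_closure fun x hx =>
    hf x (not_lt.1 fun h => hx (hφ.mem_closure_iff.2 h.le))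

lemma exists_pos_near_frontier {g : V2 → ℝ} (hg : Continuous g)
    (hpos : ∀ x ∈ frontier Ω, 0 < g x) : ∃ ε > 0, ∀ x, -ε ≤ φ x → φ x ≤ 0 → 0 < g x := by
  have hK : IsCompact (closure Ω ∩ {x | g x ≤ 0}) :=
    hφ.isBounded.isCompact_closure.inter_right (isClosed_le hg continuous_const)
  obtain ⟨ε, hε, hle⟩ := hK.exists_forall_le' hφ.contDiff.continuous.neg.continuousOn (a := 0)
    fun x hx => neg_pos.2 <| (hφ.mem_closure_iff.1 hx.1).lt_of_ne fun h =>
      (hpos x (hφ.mem_frontier_iff.2 h)).not_ge hx.2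
  refine ⟨ε / 2, half_pos hε, fun x hx hx0 => ?_⟩
  by_contra hgx
  have hφx : ε ≤ -φ x := hle x ⟨hφ.mem_closure_iff.2 hx0, not_lt.1 hgx⟩
  linarith

lemma exists_lt_nsq_grad_near_frontier :
    ∃ c > 0, ∃ ε > 0, ∀ x, -ε ≤ φ x → φ x ≤ 0 → c < nsq (grad φ x) := by
  have hcont : Continuous fun x => nsq (grad φ x) := continuous_nsq hφ.continuous_grad
  have hcompact : IsCompact (frontier Ω) :=
    hφ.isBounded.isCompact_closure.of_isClosed_subset isClosed_frontier frontier_subset_closure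
  obtain ⟨c, hc, hle⟩ := hcompact.exists_forall_le' hcont.continuousOn (a := 0)
    fun x hx => nsq_pos (hφ.grad_ne_zero x hx)
  obtain ⟨ε, hε, hnear⟩ := hφ.exists_pos_near_frontier (g := fun x => nsq (grad φ x) - c / 2)
    (hcont.sub continuous_const) fun x hx => by linarith [hle x hx]
  exact ⟨c / 2, half_pos hc, ε, hε, fun x h₁ h₂ => sub_pos.1 (hnear x h₁ h₂)⟩

lemma integrable_boundaryLayer_mul {ε : ℝ} (hε : 0 < ε) {g : V2 → ℝ} (hg : Continuous g) :
    Integrable fun x => boundaryLayer φ ε x * g x :=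
  ((continuous_boundaryLayer hφ.contDiff.continuous ε).mul hg).integrable_of_hasCompactSupport <|
    hφ.hasCompactSupport fun x hx =>
      mul_eq_zero_of_left (boundaryLayer_eq_zero hε (.inr hx)) (g x)

lemma integral_boundaryLayer_mul_le {ε : ℝ} (hε : 0 < ε) {g h : V2 → ℝ} (hg : Continuous g)
    (hh : Continuous h) (hgh : ∀ x, -(2 * ε) ≤ φ x → φ x ≤ 0 → g x ≤ h x) :
    ∫ x, boundaryLayer φ ε x * g x ≤ ∫ x, boundaryLayer φ ε x * h x := by
  refine integral_mono (hφ.integrable_boundaryLayer_mul hε hg)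
    (hφ.integrable_boundaryLayer_mul hε hh) fun x => ?_
  by_cases hx : φ x < -(2 * ε) ∨ 0 ≤ φ x
  · simp [boundaryLayer_eq_zero hε hx]
  · push Not at hx
    exact mul_le_mul_of_nonneg_left (hgh x hx.1 hx.2.le) (boundaryLayer_nonneg φ hε x)

lemma integral_boundaryCutoff_mul_div2 {ε : ℝ} (hε : 0 < ε) {X : V2 → V2}
    (hX : ContDiff ℝ 1 X) :
    ∫ x in Ω, boundaryCutoff φ ε x * div2 X x
      = ∫ x, boundaryLayer φ ε x * dot (X x) (grad φ x) := by
  have hcut : ContDiff ℝ 1 (boundaryCutoff φ ε) := contDiff_boundaryCutoff hφ.contDiff_of_le ε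
  have hXi (i : Fin 2) : ContDiff ℝ 1 fun x => X x i := contDiff_pi.1 hX i
  have hsupp (f : V2 → ℝ) : HasCompactSupport fun x => boundaryCutoff φ ε x * f x :=
    hφ.hasCompactSupport fun x hx => by rw [boundaryCutoff_eq_zero hε (by linarith), zero_mul]
  have hzero : ∫ x, ∑ i, pd i (fun x => boundaryCutoff φ ε x * X x i) x = 0 := by
    rw [integral_finsetSum]
    · simp [integral_pd_eq_zero (hcut.mul (hXi _)) (hsupp _)]
    · exact fun i _ => (continuous_pd (hcut.mul (hXi i)) i).integrable_of_hasCompactSupport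
        ((hsupp _).fderiv_apply ℝ _)
  have hpointwise (x : V2) : ∑ i, pd i (fun x => boundaryCutoff φ ε x * X x i) x
      = boundaryCutoff φ ε x * div2 X x - boundaryLayer φ ε x * dot (X x) (grad φ x) := by
    simp only [pd_mul _ (hcut.differentiable one_ne_zero x)
        ((hXi _).differentiable one_ne_zero x),
      pd_boundaryCutoff (hφ.contDiff_of_le.differentiable one_ne_zero x), div2, dot, grad,
      Fin.sum_univ_two]
    ring
  have hcutdiv : Integrable fun x => boundaryCutoff φ ε x * div2 X x :=
    (hcut.continuous.mul (continuous_div2 hX)).integrable_of_hasCompactSupport (hsupp _)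
  have hlayer := hφ.integrable_boundaryLayer_mul hε
    (continuous_dot hX.continuous hφ.continuous_grad)
  simp only [hpointwise] at hzero
  rw [integral_sub hcutdiv hlayer, sub_eq_zero] at hzero
  rw [← hzero]
  refine setIntegral_eq_integral_of_forall_compl_eq_zero fun x hx => ?_
  rw [boundaryCutoff_eq_zero hε (by linarith [not_lt.1 (mt hφ.mem_iff.2 hx)]), zero_mul]

lemma tendsto_integral_boundaryCutoff_mul {f : V2 → ℝ} (hf : Continuous f) :
    Tendsto (fun ε => ∫ x in Ω, boundaryCutoff φ ε x * f x) (𝓝[>] 0) (𝓝 (∫ x in Ω, f x)) := by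
  refine tendsto_integral_filter_of_dominated_convergence (fun x => |f x|) ?_ ?_
    (integrableOn_of_isBounded hφ.isBounded hf).abs ?_
  · exact .of_forall fun ε => ((contDiff_boundaryCutoff (n := 0) hφ.contDiff_of_le
      ε).continuous.mul hf).aestronglyMeasurable
  · refine .of_forall fun ε => .of_forall fun x => ?_
    rw [norm_eq_abs, abs_mul, abs_of_nonneg (boundaryCutoff_nonneg φ ε x)]
    exact mul_le_of_le_one_left (abs_nonneg _) (boundaryCutoff_le_one φ ε x)
  · filter_upwards [ae_restrict_mem hφ.isOpen.measurableSet] with x hx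
    refine tendsto_const_nhds.congr' ?_
    have hpos : 0 < -φ x / 2 := by linarith [hφ.mem_iff.1 hx]
    filter_upwards [self_mem_nhdsWithin, nhdsWithin_le_nhds (gt_mem_nhds hpos)] with ε hε hεx
    rw [boundaryCutoff_eq_one hε (by linarith), one_mul]

-- Testing the cutoff identity with `∇φ` bounds the mass of the boundary layer, since
-- `|∇φ|²` is bounded below there.
lemma exists_integral_boundaryLayer_le :
    ∃ M ≥ 0, ∃ ε₀ > 0, ∀ ε, 0 < ε → 2 * ε ≤ ε₀ → ∫ x, boundaryLayer φ ε x ≤ M := by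
  obtain ⟨c, hc, ε₀, hε₀, hlow⟩ := hφ.exists_lt_nsq_grad_near_frontier
  have hgrad : ContDiff ℝ 1 (grad φ) := hφ.contDiff_grad.of_le ENat.LEInfty.out
  have hdiv := continuous_div2 hgrad
  refine ⟨(∫ x in Ω, |div2 (grad φ) x|) / c,
    div_nonneg (integral_nonneg fun x => abs_nonneg _) hc.le, ε₀, hε₀, fun ε hε hεε₀ => ?_⟩
  rw [le_div_iff₀ hc]
  calc (∫ x, boundaryLayer φ ε x) * c = ∫ x, boundaryLayer φ ε x * c := by rw [integral_mul_const]
    _ ≤ ∫ x, boundaryLayer φ ε x * dot (grad φ x) (grad φ x) :=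
        hφ.integral_boundaryLayer_mul_le hε continuous_const
          (continuous_dot hφ.continuous_grad hφ.continuous_grad) fun x h₁ h₂ => by
            rw [dot_self]
            exact (hlow x (by linarith) h₂).le
    _ = ∫ x in Ω, boundaryCutoff φ ε x * div2 (grad φ) x :=
        (hφ.integral_boundaryCutoff_mul_div2 hε hgrad).symm
    _ ≤ ∫ x in Ω, |div2 (grad φ) x| := by
        refine integral_mono (integrableOn_of_isBounded hφ.isBounded
          ((contDiff_boundaryCutoff (n := 0) hφ.contDiff_of_le ε).continuous.mul hdiv))
          (integrableOn_of_isBounded hφ.isBounded hdiv.abs) fun x => ?_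
        exact (mul_le_mul_of_nonneg_left (le_abs_self _) (boundaryCutoff_nonneg φ ε x)).trans
          (mul_le_of_le_one_left (abs_nonneg _) (boundaryCutoff_le_one φ ε x))

theorem integral_div2_nonpos {X : V2 → V2} (hX : ContDiff ℝ 1 X)
    (hbd : ∀ x ∈ frontier Ω, dot (X x) (grad φ x) ≤ 0) : ∫ x in Ω, div2 X x ≤ 0 := by
  obtain ⟨M, hM, ε₀, hε₀, hmass⟩ := hφ.exists_integral_boundaryLayer_le
  have hflux : Continuous fun x => dot (X x) (grad φ x) :=
    continuous_dot hX.continuous hφ.continuous_grad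
  refine le_of_forall_pos_le_add fun δ hδ => ?_
  obtain ⟨ε₁, hε₁, hnear⟩ := hφ.exists_pos_near_frontier
    (g := fun x => δ / (M + 1) - dot (X x) (grad φ x)) (continuous_const.sub hflux)
    fun x hx => by linarith [hbd x hx, show 0 < δ / (M + 1) by positivity]
  refine le_of_tendsto (hφ.tendsto_integral_boundaryCutoff_mul (continuous_div2 hX)) ?_
  filter_upwards [self_mem_nhdsWithin, nhdsWithin_le_nhds (gt_mem_nhds (half_pos hε₀)),
    nhdsWithin_le_nhds (gt_mem_nhds (half_pos hε₁))] with ε (hε : 0 < ε) hε0 hε1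
  rw [hφ.integral_boundaryCutoff_mul_div2 hε hX]
  calc ∫ x, boundaryLayer φ ε x * dot (X x) (grad φ x)
      ≤ ∫ x, boundaryLayer φ ε x * (δ / (M + 1)) :=
        hφ.integral_boundaryLayer_mul_le hε hflux continuous_const fun x h₁ h₂ =>
          (sub_pos.1 (hnear x (by linarith) h₂)).le
    _ = (∫ x, boundaryLayer φ ε x) * (δ / (M + 1)) := integral_mul_const _ _
    _ ≤ M * (δ / (M + 1)) := by
        gcongr
        exact hmass ε hε (by linarith)
    _ ≤ 0 + δ := by
        rw [zero_add, mul_div_assoc', div_le_iff₀ (by linarith)]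
        nlinarith

theorem integral_div2_eq_zero {X : V2 → V2} (hX : ContDiff ℝ 1 X)
    (hbd : ∀ x ∈ frontier Ω, dot (X x) (grad φ x) = 0) : ∫ x in Ω, div2 X x = 0 := by
  refine le_antisymm (hφ.integral_div2_nonpos hX fun x hx => (hbd x hx).le) ?_
  have hneg := hφ.integral_div2_nonpos (X := fun y i => -X y i) hX.neg fun x hx => by
    have := hbd x hx
    simp only [dot, Fin.sum_univ_two] at this ⊢
    linarith
  simp only [div2, pd_neg, Finset.sum_neg_distrib, integral_neg] at hneg
  exact neg_nonpos.1 hneg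

end IsDefiningFunction

/-! ### Tangential solenoidal fields on convex domains -/

/-- The derivative `(w · ∇) v` of the vector field `v` along the vector field `w`. -/
def convect (w v : V2 → V2) (x : V2) : V2 := fun k => dot (w x) (grad (fun y => v y k) x)

lemma contDiff_dot {v w : V2 → V2} {n : WithTop ℕ∞} (hv : ContDiff ℝ n v)
    (hw : ContDiff ℝ n w) : ContDiff ℝ n fun x => dot (v x) (w x) :=
  ContDiff.sum fun i _ => (contDiff_pi.1 hv i).mul (contDiff_pi.1 hw i)

lemma contDiff_convect {w v : V2 → V2} {m n : WithTop ℕ∞} (hw : ContDiff ℝ m w)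
    (hv : ContDiff ℝ n v) (hmn : m + 1 ≤ n) : ContDiff ℝ m (convect w v) :=
  contDiff_pi.2 fun k => contDiff_dot hw (contDiff_grad (contDiff_pi.1 hv k) hmn)

section Product

variable {v w : V2 → V2} {x : V2}

lemma pd_dot (hv : Differentiable ℝ v) (hw : Differentiable ℝ w) (i : Fin 2) :
    pd i (fun y => dot (v y) (w y)) x =
      ∑ k, (pd i (fun y => v y k) x * w x k + v x k * pd i (fun y => w y k) x) := by
  have hvk (k : Fin 2) := (differentiable_pi.1 hv k) x
  have hwk (k : Fin 2) := (differentiable_pi.1 hw k) x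
  simp only [dot, Fin.sum_univ_two]
  rw [pd_add i ((hvk 0).fun_mul (hwk 0)) ((hvk 1).fun_mul (hwk 1)),
    pd_mul i (hvk 0) (hwk 0), pd_mul i (hvk 1) (hwk 1)]

lemma pd_div2 (hw : ContDiff ℝ 2 w) (i : Fin 2) :
    pd i (div2 w) x = ∑ k, pd i (pd k fun y => w y k) x := by
  have hwk (k : Fin 2) := differentiable_pd (contDiff_pi.1 hw k) k x
  simp only [Fin.sum_univ_two]
  rw [← pd_add i (hwk 0) (hwk 1)]
  congr 1
  ext y
  simp only [div2, Fin.sum_univ_two]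

lemma div2_convect_self (hw : ContDiff ℝ 2 w) :
    div2 (convect w w) x =
      gnsq w x - curl2 w x ^ 2 + dot (w x) (grad (div2 w) x) := by
  have hgrad (k : Fin 2) : Differentiable ℝ (grad fun y => w y k) :=
    (contDiff_grad (m := 1) (contDiff_pi.1 hw k) (by norm_num)).differentiable one_ne_zero
  have hpd (k : Fin 2) : pd k (fun y => convect w w y k) x = _ :=
    pd_dot (hw.differentiable two_ne_zero) (hgrad k) k
  simp only [div2, hpd, gnsq, curl2, dot, grad, Fin.sum_univ_two]
  have h₀ := pd_div2 (x := x) hw 0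
  have h₁ := pd_div2 (x := x) hw 1
  simp only [Fin.sum_univ_two] at h₀ h₁
  have hcomm₀ := pd_comm (contDiff_pi.1 hw 0) 0 1 x
  have hcomm₁ := pd_comm (contDiff_pi.1 hw 1) 0 1 x
  rw [h₀, h₁, hcomm₁, ← hcomm₀]
  ring

end Product

namespace IsDefiningFunction

variable {Ω : Set V2} {φ : V2 → ℝ} {x y w : V2} (hφ : IsDefiningFunction φ Ω)
include hφ

lemma dot_grad_eq_zero_of_tangent {g : V2 → ℝ} (hg : ContDiff ℝ 1 g)
    (hg0 : ∀ x ∈ frontier Ω, g x = 0) (hx : x ∈ frontier Ω) (hw : dot w (grad φ x) = 0) :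
    dot w (grad g x) = 0 := by
  have hextr : IsLocalExtrOn g {y | φ y = φ x} x := by
    left
    filter_upwards [self_mem_nhdsWithin] with y hy
    rw [hg0 x hx, hg0 y (hφ.mem_frontier_iff.2 (hy.trans (hφ.mem_frontier_iff.1 hx)))]
  obtain ⟨a, b, hab, hmul⟩ := hextr.exists_multipliers_of_hasStrictFDerivAt_1d
    ((hφ.contDiff_of_le (n := 1)).contDiffAt.hasStrictFDerivAt one_ne_zero)
    (hg.contDiffAt.hasStrictFDerivAt one_ne_zero)
  have hmul (z : V2) : a * dot z (grad φ x) + b * dot z (grad g x) = 0 := by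
    simpa only [add_apply, smul_apply, smul_eq_mul, fderiv_apply_eq_dot, zero_apply]
      using congrArg (fun L => L z) hmul
  have hb : b ≠ 0 := by
    rintro rfl
    have ha : a ≠ 0 := fun ha => hab (by rw [ha]; rfl)
    have h := hmul (grad φ x)
    rw [zero_mul, add_zero, dot_self] at h
    exact (nsq_pos (hφ.grad_ne_zero x hx)).ne' ((mul_eq_zero.1 h).resolve_left ha)
  have h := hmul w
  rw [hw, mul_zero, zero_add] at h
  exact (mul_eq_zero.1 h).resolve_left hb

lemma dot_perp_grad_eq_zero {g : V2 → ℝ} (hg : ContDiff ℝ 1 g)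
    (hg0 : ∀ x ∈ frontier Ω, g x = 0) (hx : x ∈ frontier Ω) :
    dot (perp (grad g x)) (grad φ x) = 0 := by
  have htangent := hφ.dot_grad_eq_zero_of_tangent hg hg0 hx (dot_perp_self (grad φ x))
  simp only [dot, perp, Fin.sum_univ_two, Matrix.cons_val_zero, Matrix.cons_val_one,
    Matrix.cons_val_fin_one] at htangent ⊢
  linarith

lemma dot_sub_grad_nonpos (hconv : Convex ℝ Ω) (hx : x ∈ frontier Ω) (hy : y ∈ Ω) :
    dot (y - x) (grad φ x) ≤ 0 := by
  have hmax : IsLocalMaxOn φ (closure Ω) x := by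
    filter_upwards [self_mem_nhdsWithin] with z hz
    rw [hφ.mem_frontier_iff.1 hx]
    exact hφ.mem_closure_iff.1 hz
  rw [← fderiv_apply_eq_dot]
  exact hmax.hasFDerivWithinAt_nonpos
    ((hφ.contDiff_of_le (n := 1)).differentiable one_ne_zero x).hasFDerivAt.hasFDerivWithinAt
    (sub_mem_posTangentConeAt_of_segment_subset
      (hconv.closure.segment_subset (frontier_subset_closure hx) (subset_closure hy)))

lemma nonneg_add_of_tangent (hconv : Convex ℝ Ω) (hx : x ∈ frontier Ω)
    (hw : dot w (grad φ x) = 0) : 0 ≤ φ (x + w) := by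
  by_contra! hneg
  have hline : Tendsto (fun s : ℝ => x + w + s • grad φ x) (𝓝[>] 0) (𝓝 (x + w)) := by
    have : Continuous fun s : ℝ => x + w + s • grad φ x := by fun_prop
    simpa using (this.tendsto 0).mono_left nhdsWithin_le_nhds
  obtain ⟨s, hs, hs0 : 0 < s⟩ := ((hline.eventually
    (hφ.isOpen.mem_nhds (hφ.mem_iff.2 hneg))).and self_mem_nhdsWithin).exists
  have h := hφ.dot_sub_grad_nonpos hconv hx hs
  have heq : dot (x + w + s • grad φ x - x) (grad φ x) = s * nsq (grad φ x) := by
    simp only [dot, nsq, Fin.sum_univ_two, Pi.add_apply, Pi.sub_apply, Pi.smul_apply,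
      smul_eq_mul] at hw ⊢
    linear_combination hw
  rw [heq] at h
  exact h.not_gt (mul_pos hs0 (nsq_pos (hφ.grad_ne_zero x hx)))

lemma hessian_tangent_nonneg (hconv : Convex ℝ Ω) (hx : x ∈ frontier Ω)
    (hw : dot w (grad φ x) = 0) :
    0 ≤ dot w (grad (fun y => dot w (grad φ y)) x) := by
  set f : ℝ → ℝ := fun s => φ (x + s • w) with hf
  have hf0 : f 0 = 0 := by simp [hf, hφ.mem_frontier_iff.1 hx]
  have hmin (s : ℝ) : 0 ≤ f s := hφ.nonneg_add_of_tangent hconv hx <| by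
    simp only [dot, Fin.sum_univ_two, Pi.smul_apply, smul_eq_mul] at hw ⊢
    linear_combination s * hw
  have hslope : ContDiff ℝ 1 fun y => dot w (grad φ y) :=
    contDiff_dot contDiff_const (hφ.contDiff_grad.of_le ENat.LEInfty.out)
  have hφd : Differentiable ℝ φ := (hφ.contDiff_of_le (n := 1)).differentiable one_ne_zero
  have hderiv : deriv f = fun s => dot w (grad φ (x + s • w)) :=
    funext fun s => (hasDerivAt_along_line hφd x w s).deriv
  have hderiv2 : deriv (deriv f) 0 = dot w (grad (fun y => dot w (grad φ y)) x) := by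
    rw [hderiv]
    simpa using
      (hasDerivAt_along_line (hslope.differentiable one_ne_zero) x w 0).deriv
  rw [← hderiv2]
  by_contra! hneg
  have hmax : IsLocalMax f 0 := isLocalMax_of_deriv_deriv_neg hneg (by simpa [hderiv] using hw)
    (hasDerivAt_along_line hφd x w 0).continuousAt
  have hzero : f =ᶠ[𝓝 0] fun _ => 0 := by
    filter_upwards [hmax] with s hs using le_antisymm (hs.trans hf0.le) (hmin s)
  simp [hzero.deriv.deriv_eq] at hneg

lemma dot_convect_grad_nonpos (hconv : Convex ℝ Ω) {w : V2 → V2} (hw : ContDiff ℝ 1 w)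
    (ht : ∀ x ∈ frontier Ω, dot (w x) (grad φ x) = 0) (hx : x ∈ frontier Ω) :
    dot (convect w w x) (grad φ x) ≤ 0 := by
  have hgrad : ContDiff ℝ 1 (grad φ) := hφ.contDiff_grad.of_le ENat.LEInfty.out
  have hdot : ContDiff ℝ 1 fun y => dot (w y) (grad φ y) :=
    contDiff_dot hw hgrad
  have htangent := hφ.dot_grad_eq_zero_of_tangent hdot ht hx (ht x hx)
  have hhess := hφ.hessian_tangent_nonneg hconv hx (ht x hx)
  have hwd := hw.differentiable one_ne_zero
  have hgradd := hgrad.differentiable one_ne_zero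
  have hpd (i : Fin 2) := pd_dot (x := x) hwd hgradd i
  have hpd_const (i : Fin 2) := pd_dot (x := x) (differentiable_const (w x)) hgradd i
  simp only [pd_const, zero_mul, zero_add] at hpd_const
  simp only [convect, dot, Fin.sum_univ_two] at htangent hhess hpd hpd_const ⊢
  simp only [grad] at htangent hhess hpd hpd_const ⊢
  rw [hpd_const, hpd_const] at hhess
  rw [hpd, hpd] at htangent
  linarith

theorem integral_gnsq_le_integral_curl2_sq (hconv : Convex ℝ Ω) {w : V2 → V2}
    (hw : ContDiff ℝ 2 w) (hdiv : ∀ x ∈ Ω, div2 w x = 0)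
    (ht : ∀ x ∈ frontier Ω, dot (w x) (grad φ x) = 0) :
    ∫ x in Ω, gnsq w x ≤ ∫ x in Ω, curl2 w x ^ 2 := by
  have hw1 : ContDiff ℝ 1 w := hw.of_le one_le_two
  have hX : ContDiff ℝ 1 (convect w w) := contDiff_convect hw1 hw (by norm_num)
  have hgraddiv (x : V2) (hx : x ∈ Ω) : dot (w x) (grad (div2 w) x) = 0 := by
    simp [dot, grad, pd_congr hφ.isOpen hdiv _ hx, pd_const]
  have hle := hφ.integral_div2_nonpos hX fun x hx =>
    hφ.dot_convect_grad_nonpos hconv hw1 ht hx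
  have hcurl : Continuous fun x => curl2 w x ^ 2 := (continuous_curl2 hw1).pow 2
  rw [setIntegral_congr_fun hφ.isOpen.measurableSet fun x hx => by
      rw [div2_convect_self hw, hgraddiv x hx, add_zero],
    integral_sub (integrableOn_of_isBounded hφ.isBounded (continuous_gnsq hw1))
      (integrableOn_of_isBounded hφ.isBounded hcurl)] at hle
  exact sub_nonpos.1 hle

theorem integral_gnsq_grad_le_integral_lap_sq (hconv : Convex ℝ Ω) {k : V2 → ℝ}
    (hk : ContDiff ℝ 3 k) (hk0 : ∀ x ∈ frontier Ω, k x = 0) :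
    ∫ x in Ω, gnsq (grad k) x ≤ ∫ x in Ω, lap k x ^ 2 := by
  have hk2 : ContDiff ℝ 2 k := hk.of_le (by norm_num)
  set w : V2 → V2 := fun y => perp (grad k y)
  have hw0 : (fun y => w y 0) = pd 1 k := rfl
  have hw1 : (fun y => w y 1) = fun y => -pd 0 k y := rfl
  have hw : ContDiff ℝ 2 w := contDiff_pi.2 <| Fin.forall_fin_two.2
    ⟨contDiff_pd hk (by norm_num) 1, (contDiff_pd hk (by norm_num) 0).neg⟩
  have hdiv (x : V2) : div2 w x = 0 := by
    simp only [div2, Fin.sum_univ_two, hw0, hw1, pd_neg, pd_comm hk2 0 1, add_neg_cancel]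
  convert hφ.integral_gnsq_le_integral_curl2_sq hconv hw (fun x _ => hdiv x)
    (fun x hx => hφ.dot_perp_grad_eq_zero (hk.of_le (by norm_num)) hk0 hx) using 3 with x x
  · have hgrad (i : Fin 2) : (fun y => grad k y i) = pd i k := rfl
    simp only [gnsq, hgrad, Fin.sum_univ_two, hw0, hw1, pd_neg]
    ring
  · simp only [curl2, lap, Fin.sum_univ_two, hw0, hw1, pd_neg]
    ring

end IsDefiningFunction

/-! ### The Sobolev inequality on bounded convex sets -/

/-- The determinant `v ∧ w` of two vectors of the plane. -/
def wedge (v w : V2) : ℝ := v 0 * w 1 - v 1 * w 0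

/-- The integral of `g` along the line through `x` with velocity `v` (its X-ray transform). -/
def lineLIntegral (g : V2 → ENNReal) (v x : V2) : ENNReal := ∫⁻ s : ℝ, g (x + s • v)

/-- The density `|f|² + |∇f|²` of the squared `H¹` norm of a scalar field. -/
def h1Density (f : V2 → ℝ) (x : V2) : ℝ := f x ^ 2 + nsq (grad f x)

section Lines

variable {v w : V2} {g : V2 → ENNReal}

lemma wedge_swap (v w : V2) : wedge w v = -wedge v w := by
  unfold wedge
  ring

lemma wedge_add_smul_perp (v : V2) (δ : ℝ) : wedge v (v + δ • perp v) = -(δ * nsq v) := by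
  simp [wedge, perp, nsq]
  ring

lemma exists_mem_wedge_ne_zero {U : Set V2} (hU : IsOpen U) (hne : U.Nonempty) :
    ∃ v ∈ U, ∃ w ∈ U, wedge v w ≠ 0 := by
  obtain ⟨v, hv, hv0⟩ := (dense_compl_singleton (0 : V2)).inter_open_nonempty U hU hne
  have hpath : Tendsto (fun δ : ℝ => v + δ • perp v) (𝓝[≠] 0) (𝓝 v) := by
    have : Continuous fun δ : ℝ => v + δ • perp v := by fun_prop
    simpa using (this.tendsto 0).mono_left nhdsWithin_le_nhds
  obtain ⟨δ, hδ, hδ0⟩ :=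
    ((hpath.eventually (hU.mem_nhds hv)).and self_mem_nhdsWithin).exists
  exact ⟨v, hv, _, hδ, by
    rw [wedge_add_smul_perp]
    exact neg_ne_zero.2 (mul_ne_zero hδ0 (nsq_pos hv0).ne')⟩

lemma lintegral_comp_linearCombination (hvw : wedge v w ≠ 0) {f : V2 → ENNReal}
    (hf : Measurable f) :
    ∫⁻ y : V2, f (y 0 • v + y 1 • w) = ENNReal.ofReal |(wedge v w)⁻¹| * ∫⁻ y, f y := by
  set T : V2 →ₗ[ℝ] V2 := Matrix.toLin' !![v 0, w 0; v 1, w 1] with hT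
  have hdet : LinearMap.det T = wedge v w := by
    rw [hT, LinearMap.det_toLin', Matrix.det_fin_two_of, wedge]
    ring
  have hTy (y : V2) : T y = y 0 • v + y 1 • w := by
    ext i
    fin_cases i <;> simp [hT, Matrix.mulVec, dotProduct, Fin.sum_univ_two] <;> ring
  simp only [← hTy]
  rw [← lintegral_map hf (LinearMap.continuous_of_finiteDimensional T).measurable,
    Measure.map_linearMap_addHaar_eq_smul_addHaar _ (hdet ▸ hvw), lintegral_smul_measure, hdet]
  rfl

lemma lintegral_lintegral_linearCombination (hvw : wedge v w ≠ 0) {f : V2 → ENNReal}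
    (hf : Measurable f) :
    ∫⁻ a : ℝ, ∫⁻ b : ℝ, f (a • v + b • w) = ENNReal.ofReal |(wedge v w)⁻¹| * ∫⁻ y, f y := by
  have hcoord : Measurable fun y : V2 => f (y 0 • v + y 1 • w) := hf.comp (by fun_prop)
  have hpair : Measurable fun z : ℝ × ℝ => f (z.1 • v + z.2 • w) := hf.comp (by fun_prop)
  rw [← lintegral_comp_linearCombination hvw hf,
    ← (volume_preserving_finTwoArrow ℝ).symm.lintegral_comp hcoord, Measure.volume_eq_prod]
  exact (lintegral_prod _ hpair.aemeasurable).symm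

lemma measurable_lineLIntegral (hg : Measurable g) (v : V2) : Measurable (lineLIntegral g v) := by
  have : Measurable fun z : V2 × ℝ => g (z.1 + z.2 • v) := hg.comp (by fun_prop)
  exact this.lintegral_prod_right'

lemma lineLIntegral_smul_add (g : V2 → ENNReal) (v x : V2) (a : ℝ) :
    lineLIntegral g v (a • v + x) = lineLIntegral g v x := by
  rw [lineLIntegral, lineLIntegral, ← lintegral_add_right_eq_self (fun s => g (x + s • v)) a]
  congr! 3
  rw [add_smul]
  abel

lemma lintegral_lineLIntegral_smul (hvw : wedge v w ≠ 0) (hg : Measurable g) :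
    ∫⁻ b : ℝ, lineLIntegral g v (b • w) = ENNReal.ofReal |(wedge v w)⁻¹| * ∫⁻ y, g y := by
  have hwv : wedge w v ≠ 0 := by rwa [wedge_swap, neg_ne_zero]
  unfold lineLIntegral
  rw [lintegral_lintegral_linearCombination hwv hg, wedge_swap, inv_neg, abs_neg]

-- A planar Loomis–Whitney identity: in the coordinates `x = a • v + b • w` the two factors
-- depend on `b` and on `a` only.
lemma lintegral_lineLIntegral_mul (hvw : wedge v w ≠ 0) (hg : Measurable g) :
    ∫⁻ x, lineLIntegral g v x * lineLIntegral g w x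
      = ENNReal.ofReal |(wedge v w)⁻¹| * (∫⁻ x, g x) ^ 2 := by
  set c := ENNReal.ofReal |(wedge v w)⁻¹| with hc
  have hc0 : c ≠ 0 := by simpa [hc] using hvw
  have hv := measurable_lineLIntegral hg v
  have hw := measurable_lineLIntegral hg w
  have hwv : wedge w v ≠ 0 := by rwa [wedge_swap, neg_ne_zero]
  have hsplit (a b : ℝ) : lineLIntegral g v (a • v + b • w) * lineLIntegral g w (a • v + b • w)
      = lineLIntegral g v (b • w) * lineLIntegral g w (a • v) := by
    rw [lineLIntegral_smul_add, add_comm (a • v), lineLIntegral_smul_add]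
  refine (ENNReal.mul_right_inj hc0 ENNReal.ofReal_ne_top).1 ?_
  calc c * ∫⁻ x, lineLIntegral g v x * lineLIntegral g w x
      = ∫⁻ a : ℝ, ∫⁻ b : ℝ, lineLIntegral g v (b • w) * lineLIntegral g w (a • v) := by
        simp only [← hsplit]
        exact (lintegral_lintegral_linearCombination hvw (hv.mul hw)).symm
    _ = (∫⁻ b : ℝ, lineLIntegral g v (b • w)) * ∫⁻ a : ℝ, lineLIntegral g w (a • v) := by
        have hbw : Measurable fun b : ℝ => lineLIntegral g v (b • w) := hv.comp (by fun_prop)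
        have hav : Measurable fun a : ℝ => lineLIntegral g w (a • v) := hw.comp (by fun_prop)
        simp only [lintegral_mul_const _ hbw, lintegral_const_mul _ hav]
    _ = c * (c * (∫⁻ x, g x) ^ 2) := by
        rw [lintegral_lineLIntegral_smul hvw hg, lintegral_lineLIntegral_smul hwv hg,
          wedge_swap v w, inv_neg, abs_neg, ← hc]
        ring

end Lines

lemma ofReal_intervalIntegral_segment {Ω : Set V2} (hconv : Convex ℝ Ω) {k : V2 → ℝ}
    (hk : Continuous k) (hk0 : ∀ x, 0 ≤ k x) {x w : V2} (hx : x ∈ Ω) (hxw : x + w ∈ Ω) :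
    ENNReal.ofReal (∫ s in (0 : ℝ)..1, k (x + s • w))
      = ∫⁻ s in Ioc (0 : ℝ) 1, Ω.indicator (fun y => ENNReal.ofReal (k y)) (x + s • w) := by
  have hkline : Continuous fun s : ℝ => k (x + s • w) := hk.comp (by fun_prop)
  have hint : IntegrableOn (fun s : ℝ => k (x + s • w)) (Ioc 0 1) :=
    hkline.integrableOn_Icc.mono_set Ioc_subset_Icc_self
  rw [intervalIntegral.integral_of_le zero_le_one,
    ofReal_integral_eq_lintegral_ofReal hint (.of_forall fun s => hk0 _)]
  refine setLIntegral_congr_fun measurableSet_Ioc fun s hs => ?_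
  simp only [indicator_of_mem (hconv.add_smul_mem hx hxw (Ioc_subset_Icc_self hs))]

lemma abs_le_intervalIntegral_abs_add_abs_deriv {f f' : ℝ → ℝ}
    (hf : ∀ s, HasDerivAt f (f' s) s) (hf' : Continuous f') :
    |f 0| ≤ ∫ s in (0 : ℝ)..1, (|f s| + |f' s|) := by
  have hfc : Continuous f := continuous_iff_continuousAt.2 fun s => (hf s).continuousAt
  have hf'i (a b : ℝ) : IntervalIntegrable (fun s => |f' s|) volume a b :=
    hf'.abs.intervalIntegrable a b
  have hpoint (s : ℝ) (hs : s ∈ Icc (0 : ℝ) 1) : |f 0| ≤ |f s| + ∫ r in (0 : ℝ)..1, |f' r| := by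
    have hincrement : |f s - f 0| ≤ ∫ r in (0 : ℝ)..1, |f' r| :=
      calc |f s - f 0| = |∫ r in (0 : ℝ)..s, f' r| := by
            rw [intervalIntegral.integral_eq_sub_of_hasDerivAt (fun r _ => hf r)
              (hf'.intervalIntegrable _ _)]
        _ ≤ ∫ r in (0 : ℝ)..s, |f' r| := intervalIntegral.abs_integral_le_integral_abs hs.1
        _ ≤ ∫ r in (0 : ℝ)..1, |f' r| := intervalIntegral.integral_mono_interval le_rfl hs.1 hs.2
            (.of_forall fun r => abs_nonneg _) (hf'i 0 1)
    have := abs_sub_abs_le_abs_sub (f 0) (f s)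
    rw [abs_sub_comm] at this
    linarith
  have hconst (c : ℝ) : IntervalIntegrable (fun _ : ℝ => c) volume 0 1 :=
    continuous_const.intervalIntegrable 0 1
  have hmono := intervalIntegral.integral_mono_on zero_le_one (hconst _)
    ((hfc.abs.intervalIntegrable 0 1).add (hconst _)) hpoint
  rw [intervalIntegral.integral_add (hfc.abs.intervalIntegrable _ _) (hconst _)] at hmono
  rw [intervalIntegral.integral_add (hfc.abs.intervalIntegrable _ _) (hf'i 0 1)]
  simpa using hmono

lemma abs_dot_le (a b : V2) : |dot a b| ≤ √(nsq a) * √(nsq b) := by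
  rw [← sqrt_mul (nsq_nonneg a)]
  refine abs_le_sqrt ?_
  simp only [dot, nsq, Fin.sum_univ_two]
  nlinarith [sq_nonneg (a 0 * b 1 - a 1 * b 0)]

section H1Density

variable {f : V2 → ℝ}

lemma h1Density_nonneg (f : V2 → ℝ) (x : V2) : 0 ≤ h1Density f x :=
  add_nonneg (sq_nonneg _) (nsq_nonneg _)

lemma continuous_h1Density (hf : ContDiff ℝ 1 f) : Continuous (h1Density f) :=
  (hf.continuous.pow 2).add (continuous_nsq (continuous_grad hf))

lemma abs_le_sqrt_h1Density (f : V2 → ℝ) (x : V2) : |f x| ≤ √(h1Density f x) :=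
  abs_le_sqrt (le_add_of_nonneg_right (nsq_nonneg _))

lemma sqrt_nsq_grad_le_sqrt_h1Density (f : V2 → ℝ) (x : V2) :
    √(nsq (grad f x)) ≤ √(h1Density f x) :=
  sqrt_le_sqrt (le_add_of_nonneg_left (sq_nonneg _))

lemma ofReal_abs_le_lineLIntegral {Ω : Set V2} (hconv : Convex ℝ Ω) (hf : ContDiff ℝ 1 f)
    {x v : V2} (hx : x ∈ Ω) (hxv : x + v ∈ Ω) :
    ENNReal.ofReal |f x| ≤ ENNReal.ofReal (1 + √(nsq v)) *
      lineLIntegral (Ω.indicator fun y => ENNReal.ofReal √(h1Density f y)) v x := by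
  have hline : Continuous fun s : ℝ => x + s • v := by fun_prop
  have hslope : Continuous fun s : ℝ => dot v (grad f (x + s • v)) :=
    continuous_dot continuous_const ((continuous_grad hf).comp hline)
  have hdensity : Continuous fun y => √(h1Density f y) := (continuous_h1Density hf).sqrt
  have hreal : |f x| ≤ (1 + √(nsq v)) * ∫ s in (0 : ℝ)..1, √(h1Density f (x + s • v)) := by
    have h := abs_le_intervalIntegral_abs_add_abs_deriv
      (hasDerivAt_along_line (hf.differentiable one_ne_zero) x v) hslope
    rw [zero_smul, add_zero] at h
    rw [← intervalIntegral.integral_const_mul]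
    refine h.trans (intervalIntegral.integral_mono_on zero_le_one ?_ ?_ fun s _ => ?_)
    · exact ((hf.continuous.comp hline).abs.add hslope.abs).intervalIntegrable _ _
    · exact (continuous_const.mul (hdensity.comp hline)).intervalIntegrable _ _
    · rw [add_mul, one_mul]
      exact add_le_add (abs_le_sqrt_h1Density f _) ((abs_dot_le _ _).trans
        (mul_le_mul_of_nonneg_left (sqrt_nsq_grad_le_sqrt_h1Density f _) (sqrt_nonneg _)))
  refine (ENNReal.ofReal_le_ofReal hreal).trans ?_
  rw [ENNReal.ofReal_mul (by positivity), ofReal_intervalIntegral_segment hconv hdensity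
    (fun _ => sqrt_nonneg _) hx hxv]
  gcongr
  exact setLIntegral_le_lintegral _ _

variable {Ω : Set V2}

lemma exists_nhds_lintegral_sq_le (hΩ : IsOpen Ω) (hconv : Convex ℝ Ω) (hne : Ω.Nonempty)
    (x₀ : V2) : ∃ U ∈ 𝓝 x₀, ∃ K : NNReal, ∀ f : V2 → ℝ, ContDiff ℝ 1 f →
      ∫⁻ x in U ∩ Ω, ENNReal.ofReal (f x ^ 2)
        ≤ K * (∫⁻ x in Ω, ENNReal.ofReal √(h1Density f x)) ^ 2 := by
  obtain ⟨v, hv, w, hw, hvw⟩ := exists_mem_wedge_ne_zero (U := (x₀ + ·) ⁻¹' Ω)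
    (hΩ.preimage (by fun_prop)) (hne.preimage (Homeomorph.addLeft x₀).surjective)
  have hU (e : V2) : IsOpen ((· + e) ⁻¹' Ω) := hΩ.preimage (by fun_prop)
  refine ⟨(· + v) ⁻¹' Ω ∩ (· + w) ⁻¹' Ω, ((hU v).inter (hU w)).mem_nhds ⟨hv, hw⟩,
    toNNReal (1 + √(nsq v)) * toNNReal (1 + √(nsq w)) * toNNReal |(wedge v w)⁻¹|, fun f hf => ?_⟩
  set g : V2 → ENNReal := Ω.indicator fun y => ENNReal.ofReal √(h1Density f y) with hg
  have hgm : Measurable g :=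
    (continuous_h1Density hf).sqrt.measurable.ennreal_ofReal.indicator hΩ.measurableSet
  calc ∫⁻ x in (· + v) ⁻¹' Ω ∩ (· + w) ⁻¹' Ω ∩ Ω, ENNReal.ofReal (f x ^ 2)
      ≤ ∫⁻ x in (· + v) ⁻¹' Ω ∩ (· + w) ⁻¹' Ω ∩ Ω,
          ENNReal.ofReal (1 + √(nsq v)) * lineLIntegral g v x *
            (ENNReal.ofReal (1 + √(nsq w)) * lineLIntegral g w x) := by
        refine setLIntegral_mono' (((hU v).inter (hU w)).inter hΩ).measurableSet fun x hx => ?_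
        rw [← sq_abs, sq, ENNReal.ofReal_mul (abs_nonneg _)]
        exact mul_le_mul' (ofReal_abs_le_lineLIntegral hconv hf hx.2 hx.1.1)
          (ofReal_abs_le_lineLIntegral hconv hf hx.2 hx.1.2)
    _ ≤ ∫⁻ x, ENNReal.ofReal (1 + √(nsq v)) * ENNReal.ofReal (1 + √(nsq w)) *
          (lineLIntegral g v x * lineLIntegral g w x) := by
        simp only [mul_mul_mul_comm]
        exact setLIntegral_le_lintegral _ _
    _ = ENNReal.ofReal (1 + √(nsq v)) * ENNReal.ofReal (1 + √(nsq w)) *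
          (ENNReal.ofReal |(wedge v w)⁻¹| * (∫⁻ x, g x) ^ 2) := by
        have hmeas : Measurable fun x => lineLIntegral g v x * lineLIntegral g w x :=
          (measurable_lineLIntegral hgm v).mul (measurable_lineLIntegral hgm w)
        rw [lintegral_const_mul _ hmeas, lintegral_lineLIntegral_mul hvw hgm]
    _ = _ := by
        rw [hg, lintegral_indicator hΩ.measurableSet]
        push_cast
        simp only [ENNReal.ofReal, mul_assoc]

lemma exists_lintegral_sq_le (hΩ : IsOpen Ω) (hbdd : IsBounded Ω) (hconv : Convex ℝ Ω) :
    ∃ K : NNReal, ∀ f : V2 → ℝ, ContDiff ℝ 1 f → ∫⁻ x in Ω, ENNReal.ofReal (f x ^ 2)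
      ≤ K * (∫⁻ x in Ω, ENNReal.ofReal √(h1Density f x)) ^ 2 := by
  obtain ⟨K, hK⟩ := hbdd.isCompact_closure.induction_on
    (p := fun S => ∃ K : NNReal, ∀ f : V2 → ℝ, ContDiff ℝ 1 f →
      ∫⁻ x in S ∩ Ω, ENNReal.ofReal (f x ^ 2)
        ≤ K * (∫⁻ x in Ω, ENNReal.ofReal √(h1Density f x)) ^ 2)
    ⟨0, by simp⟩
    (fun S T hST ⟨K, hK⟩ => ⟨K, fun f hf =>
      (lintegral_mono_set (inter_subset_inter_left _ hST)).trans (hK f hf)⟩)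
    (fun S T ⟨K, hK⟩ ⟨L, hL⟩ => ⟨K + L, fun f hf => by
      rw [union_inter_distrib_right, ENNReal.coe_add, add_mul]
      exact (lintegral_union_le _ _ _).trans (add_le_add (hK f hf) (hL f hf))⟩)
    (fun x hx => by
      obtain ⟨U, hU, hK⟩ := exists_nhds_lintegral_sq_le hΩ hconv (closure_nonempty_iff.1 ⟨x, hx⟩) x
      exact ⟨U, mem_nhdsWithin_of_mem_nhds hU, hK⟩)
  exact ⟨K, by simpa only [inter_eq_self_of_subset_right subset_closure] using hK⟩

theorem exists_integral_sq_le_sq_integral_sqrt_h1Density (hΩ : IsOpen Ω) (hbdd : IsBounded Ω)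
    (hconv : Convex ℝ Ω) : ∃ K : ℝ, 0 ≤ K ∧ ∀ f : V2 → ℝ, ContDiff ℝ 1 f →
      ∫ x in Ω, f x ^ 2 ≤ K * (∫ x in Ω, √(h1Density f x)) ^ 2 := by
  obtain ⟨K, hK⟩ := exists_lintegral_sq_le hΩ hbdd hconv
  refine ⟨K, K.2, fun f hf => ?_⟩
  have hdensity : 0 ≤ ∫ x in Ω, √(h1Density f x) := integral_nonneg fun x => sqrt_nonneg _
  have hsq : Continuous fun x => f x ^ 2 := hf.continuous.pow 2
  have h := hK f hf
  rw [← ofReal_integral_eq_lintegral_ofReal (integrableOn_of_isBounded hbdd hsq)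
      (.of_forall fun x => sq_nonneg (f x)),
    ← ofReal_integral_eq_lintegral_ofReal
      (integrableOn_of_isBounded hbdd (continuous_h1Density hf).sqrt)
      (.of_forall fun x => sqrt_nonneg _),
    ← ENNReal.ofReal_pow hdensity, ← ENNReal.ofReal_coe_nnreal,
    ← ENNReal.ofReal_mul K.coe_nonneg] at h
  exact (ENNReal.ofReal_le_ofReal_iff (mul_nonneg K.2 (sq_nonneg _))).1 h

end H1Density

/-! ### Gagliardo–Nirenberg and Poincaré inequalities -/

section Measure

variable {α : Type*} [MeasurableSpace α] {m : Measure α} {f g : α → ℝ}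

lemma integral_rpow_mul_rpow_le (hf : Integrable f m) (hg : Integrable g m) (hf0 : 0 ≤ f)
    (hg0 : 0 ≤ g) {a b : ℝ} (ha : 0 ≤ a) (hb : 0 ≤ b) (hab : a + b = 1) :
    ∫ x, f x ^ a * g x ^ b ∂m ≤ (∫ x, f x ∂m) ^ a * (∫ x, g x ∂m) ^ b := by
  have hmeas : AEStronglyMeasurable (fun x => f x ^ a * g x ^ b) m :=
    ((hf.1.aemeasurable.pow_const a).mul (hg.1.aemeasurable.pow_const b)).aestronglyMeasurable
  rw [integral_eq_lintegral_of_nonneg_ae (.of_forall fun x =>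
      mul_nonneg (rpow_nonneg (hf0 x) a) (rpow_nonneg (hg0 x) b)) hmeas,
    integral_eq_lintegral_of_nonneg_ae (.of_forall hf0) hf.1,
    integral_eq_lintegral_of_nonneg_ae (.of_forall hg0) hg.1,
    ENNReal.toReal_rpow, ENNReal.toReal_rpow, ← ENNReal.toReal_mul]
  refine ENNReal.toReal_mono (ENNReal.mul_ne_top
    (ENNReal.rpow_ne_top_of_nonneg ha hf.lintegral_lt_top.ne)
    (ENNReal.rpow_ne_top_of_nonneg hb hg.lintegral_lt_top.ne)) ?_
  simp only [ENNReal.ofReal_mul (rpow_nonneg (hf0 _) a),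
    ← ENNReal.ofReal_rpow_of_nonneg (hf0 _) ha, ← ENNReal.ofReal_rpow_of_nonneg (hg0 _) hb]
  exact ENNReal.lintegral_mul_norm_pow_le hf.1.aemeasurable.ennreal_ofReal
    hg.1.aemeasurable.ennreal_ofReal ha hb hab

lemma sq_integral_mul_le (hf : Integrable (fun x => f x ^ 2) m)
    (hg : Integrable (fun x => g x ^ 2) m) :
    (∫ x, f x * g x ∂m) ^ 2 ≤ (∫ x, f x ^ 2 ∂m) * ∫ x, g x ^ 2 ∂m := by
  have hroots : |∫ x, f x * g x ∂m| ≤ √(∫ x, f x ^ 2 ∂m) * √(∫ x, g x ^ 2 ∂m) :=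
    calc |∫ x, f x * g x ∂m| ≤ ∫ x, |f x * g x| ∂m := abs_integral_le_integral_abs
      _ = ∫ x, (f x ^ 2) ^ (1 / 2 : ℝ) * (g x ^ 2) ^ (1 / 2 : ℝ) ∂m := by
          simp only [← sqrt_eq_rpow, sqrt_sq_eq_abs, abs_mul]
      _ ≤ √(∫ x, f x ^ 2 ∂m) * √(∫ x, g x ^ 2 ∂m) := by
          simp only [sqrt_eq_rpow]
          exact integral_rpow_mul_rpow_le hf hg (fun _ => sq_nonneg _) (fun _ => sq_nonneg _)
            (by norm_num) (by norm_num) (by norm_num)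
  rw [← sq_abs]
  refine (pow_le_pow_left₀ (abs_nonneg _) hroots 2).trans_eq ?_
  rw [mul_pow, sq_sqrt (integral_nonneg fun _ => sq_nonneg _),
    sq_sqrt (integral_nonneg fun _ => sq_nonneg _)]

lemma integral_prod_sq_sub [IsFiniteMeasure m] (hf : MemLp f 2 m) :
    ∫ z, (f z.2 - f z.1) ^ 2 ∂m.prod m
      = 2 * m.real univ * (∫ x, f x ^ 2 ∂m) - 2 * (∫ x, f x ∂m) ^ 2 := by
  have hf1 : Integrable f m := hf.integrable one_le_two
  have hfst : Integrable (fun z : α × α => f z.1 ^ 2) (m.prod m) := hf.integrable_sq.comp_fst m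
  have hsnd : Integrable (fun z : α × α => f z.2 ^ 2) (m.prod m) := hf.integrable_sq.comp_snd m
  have hcross : Integrable (fun z : α × α => 2 * (f z.1 * f z.2)) (m.prod m) :=
    (hf1.mul_prod hf1).const_mul 2
  have hsum : Integrable (fun z : α × α => f z.1 ^ 2 + f z.2 ^ 2) (m.prod m) := hfst.add hsnd
  have hexpand (z : α × α) :
      (f z.2 - f z.1) ^ 2 = f z.1 ^ 2 + f z.2 ^ 2 - 2 * (f z.1 * f z.2) := by ring
  simp only [hexpand]
  rw [integral_sub hsum hcross, integral_add hfst hsnd, integral_const_mul,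
    integral_prod_mul f f, integral_fun_fst fun x => f x ^ 2, integral_fun_snd fun x => f x ^ 2,
    smul_eq_mul]
  ring

lemma integrable_prod_sq_sub [IsFiniteMeasure m] (hf : MemLp f 2 m) :
    Integrable (fun z : α × α => (f z.2 - f z.1) ^ 2) (m.prod m) :=
  ((hf.comp_snd m).sub (hf.comp_fst m)).integrable_sq

end Measure

section GagliardoNirenberg

variable {Ω : Set V2} {f : V2 → ℝ}

lemma pd_pow (hf : Differentiable ℝ f) (n : ℕ) (i : Fin 2) (x : V2) :
    pd i (fun y => f y ^ n) x = n * f x ^ (n - 1) * pd i f x := by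
  simp [pd, ((hf x).hasFDerivAt.pow n).fderiv]

lemma sqrt_h1Density_pow_le (hf : Differentiable ℝ f) (n : ℕ) (x : V2) :
    √(h1Density (fun y => f y ^ (n + 1)) x) ≤ |f x| ^ n * ((n + 1) * √(h1Density f x)) := by
  refine sqrt_le_iff.2 ⟨by positivity, ?_⟩
  have hgrowth : (1 : ℝ) ≤ (n + 1) ^ 2 := one_le_pow₀ (by linarith [n.cast_nonneg (α := ℝ)])
  calc h1Density (fun y => f y ^ (n + 1)) x
      = (f x ^ n) ^ 2 * (1 * f x ^ 2 + (n + 1) ^ 2 * nsq (grad f x)) := by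
        simp only [h1Density, nsq, grad, pd_pow hf, Fin.sum_univ_two, Nat.add_sub_cancel]
        push_cast
        ring
    _ ≤ (f x ^ n) ^ 2 * ((n + 1) ^ 2 * f x ^ 2 + (n + 1) ^ 2 * nsq (grad f x)) := by gcongr
    _ = (|f x| ^ n * ((n + 1) * √(h1Density f x))) ^ 2 := by
        rw [mul_pow, mul_pow, sq_sqrt (h1Density_nonneg f x), ← abs_pow, sq_abs, ← mul_add,
          h1Density]

theorem exists_integral_pow_le (hΩ : IsOpen Ω) (hbdd : IsBounded Ω) (hconv : Convex ℝ Ω) (m : ℕ) :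
    ∃ C : ℝ, 0 ≤ C ∧ ∀ f : V2 → ℝ, ContDiff ℝ 1 f →
      ∫ x in Ω, f x ^ (2 * (m + 1)) ≤ C * (∫ x in Ω, f x ^ 2) * (∫ x in Ω, h1Density f x) ^ m := by
  obtain ⟨K, hK, sobolev⟩ := exists_integral_sq_le_sq_integral_sqrt_h1Density hΩ hbdd hconv
  induction m with
  | zero => exact ⟨1, zero_le_one, fun f _ => by simp⟩
  | succ m ih =>
    obtain ⟨C, hC, ih⟩ := ih
    refine ⟨K * C * (m + 2) ^ 2, by positivity, fun f hf => ?_⟩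
    have hpow : Continuous fun x => |f x| ^ (m + 1) := hf.continuous.abs.pow _
    have hdensity : Continuous fun x => (m + 2) * √(h1Density f x) :=
      continuous_const.mul (continuous_h1Density hf).sqrt
    have hpow_sq (x : V2) : (|f x| ^ (m + 1)) ^ 2 = f x ^ (2 * (m + 1)) := by
      rw [← pow_mul, mul_comm, pow_mul, sq_abs, ← pow_mul]
    have hdensity_sq (x : V2) : ((m + 2) * √(h1Density f x)) ^ 2 = (m + 2) ^ 2 * h1Density f x := by
      rw [mul_pow, sq_sqrt (h1Density_nonneg f x)]
    have hH : 0 ≤ ∫ x in Ω, h1Density f x := integral_nonneg (h1Density_nonneg f)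
    calc ∫ x in Ω, f x ^ (2 * (m + 1 + 1)) = ∫ x in Ω, (f x ^ (m + 1 + 1)) ^ 2 := by
          simp only [← pow_mul, mul_comm 2]
      _ ≤ K * (∫ x in Ω, √(h1Density (fun y => f y ^ (m + 1 + 1)) x)) ^ 2 := sobolev _ (hf.pow _)
      _ ≤ K * (∫ x in Ω, |f x| ^ (m + 1) * ((m + 2) * √(h1Density f x))) ^ 2 := by
          gcongr K * ?_ ^ 2
          refine integral_mono
            (integrableOn_of_isBounded hbdd (continuous_h1Density (hf.pow _)).sqrt)
            (integrableOn_of_isBounded hbdd (hpow.mul hdensity)) fun x => ?_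
          refine (sqrt_h1Density_pow_le (hf.differentiable one_ne_zero) (m + 1) x).trans_eq ?_
          push_cast
          ring
      _ ≤ K * ((∫ x in Ω, f x ^ (2 * (m + 1))) * ((m + 2) ^ 2 * ∫ x in Ω, h1Density f x)) := by
          gcongr
          simpa only [hpow_sq, hdensity_sq, integral_const_mul] using
            sq_integral_mul_le (integrableOn_of_isBounded hbdd (hpow.pow 2))
              (integrableOn_of_isBounded hbdd (hdensity.pow 2))
      _ ≤ K * (C * (∫ x in Ω, f x ^ 2) * (∫ x in Ω, h1Density f x) ^ m *
            ((m + 2) ^ 2 * ∫ x in Ω, h1Density f x)) := by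
          gcongr
          exact ih f hf
      _ = _ := by ring

-- Interpolates between the exponents `2` and `2 * (m + 1)`, `m = ⌈p⌉₊`.
lemma exists_integral_abs_rpow_le (hΩ : IsOpen Ω) (hbdd : IsBounded Ω) (hconv : Convex ℝ Ω)
    {p : ℝ} (hp : 2 ≤ p) : ∃ C : ℝ, 0 ≤ C ∧ ∀ f : V2 → ℝ, ContDiff ℝ 1 f →
      ∫ x in Ω, |f x| ^ p
        ≤ C * (∫ x in Ω, f x ^ 2) * (∫ x in Ω, h1Density f x) ^ ((p - 2) / 2) := by
  set m := ⌈p⌉₊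
  have hpm : p ≤ m := Nat.le_ceil p
  set θ := (p - 2) / (2 * m) with hθ
  have hθ0 : 0 ≤ θ := div_nonneg (by linarith) (by linarith)
  have hθ1 : 0 ≤ 1 - θ := sub_nonneg.2 (by rw [hθ, div_le_one] <;> linarith)
  have hmθ : m * θ = (p - 2) / 2 := by
    rw [hθ]
    field_simp [show (m : ℝ) ≠ 0 by linarith]
  obtain ⟨C, hC, integral_pow_le⟩ := exists_integral_pow_le hΩ hbdd hconv m
  refine ⟨C ^ θ, by positivity, fun f hf => ?_⟩
  have hI : 0 ≤ ∫ x in Ω, f x ^ 2 := integral_nonneg fun _ => sq_nonneg _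
  have hH : 0 ≤ ∫ x in Ω, h1Density f x := integral_nonneg (h1Density_nonneg f)
  have hpow_nonneg (x : V2) : 0 ≤ f x ^ (2 * (m + 1)) := (even_two_mul _).pow_nonneg _
  have hsplit (x : V2) : |f x| ^ p = (f x ^ 2) ^ (1 - θ) * (f x ^ (2 * (m + 1))) ^ θ := by
    rw [← sq_abs, ← (even_two_mul (m + 1)).pow_abs, ← rpow_natCast, ← rpow_natCast,
      ← rpow_mul (abs_nonneg _), ← rpow_mul (abs_nonneg _),
      ← rpow_add_of_nonneg (abs_nonneg _) (by positivity) (by positivity)]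
    congr 1
    push_cast
    linear_combination -2 * hmθ
  calc ∫ x in Ω, |f x| ^ p
      ≤ (∫ x in Ω, f x ^ 2) ^ (1 - θ) * (∫ x in Ω, f x ^ (2 * (m + 1))) ^ θ := by
        simp only [hsplit]
        exact integral_rpow_mul_rpow_le
          (integrableOn_of_isBounded hbdd (hf.continuous.pow 2))
          (integrableOn_of_isBounded hbdd (hf.continuous.pow _))
          (fun _ => sq_nonneg _) hpow_nonneg hθ1 hθ0 (by ring)
    _ ≤ (∫ x in Ω, f x ^ 2) ^ (1 - θ) *
          (C * (∫ x in Ω, f x ^ 2) * (∫ x in Ω, h1Density f x) ^ m) ^ θ := by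
        gcongr
        · exact integral_nonneg hpow_nonneg
        · exact integral_pow_le f hf
    _ = C ^ θ * ((∫ x in Ω, f x ^ 2) ^ (1 - θ) * (∫ x in Ω, f x ^ 2) ^ θ) *
          (∫ x in Ω, h1Density f x) ^ (m * θ) := by
        rw [mul_rpow (by positivity) (by positivity), mul_rpow hC hI, ← rpow_natCast_mul hH]
        ring
    _ = C ^ θ * (∫ x in Ω, f x ^ 2) * (∫ x in Ω, h1Density f x) ^ ((p - 2) / 2) := by
        rw [← rpow_add_of_nonneg hI hθ1 hθ0, sub_add_cancel, rpow_one, hmθ]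

theorem exists_LpS_le (hΩ : IsOpen Ω) (hbdd : IsBounded Ω) (hconv : Convex ℝ Ω)
    {p : ℝ} (hp : 2 ≤ p) : ∃ C : ℝ, 0 ≤ C ∧ ∀ f : V2 → ℝ, ContDiff ℝ 1 f →
      LpS p Ω f ≤ C * √(∫ x in Ω, f x ^ 2) ^ (2 / p) *
        √(∫ x in Ω, h1Density f x) ^ (1 - 2 / p) := by
  obtain ⟨C, hC, integral_le⟩ := exists_integral_abs_rpow_le hΩ hbdd hconv hp
  refine ⟨C ^ (1 / p), by positivity, fun f hf => ?_⟩
  have hI : 0 ≤ ∫ x in Ω, f x ^ 2 := integral_nonneg fun _ => sq_nonneg _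
  have hH : 0 ≤ ∫ x in Ω, h1Density f x := integral_nonneg (h1Density_nonneg f)
  have hexp : (p - 2) / 2 * (1 / p) = 1 / 2 * (1 - 2 / p) := by
    field_simp
  calc LpS p Ω f
      ≤ (C * (∫ x in Ω, f x ^ 2) * (∫ x in Ω, h1Density f x) ^ ((p - 2) / 2)) ^ (1 / p) :=
        rpow_le_rpow (integral_nonneg fun _ => by positivity) (integral_le f hf) (by positivity)
    _ = _ := by
        rw [mul_rpow (by positivity) (by positivity), mul_rpow hC hI, sqrt_eq_rpow, sqrt_eq_rpow,
          ← rpow_mul hI, ← rpow_mul hH, ← rpow_mul hH, hexp, div_mul_div_comm, one_mul,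
          mul_comm 2 p, div_mul_cancel_right₀ two_ne_zero, one_div]

end GagliardoNirenberg

section Poincare

variable {Ω : Set V2} {f : V2 → ℝ} {g : V2 → ENNReal}

lemma lintegral_add_smul_le (hg : Measurable g) (a : V2) {s : ℝ} (hs : 1 / 2 ≤ s) :
    ∫⁻ y, g (a + s • y) ≤ 4 * ∫⁻ y, g y := by
  have hs0 : s ≠ 0 := by linarith
  have hjac : |(s ^ Module.finrank ℝ V2)⁻¹| ≤ 4 := by
    rw [Module.finrank_fin_fun, abs_of_nonneg (by positivity), ← inv_pow]
    calc s⁻¹ ^ 2 ≤ (1 / 2 : ℝ)⁻¹ ^ 2 := by gcongr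
      _ = 4 := by norm_num
  calc ∫⁻ y, g (a + s • y)
      = ENNReal.ofReal |(s ^ Module.finrank ℝ V2)⁻¹| * ∫⁻ y, g (a + y) := by
        rw [← lintegral_map (f := fun y => g (a + y)) (by fun_prop) (measurable_const_smul s),
          Measure.map_addHaar_smul _ hs0, lintegral_smul_measure, smul_eq_mul]
    _ ≤ ENNReal.ofReal 4 * ∫⁻ y, g y := by
        rw [lintegral_add_left_eq_self g a]
        gcongr
    _ = 4 * ∫⁻ y, g y := by norm_num

lemma sq_sub_le_nsq_mul_integral (hf : ContDiff ℝ 1 f) (x w : V2) :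
    (f (x + w) - f x) ^ 2 ≤ nsq w * ∫ s in (0 : ℝ)..1, nsq (grad f (x + s • w)) := by
  have hline : Continuous fun s : ℝ => x + s • w := by fun_prop
  have hgrad : Continuous fun s : ℝ => grad f (x + s • w) := (continuous_grad hf).comp hline
  have hslope : Continuous fun s : ℝ => dot w (grad f (x + s • w)) :=
    continuous_dot continuous_const hgrad
  have hint {k : ℝ → ℝ} (hk : Continuous k) : IntegrableOn k (Ioc 0 1) :=
    hk.integrableOn_Icc.mono_set Ioc_subset_Icc_self
  have hftc := intervalIntegral.integral_eq_sub_of_hasDerivAt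
    (fun s _ => hasDerivAt_along_line (hf.differentiable one_ne_zero) x w s)
    (hslope.intervalIntegrable 0 1)
  have hcs := sq_integral_mul_le (hint (hslope.pow 2)) (g := fun _ => 1) (hint (by fun_prop))
  simp only [one_smul, zero_smul, add_zero, intervalIntegral.integral_of_le zero_le_one] at hftc ⊢
  rw [← hftc, ← integral_const_mul]
  calc (∫ s in Ioc (0 : ℝ) 1, dot w (grad f (x + s • w))) ^ 2
      ≤ ∫ s in Ioc (0 : ℝ) 1, dot w (grad f (x + s • w)) ^ 2 := by simpa using hcs
    _ ≤ ∫ s in Ioc (0 : ℝ) 1, nsq w * nsq (grad f (x + s • w)) := by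
        refine integral_mono (hint (hslope.pow 2))
          (hint (continuous_const.mul (continuous_nsq hgrad))) fun s => ?_
        have := pow_le_pow_left₀ (abs_nonneg _) (abs_dot_le w (grad f (x + s • w))) 2
        rwa [sq_abs, mul_pow, sq_sqrt (nsq_nonneg _), sq_sqrt (nsq_nonneg _)] at this

lemma nsq_le_two_mul_norm_sq (w : V2) : nsq w ≤ 2 * ‖w‖ ^ 2 := by
  have hcoord (i : Fin 2) : w i ^ 2 ≤ ‖w‖ ^ 2 := by
    rw [← sq_abs]
    gcongr
    exact norm_le_pi_norm w i
  rw [nsq, Fin.sum_univ_two]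
  linarith [hcoord 0, hcoord 1]

lemma ofReal_sq_sub_le_lintegral_segment (hbdd : IsBounded Ω) (hconv : Convex ℝ Ω)
    (hf : ContDiff ℝ 1 f) {x y : V2} (hx : x ∈ Ω) (hy : y ∈ Ω) :
    ENNReal.ofReal ((f y - f x) ^ 2) ≤ ENNReal.ofReal (2 * Metric.diam Ω ^ 2) *
      ∫⁻ s in Ioc (0 : ℝ) 1,
        Ω.indicator (fun z => ENNReal.ofReal (nsq (grad f z))) (x + s • (y - x)) := by
  have hdiam : nsq (y - x) ≤ 2 * Metric.diam Ω ^ 2 := by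
    refine (nsq_le_two_mul_norm_sq _).trans ?_
    gcongr
    rw [← dist_eq_norm]
    exact Metric.dist_le_diam_of_mem hbdd hy hx
  have hsegment : 0 ≤ ∫ s in (0 : ℝ)..1, nsq (grad f (x + s • (y - x))) :=
    intervalIntegral.integral_nonneg zero_le_one fun _ _ => nsq_nonneg _
  rw [← ofReal_intervalIntegral_segment hconv (continuous_nsq (continuous_grad hf))
    (fun _ => nsq_nonneg _) hx (by rwa [add_sub_cancel]), ← ENNReal.ofReal_mul (by positivity)]
  refine ENNReal.ofReal_le_ofReal ?_
  have := sq_sub_le_nsq_mul_integral hf x (y - x)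
  rw [add_sub_cancel] at this
  exact this.trans (mul_le_mul_of_nonneg_right hdiam hsegment)

-- One of `s`, `1 - s` is at least `1 / 2`: integrate first in the variable it multiplies.
lemma lintegral_prod_add_smul_sub_le (hg : Measurable g) (S : Set V2) (s : ℝ) :
    ∫⁻ z, g (z.1 + s • (z.2 - z.1)) ∂(volume.restrict S).prod (volume.restrict S)
      ≤ 4 * (∫⁻ x, g x) * volume S := by
  have hmeas : Measurable fun z : V2 × V2 => g (z.1 + s • (z.2 - z.1)) := hg.comp (by fun_prop)
  rw [← setLIntegral_const]
  rcases le_total (1 / 2) s with hs | hs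
  · rw [lintegral_prod _ hmeas.aemeasurable]
    refine lintegral_mono fun x => (setLIntegral_le_lintegral _ _).trans ?_
    have hcomb (y : V2) : x + s • (y - x) = x - s • x + s • y := by module
    simp only [hcomb]
    exact lintegral_add_smul_le hg _ hs
  · rw [lintegral_prod_symm _ hmeas.aemeasurable]
    refine lintegral_mono fun y => (setLIntegral_le_lintegral _ _).trans ?_
    have hcomb (x : V2) : x + s • (y - x) = s • y + (1 - s) • x := by module
    simp only [hcomb]
    exact lintegral_add_smul_le hg _ (by linarith)

lemma lintegral_prod_sq_sub_le (hΩ : IsOpen Ω) (hbdd : IsBounded Ω) (hconv : Convex ℝ Ω)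
    (hf : ContDiff ℝ 1 f) :
    ∫⁻ z, ENNReal.ofReal ((f z.2 - f z.1) ^ 2) ∂(volume.restrict Ω).prod (volume.restrict Ω)
      ≤ ENNReal.ofReal (2 * Metric.diam Ω ^ 2) *
        (4 * (∫⁻ x in Ω, ENNReal.ofReal (nsq (grad f x))) * volume Ω) := by
  set m := (volume : Measure V2).restrict Ω with hm
  set g : V2 → ENNReal := Ω.indicator fun z => ENNReal.ofReal (nsq (grad f z)) with hg
  have hgm : Measurable g :=
    (continuous_nsq (continuous_grad hf)).measurable.ennreal_ofReal.indicator hΩ.measurableSet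
  have hmeas : Measurable fun q : (V2 × V2) × ℝ => g (q.1.1 + q.2 • (q.1.2 - q.1.1)) :=
    hgm.comp (by fun_prop)
  rw [← lintegral_indicator hΩ.measurableSet, ← hg]
  calc ∫⁻ z, ENNReal.ofReal ((f z.2 - f z.1) ^ 2) ∂m.prod m
      ≤ ∫⁻ z, ENNReal.ofReal (2 * Metric.diam Ω ^ 2) *
          (∫⁻ s in Ioc (0 : ℝ) 1, g (z.1 + s • (z.2 - z.1))) ∂m.prod m := by
        refine lintegral_mono_ae ?_
        rw [hm, Measure.prod_restrict]
        filter_upwards [ae_restrict_mem (hΩ.measurableSet.prod hΩ.measurableSet)] with z hz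
        exact ofReal_sq_sub_le_lintegral_segment hbdd hconv hf hz.1 hz.2
    _ = ENNReal.ofReal (2 * Metric.diam Ω ^ 2) *
          ∫⁻ s in Ioc (0 : ℝ) 1, ∫⁻ z, g (z.1 + s • (z.2 - z.1)) ∂m.prod m := by
        rw [lintegral_const_mul _ hmeas.lintegral_prod_right',
          lintegral_lintegral_swap hmeas.aemeasurable]
    _ ≤ ENNReal.ofReal (2 * Metric.diam Ω ^ 2) *
          ∫⁻ _ in Ioc (0 : ℝ) 1, 4 * (∫⁻ x, g x) * volume Ω := by
        gcongr with s
        exact lintegral_prod_add_smul_sub_le hgm Ω s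
    _ = _ := by simp

theorem exists_integral_sq_le_of_integral_eq_zero (hΩ : IsOpen Ω) (hbdd : IsBounded Ω)
    (hconv : Convex ℝ Ω) : ∃ C : ℝ, 0 ≤ C ∧ ∀ f : V2 → ℝ, ContDiff ℝ 1 f →
      ∫ x in Ω, f x = 0 → ∫ x in Ω, f x ^ 2 ≤ C * ∫ x in Ω, nsq (grad f x) := by
  refine ⟨4 * Metric.diam Ω ^ 2, by positivity, fun f hf hmean => ?_⟩
  rcases Ω.eq_empty_or_nonempty with rfl | hne
  · simp
  have hfin := hbdd.measure_lt_top (μ := volume)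
  have := isFiniteMeasure_restrict.2 hfin.ne
  have hvol : 0 < volume.real Ω := ENNReal.toReal_pos (hΩ.measure_pos volume hne).ne' hfin.ne
  have hL2 : MemLp f 2 (volume.restrict Ω) :=
    (memLp_two_iff_integrable_sq hf.continuous.aestronglyMeasurable).2
      (integrableOn_of_isBounded hbdd (hf.continuous.pow 2))
  have hgrad : 0 ≤ ∫ x in Ω, nsq (grad f x) := integral_nonneg fun _ => nsq_nonneg _
  have h := lintegral_prod_sq_sub_le hΩ hbdd hconv hf
  rw [← ofReal_integral_eq_lintegral_ofReal (integrable_prod_sq_sub hL2)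
      (.of_forall fun z => sq_nonneg _), integral_prod_sq_sub hL2, hmean,
    ← ofReal_integral_eq_lintegral_ofReal
      (integrableOn_of_isBounded hbdd (continuous_nsq (continuous_grad hf)))
      (.of_forall fun z => nsq_nonneg _), ← ofReal_measureReal hfin.ne,
    ← ENNReal.ofReal_ofNat 4, ← ENNReal.ofReal_mul (by positivity),
    ← ENNReal.ofReal_mul (by positivity), ← ENNReal.ofReal_mul (by positivity),
    ENNReal.ofReal_le_ofReal_iff (by positivity), measureReal_restrict_apply_univ] at h
  refine le_of_mul_le_mul_left ?_ hvol
  linarith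

end Poincare

/-! ### Second derivatives of tangential solenoidal fields -/

section SecondDerivatives

variable {f g : V2 → ℝ} {v : V2 → V2} {x : V2}

/-- The terms of `∂ᵢ∂ⱼ(f g)` which contain at most one derivative of `f`. -/
def leibnizRemainder (i j : Fin 2) (f g : V2 → ℝ) (x : V2) : ℝ :=
  pd j f x * pd i g x + pd i f x * pd j g x + f x * pd i (pd j g) x

lemma pd_pd_mul (hf : ContDiff ℝ 2 f) (hg : ContDiff ℝ 2 g) (i j : Fin 2) :
    pd i (pd j fun y => f y * g y) x = pd i (pd j f) x * g x + leibnizRemainder i j f g x := by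
  have hfd := hf.differentiable two_ne_zero
  have hgd := hg.differentiable two_ne_zero
  have hfj := differentiable_pd hf j
  have hgj := differentiable_pd hg j
  have hmul : (pd j fun y => f y * g y) = fun y => pd j f y * g y + f y * pd j g y :=
    funext fun y => pd_mul j (hfd y) (hgd y)
  rw [hmul, pd_add i ((hfj x).fun_mul (hgd x)) ((hfd x).fun_mul (hgj x)),
    pd_mul i (hfj x) (hgd x), pd_mul i (hfd x) (hgj x), leibnizRemainder]
  ring

lemma pd_pd_dot_grad (hv : ContDiff ℝ 2 v) (hf : ContDiff ℝ 3 f) (i j : Fin 2) :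
    pd i (pd j fun y => dot (v y) (grad f y)) x =
      ∑ k, pd i (pd j fun y => v y k) x * pd k f x +
        ∑ k, leibnizRemainder i j (fun y => v y k) (pd k f) x := by
  have hvk (k : Fin 2) : ContDiff ℝ 2 fun y => v y k := contDiff_pi.1 hv k
  have hfk (k : Fin 2) : ContDiff ℝ 2 (pd k f) := contDiff_pd hf (by norm_num) k
  have hmul (k : Fin 2) : ContDiff ℝ 2 fun y => v y k * pd k f y := (hvk k).mul (hfk k)
  have hpd : (pd j fun y => dot (v y) (grad f y)) =
      fun y => pd j (fun z => v z 0 * pd 0 f z) y + pd j (fun z => v z 1 * pd 1 f z) y := by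
    ext y
    simp only [dot, Fin.sum_univ_two]
    exact pd_add j ((hmul 0).differentiable two_ne_zero y) ((hmul 1).differentiable two_ne_zero y)
  rw [hpd, pd_add i (differentiable_pd (hmul 0) j x) (differentiable_pd (hmul 1) j x),
    pd_pd_mul (hvk 0) (hfk 0), pd_pd_mul (hvk 1) (hfk 1)]
  simp only [Fin.sum_univ_two]
  ring

lemma pd_curl2 (hv : ContDiff ℝ 2 v) (i : Fin 2) :
    pd i (curl2 v) x = pd i (pd 0 fun y => v y 1) x - pd i (pd 1 fun y => v y 0) x :=
  pd_sub i (differentiable_pd (contDiff_pi.1 hv 1) 0 x)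
    (differentiable_pd (contDiff_pi.1 hv 0) 1 x)

lemma contDiff_curl2 {m n : WithTop ℕ∞} (hv : ContDiff ℝ n v) (hmn : m + 1 ≤ n) :
    ContDiff ℝ m (curl2 v) :=
  (contDiff_pd (contDiff_pi.1 hv 1) hmn 0).sub (contDiff_pd (contDiff_pi.1 hv 0) hmn 1)

lemma continuous_lap (hf : ContDiff ℝ 2 f) : Continuous (lap f) :=
  continuous_finsetSum _ fun i _ => continuous_pd (contDiff_pd hf (by norm_num) i) i

lemma continuous_gnsq_grad (hf : ContDiff ℝ 2 f) : Continuous (gnsq (grad f)) :=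
  continuous_gnsq (contDiff_grad hf (by norm_num))

lemma continuous_nsq_grad (hf : ContDiff ℝ 1 f) : Continuous fun x => nsq (grad f x) :=
  continuous_nsq (continuous_grad hf)

lemma sq_add_sq_le_gnsq_grad (f : V2 → ℝ) (x : V2) :
    pd 0 (pd 0 f) x ^ 2 + pd 0 (pd 1 f) x ^ 2 ≤ gnsq (grad f) x := by
  simp only [gnsq, grad, Fin.sum_univ_two]
  linarith [sq_nonneg (pd 1 (pd 0 f) x), sq_nonneg (pd 1 (pd 1 f) x)]

lemma sq_le_of_eq_add {r s e : ℝ} (h : s = r + e) : r ^ 2 ≤ 2 * s ^ 2 + 2 * e ^ 2 := by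
  rw [h]
  nlinarith [sq_nonneg (r + 2 * e)]

lemma pd_pd_of_solenoidal (hv : ContDiff ℝ 2 v) {Ω : Set V2} (hΩ : IsOpen Ω)
    (hdiv : ∀ y ∈ Ω, div2 v y = 0) (hx : x ∈ Ω) :
    pd 1 (pd 1 fun y => v y 0) x = -pd 0 (pd 0 fun y => v y 0) x - pd 1 (curl2 v) x ∧
      pd 0 (pd 0 fun y => v y 1) x = pd 0 (pd 1 fun y => v y 0) x + pd 0 (curl2 v) x ∧
      pd 0 (pd 1 fun y => v y 1) x = -pd 0 (pd 0 fun y => v y 0) x ∧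
      pd 1 (pd 1 fun y => v y 1) x = -pd 0 (pd 1 fun y => v y 0) x := by
  have hpd_div (i : Fin 2) :
      pd i (pd 0 fun y => v y 0) x + pd i (pd 1 fun y => v y 1) x = 0 := by
    rw [← Fin.sum_univ_two fun k => pd i (pd k fun y => v y k) x, ← pd_div2 hv,
      pd_congr hΩ hdiv i hx, pd_const]
  have hcurl₀ := pd_curl2 (x := x) hv 0
  have hcurl₁ := pd_curl2 (x := x) hv 1
  have hcomm₀ := pd_comm (contDiff_pi.1 hv 0) 1 0 x
  have hcomm₁ := pd_comm (contDiff_pi.1 hv 1) 1 0 x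
  have h₀ := hpd_div 0
  have h₁ := hpd_div 1
  refine ⟨?_, ?_, ?_, ?_⟩ <;> linarith

/-- The squared size of the quantities `v`, `∇v`, `∇ curl v` which are controlled before any
estimate of the full second gradient of `v`. -/
def firstOrderDensity (v : V2 → V2) (x : V2) : ℝ :=
  nsq (grad (curl2 v) x) + gnsq v x + nsq (v x)

lemma firstOrderDensity_nonneg (v : V2 → V2) (x : V2) : 0 ≤ firstOrderDensity v x :=
  add_nonneg (add_nonneg (nsq_nonneg _) (gnsq_nonneg _ _)) (nsq_nonneg _)

lemma continuous_firstOrderDensity (hv : ContDiff ℝ 2 v) : Continuous (firstOrderDensity v) :=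
  ((continuous_nsq_grad (contDiff_curl2 hv (by norm_num))).add
    (continuous_gnsq (hv.of_le one_le_two))).add (continuous_nsq hv.continuous)

lemma nsq_grad_pd_le (hv : ContDiff ℝ 2 v) {Ω : Set V2} (hΩ : IsOpen Ω)
    (hdiv : ∀ y ∈ Ω, div2 v y = 0) (hx : x ∈ Ω) (i j : Fin 2) :
    nsq (grad (pd j fun y => v y i) x) ≤
      2 * (nsq (grad (pd 0 fun y => v y 0) x) + nsq (grad (curl2 v) x)) := by
  obtain ⟨h₁₁, h₀₀', h₀₁', h₁₁'⟩ := pd_pd_of_solenoidal hv hΩ hdiv hx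
  have hcomm (k : Fin 2) := pd_comm (contDiff_pi.1 hv k) 1 0 x
  simp only [nsq, grad, Fin.sum_univ_two]
  fin_cases i <;> fin_cases j <;> dsimp only <;> simp only [Fin.zero_eta, Fin.mk_one, hcomm, h₁₁,
    h₀₀', h₀₁', h₁₁']
  · nlinarith
  · nlinarith [sq_nonneg (pd 0 (pd 0 fun y => v y 0) x - pd 1 (curl2 v) x)]
  · nlinarith [sq_nonneg (pd 0 (pd 1 fun y => v y 0) x - pd 0 (curl2 v) x)]
  · nlinarith

end SecondDerivatives

/-- A quantity depending on a vector field is of lower order on `Ω` if it is pointwise controlled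
by the field, its gradient and the gradient of its curl. -/
def IsLowerOrder (Ω : Set V2) (E : (V2 → V2) → V2 → ℝ) : Prop :=
  ∃ K, 0 ≤ K ∧ ∀ v, ∀ x ∈ Ω, E v x ^ 2 ≤ K * firstOrderDensity v x

namespace IsLowerOrder

variable {Ω : Set V2} {E F : (V2 → V2) → V2 → ℝ}

lemma of_sq_le (hE : ∀ v, ∀ x ∈ Ω, E v x ^ 2 ≤ firstOrderDensity v x) : IsLowerOrder Ω E :=
  ⟨1, zero_le_one, by simpa only [one_mul] using hE⟩

lemma apply (k : Fin 2) : IsLowerOrder Ω fun v x => v x k :=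
  of_sq_le fun v x _ => by
    have h : v x k ^ 2 ≤ nsq (v x) :=
      Finset.single_le_sum (f := fun k => v x k ^ 2) (fun _ _ => sq_nonneg _) (Finset.mem_univ k)
    exact h.trans (le_add_of_nonneg_left (add_nonneg (nsq_nonneg _) (gnsq_nonneg _ _)))

lemma pd_apply (j k : Fin 2) : IsLowerOrder Ω fun v => pd j fun y => v y k :=
  of_sq_le fun v x _ => by
    have h : pd j (fun y => v y k) x ^ 2 ≤ gnsq v x :=
      sq_pd_le_gnsq v k j x
    have := nsq_nonneg (grad (curl2 v) x)
    have := nsq_nonneg (v x)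
    simp only [firstOrderDensity]
    linarith

lemma pd_curl2 (j : Fin 2) : IsLowerOrder Ω fun v => pd j (curl2 v) :=
  of_sq_le fun v x _ => by
    have h : pd j (curl2 v) x ^ 2 ≤ nsq (grad (curl2 v) x) :=
      Finset.single_le_sum (f := fun k => grad (curl2 v) x k ^ 2) (fun _ _ => sq_nonneg _)
        (Finset.mem_univ j)
    rw [firstOrderDensity, add_assoc]
    exact h.trans (le_add_of_nonneg_right (add_nonneg (gnsq_nonneg _ _) (nsq_nonneg _)))

lemma add (hE : IsLowerOrder Ω E) (hF : IsLowerOrder Ω F) :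
    IsLowerOrder Ω fun v x => E v x + F v x := by
  obtain ⟨K, hK, hKE⟩ := hE
  obtain ⟨L, hL, hLF⟩ := hF
  refine ⟨2 * (K + L), by positivity, fun v x hx => ?_⟩
  linarith [add_sq_le (a := E v x) (b := F v x), hKE v x hx, hLF v x hx]

lemma mul_continuous (hE : IsLowerOrder Ω E) (hΩ : IsBounded Ω) {c : V2 → ℝ}
    (hc : Continuous c) : IsLowerOrder Ω fun v x => E v x * c x := by
  obtain ⟨K, hK, hKE⟩ := hE
  obtain ⟨M, hM⟩ := (hΩ.isCompact_closure.image (hc.pow 2)).bddAbove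
  have hcM (x : V2) (hx : x ∈ Ω) : c x ^ 2 ≤ M := hM ⟨x, subset_closure hx, rfl⟩
  refine ⟨K * max M 0, by positivity, fun v x hx => ?_⟩
  calc (E v x * c x) ^ 2 = E v x ^ 2 * c x ^ 2 := mul_pow _ _ _
    _ ≤ K * firstOrderDensity v x * max M 0 := by
      gcongr
      · exact mul_nonneg hK (firstOrderDensity_nonneg v x)
      · exact hKE v x hx
      · exact (hcM x hx).trans (le_max_left _ _)
    _ = K * max M 0 * firstOrderDensity v x := by ring

lemma leibnizRemainder (hΩ : IsBounded Ω) (i j k : Fin 2) {g : V2 → ℝ} (hg : ContDiff ℝ 2 g) :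
    IsLowerOrder Ω fun v => MHD.leibnizRemainder i j (fun y => v y k) g :=
  (((pd_apply j k).mul_continuous hΩ (continuous_pd (hg.of_le one_le_two) i)).add
    ((pd_apply i k).mul_continuous hΩ (continuous_pd (hg.of_le one_le_two) j))).add
    ((apply k).mul_continuous hΩ (continuous_pd (contDiff_pd hg (by norm_num) j) i))

lemma sum_leibnizRemainder (hΩ : IsBounded Ω) (i j : Fin 2) {g : V2 → ℝ} (hg : ContDiff ℝ 3 g) :
    IsLowerOrder Ω fun v x => ∑ k, MHD.leibnizRemainder i j (fun y => v y k) (pd k g) x := by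
  simp only [Fin.sum_univ_two]
  exact (leibnizRemainder hΩ i j 0 (contDiff_pd hg (by norm_num) 0)).add
    (leibnizRemainder hΩ i j 1 (contDiff_pd hg (by norm_num) 1))

end IsLowerOrder

namespace IsDefiningFunction

variable {Ω : Set V2} {φ : V2 → ℝ} (hφ : IsDefiningFunction φ Ω)
include hφ

lemma exists_pos_le_h1Density : ∃ c, 0 < c ∧ ∀ x ∈ Ω, c ≤ h1Density φ x := by
  have hpos (x : V2) : 0 < h1Density φ x := by
    by_cases hx : φ x = 0
    · exact add_pos_of_nonneg_of_pos (sq_nonneg _)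
        (nsq_pos (hφ.grad_ne_zero x (hφ.mem_frontier_iff.2 hx)))
    · exact add_pos_of_pos_of_nonneg (by positivity) (nsq_nonneg _)
  obtain ⟨c, hc, hle⟩ := hφ.isBounded.isCompact_closure.exists_forall_le'
    (continuous_h1Density hφ.contDiff_of_le).continuousOn (a := 0) fun x _ => hpos x
  exact ⟨c, hc, fun x hx => hle x (subset_closure hx)⟩

lemma exists_lap_dot_grad_sq_le : ∃ K, 0 ≤ K ∧ ∀ v : V2 → V2, ContDiff ℝ 2 v →
    (∀ x ∈ Ω, div2 v x = 0) → ∀ x ∈ Ω,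
      lap (fun y => dot (v y) (grad φ y)) x ^ 2 ≤ K * firstOrderDensity v x := by
  have hφ1 (i : Fin 2) : Continuous (pd i φ) := continuous_pd hφ.contDiff_of_le i
  have hrem (i : Fin 2) := IsLowerOrder.sum_leibnizRemainder hφ.isBounded i i
    (hφ.contDiff_of_le (n := 3))
  obtain ⟨K, hK, hle⟩ := ((((IsLowerOrder.pd_curl2 0).mul_continuous hφ.isBounded (hφ1 1)).add
    ((IsLowerOrder.pd_curl2 1).mul_continuous hφ.isBounded (hφ1 0).neg)).add (hrem 0)).add (hrem 1)
  refine ⟨K, hK, fun v hv hdiv x hx => ?_⟩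
  obtain ⟨h₁₁, h₀₀', -, h₁₁'⟩ := pd_pd_of_solenoidal hv hφ.isOpen hdiv hx
  convert hle v x hx using 2
  simp only [lap, pd_pd_dot_grad hv hφ.contDiff_of_le, Fin.sum_univ_two, h₁₁, h₀₀', h₁₁',
    Pi.neg_apply]
  ring

lemma exists_lap_mul_sq_le : ∃ K, 0 ≤ K ∧ ∀ v : V2 → V2, ContDiff ℝ 2 v →
    (∀ x ∈ Ω, div2 v x = 0) → ∀ x ∈ Ω,
      lap (fun y => v y 0 * φ y) x ^ 2 ≤ K * firstOrderDensity v x := by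
  have hrem (i : Fin 2) := IsLowerOrder.leibnizRemainder hφ.isBounded i i 0
    (hφ.contDiff_of_le (n := 2))
  obtain ⟨K, hK, hle⟩ := (((IsLowerOrder.pd_curl2 1).mul_continuous hφ.isBounded
    hφ.contDiff.continuous.neg).add (hrem 0)).add (hrem 1)
  refine ⟨K, hK, fun v hv hdiv x hx => ?_⟩
  obtain ⟨h₁₁, -, -, -⟩ := pd_pd_of_solenoidal hv hφ.isOpen hdiv hx
  convert hle v x hx using 2
  simp only [lap, pd_pd_mul (contDiff_pi.1 hv 0) hφ.contDiff_of_le, Fin.sum_univ_two, h₁₁,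
    Pi.neg_apply]
  ring

-- On `Ω` the first order operator `(v·∇φ, φ v⁰) ↦ ∂₀∇v⁰` is elliptic with symbol `φ² + |∇φ|²`.
lemma exists_h1Density_mul_nsq_grad_pd_le : ∃ K, 0 ≤ K ∧ ∀ v : V2 → V2, ContDiff ℝ 2 v →
    (∀ x ∈ Ω, div2 v x = 0) → ∀ x ∈ Ω,
      h1Density φ x * nsq (grad (pd 0 fun y => v y 0) x) ≤
        2 * (gnsq (grad fun y => dot (v y) (grad φ y)) x +
          gnsq (grad fun y => v y 0 * φ y) x) + K * firstOrderDensity v x := by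
  have hdotRem (i : Fin 2) := IsLowerOrder.sum_leibnizRemainder hφ.isBounded 0 i
    (hφ.contDiff_of_le (n := 3))
  have hmulRem (i : Fin 2) := IsLowerOrder.leibnizRemainder hφ.isBounded 0 i 0
    (hφ.contDiff_of_le (n := 2))
  obtain ⟨K₁, hK₁, h₁⟩ := ((IsLowerOrder.pd_curl2 0).mul_continuous hφ.isBounded
    (continuous_pd hφ.contDiff_of_le 1)).add (hdotRem 0)
  obtain ⟨K₂, hK₂, h₂⟩ := hdotRem 1
  obtain ⟨K₃, hK₃, h₃⟩ := hmulRem 0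
  obtain ⟨K₄, hK₄, h₄⟩ := hmulRem 1
  refine ⟨2 * (K₁ + K₂ + K₃ + K₄), by positivity, fun v hv hdiv x hx => ?_⟩
  obtain ⟨-, h₀₀', h₀₁', -⟩ := pd_pd_of_solenoidal hv hφ.isOpen hdiv hx
  have hdot (i : Fin 2) := pd_pd_dot_grad (x := x) hv (hφ.contDiff_of_le (n := 3)) 0 i
  have hmul (i : Fin 2) :=
    pd_pd_mul (x := x) (contDiff_pi.1 hv 0) (hφ.contDiff_of_le (n := 2)) 0 i
  set f := fun y => v y 0
  have hdot₀ : _ = (pd 0 φ x * pd 0 (pd 0 f) x + pd 1 φ x * pd 0 (pd 1 f) x) +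
      (pd 0 (curl2 v) x * pd 1 φ x +
        ∑ k, leibnizRemainder 0 0 (fun y => v y k) (pd k φ) x) :=
    (hdot 0).trans (by rw [Fin.sum_univ_two, h₀₀']; ring)
  have hdot₁ : _ = (pd 0 φ x * pd 0 (pd 1 f) x - pd 1 φ x * pd 0 (pd 0 f) x) +
      ∑ k, leibnizRemainder 0 1 (fun y => v y k) (pd k φ) x :=
    (hdot 1).trans (by rw [Fin.sum_univ_two, h₀₁']; ring)
  have hsq := add_le_add (add_le_add (sq_le_of_eq_add hdot₀) (sq_le_of_eq_add hdot₁))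
    (add_le_add (sq_le_of_eq_add (hmul 0)) (sq_le_of_eq_add (hmul 1)))
  have hsymbol : h1Density φ x * nsq (grad (pd 0 f) x) =
      (φ x ^ 2 + (pd 0 φ x ^ 2 + pd 1 φ x ^ 2)) *
        (pd 0 (pd 0 f) x ^ 2 + pd 0 (pd 1 f) x ^ 2) := by
    simp only [h1Density, nsq, grad, Fin.sum_univ_two, pd_comm (contDiff_pi.1 hv 0) 1 0 x, f]
  rw [hsymbol]
  linarith [sq_add_sq_le_gnsq_grad (fun y => dot (v y) (grad φ y)) x,
    sq_add_sq_le_gnsq_grad (fun y => f y * φ y) x, h₁ v x hx, h₂ v x hx,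
    h₃ v x hx, h₄ v x hx]

lemma exists_integral_gnsq_grad_dot_grad_le (hconv : Convex ℝ Ω) : ∃ K, 0 ≤ K ∧
    ∀ v : V2 → V2, ContDiff ℝ 3 v → (∀ x ∈ Ω, div2 v x = 0) →
      (∀ x ∈ frontier Ω, dot (v x) (grad φ x) = 0) →
      ∫ x in Ω, gnsq (grad fun y => dot (v y) (grad φ y)) x ≤
        K * ∫ x in Ω, firstOrderDensity v x := by
  obtain ⟨K, hK, hle⟩ := hφ.exists_lap_dot_grad_sq_le
  refine ⟨K, hK, fun v hv hdiv ht => ?_⟩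
  have hv2 : ContDiff ℝ 2 v := hv.of_le (by norm_num)
  have hk : ContDiff ℝ 3 fun y => dot (v y) (grad φ y) :=
    contDiff_dot hv (hφ.contDiff_grad.of_le ENat.LEInfty.out)
  refine (hφ.integral_gnsq_grad_le_integral_lap_sq hconv hk ht).trans ?_
  rw [← integral_const_mul]
  exact setIntegral_mono_on
    (integrableOn_of_isBounded hφ.isBounded ((continuous_lap (hk.of_le (by norm_num))).pow 2))
    ((integrableOn_of_isBounded hφ.isBounded (continuous_firstOrderDensity hv2)).const_mul K)
    hφ.isOpen.measurableSet (hle v hv2 hdiv)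

lemma exists_integral_gnsq_grad_mul_le (hconv : Convex ℝ Ω) : ∃ K, 0 ≤ K ∧
    ∀ v : V2 → V2, ContDiff ℝ 3 v → (∀ x ∈ Ω, div2 v x = 0) →
      ∫ x in Ω, gnsq (grad fun y => v y 0 * φ y) x ≤ K * ∫ x in Ω, firstOrderDensity v x := by
  obtain ⟨K, hK, hle⟩ := hφ.exists_lap_mul_sq_le
  refine ⟨K, hK, fun v hv hdiv => ?_⟩
  have hv2 : ContDiff ℝ 2 v := hv.of_le (by norm_num)
  have hk : ContDiff ℝ 3 fun y => v y 0 * φ y := (contDiff_pi.1 hv 0).mul hφ.contDiff_of_le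
  refine (hφ.integral_gnsq_grad_le_integral_lap_sq hconv hk fun x hx => by
    rw [hφ.mem_frontier_iff.1 hx, mul_zero]).trans ?_
  rw [← integral_const_mul]
  exact setIntegral_mono_on
    (integrableOn_of_isBounded hφ.isBounded ((continuous_lap (hk.of_le (by norm_num))).pow 2))
    ((integrableOn_of_isBounded hφ.isBounded (continuous_firstOrderDensity hv2)).const_mul K)
    hφ.isOpen.measurableSet (hle v hv2 hdiv)

lemma exists_integral_nsq_grad_pd_le (hconv : Convex ℝ Ω) : ∃ C, 0 ≤ C ∧
    ∀ v : V2 → V2, ContDiff ℝ 3 v → (∀ x ∈ Ω, div2 v x = 0) →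
      (∀ x ∈ frontier Ω, dot (v x) (grad φ x) = 0) →
      ∫ x in Ω, nsq (grad (pd 0 fun y => v y 0) x) ≤ C * ∫ x in Ω, firstOrderDensity v x := by
  obtain ⟨c, hc, hlow⟩ := hφ.exists_pos_le_h1Density
  obtain ⟨K, hK, hpt⟩ := hφ.exists_h1Density_mul_nsq_grad_pd_le
  obtain ⟨K₁, hK₁, h₁⟩ := hφ.exists_integral_gnsq_grad_dot_grad_le hconv
  obtain ⟨K₂, hK₂, h₂⟩ := hφ.exists_integral_gnsq_grad_mul_le hconv
  refine ⟨c⁻¹ * (2 * (K₁ + K₂) + K), by positivity, fun v hv hdiv ht => ?_⟩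
  have hv2 : ContDiff ℝ 2 v := hv.of_le (by norm_num)
  have hint {f : V2 → ℝ} (hf : Continuous f) : IntegrableOn f Ω :=
    integrableOn_of_isBounded hφ.isBounded hf
  have hH : IntegrableOn (fun x => nsq (grad (pd 0 fun y => v y 0) x)) Ω :=
    hint (continuous_nsq_grad (contDiff_pd (contDiff_pi.1 hv2 0) (by norm_num) 0))
  have hG₁ : IntegrableOn (gnsq (grad fun y => dot (v y) (grad φ y))) Ω :=
    hint (continuous_gnsq_grad (contDiff_dot hv2 (hφ.contDiff_grad.of_le ENat.LEInfty.out)))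
  have hG₂ : IntegrableOn (gnsq (grad fun y => v y 0 * φ y)) Ω :=
    hint (continuous_gnsq_grad ((contDiff_pi.1 hv2 0).mul hφ.contDiff_of_le))
  have hG : IntegrableOn (fun x => gnsq (grad fun y => dot (v y) (grad φ y)) x +
      gnsq (grad fun y => v y 0 * φ y) x) Ω := hG₁.add hG₂
  have hD := hint (continuous_firstOrderDensity hv2)
  have hle : c * ∫ x in Ω, nsq (grad (pd 0 fun y => v y 0) x) ≤
      2 * ((∫ x in Ω, gnsq (grad fun y => dot (v y) (grad φ y)) x) +
        ∫ x in Ω, gnsq (grad fun y => v y 0 * φ y) x) + K * ∫ x in Ω, firstOrderDensity v x := by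
    rw [← integral_add hG₁ hG₂, ← integral_const_mul, ← integral_const_mul, ← integral_const_mul,
      ← integral_add (hG.const_mul 2) (hD.const_mul K)]
    refine setIntegral_mono_on (hH.const_mul c) ((hG.const_mul 2).add (hD.const_mul K))
      hφ.isOpen.measurableSet fun x hx => ?_
    exact (mul_le_mul_of_nonneg_right (hlow x hx) (nsq_nonneg _)).trans (hpt v hv2 hdiv x hx)
  rw [mul_assoc, ← div_eq_inv_mul, le_div_iff₀ hc]
  linarith [h₁ v hv hdiv ht, h₂ v hv hdiv]

end IsDefiningFunction

/-! ### Lebesgue norms -/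

section LebesgueNorms

variable {p : ℝ} {Ω : Set V2} {f g : V2 → ℝ} {v w : V2 → V2}

lemma LpS_nonneg (p : ℝ) (Ω : Set V2) (f : V2 → ℝ) : 0 ≤ LpS p Ω f :=
  rpow_nonneg (integral_nonneg fun _ => by positivity) _

lemma LpV_eq_LpS (p : ℝ) (Ω : Set V2) (v : V2 → V2) :
    LpV p Ω v = LpS p Ω fun x => √(nsq (v x)) := by
  have h (x : V2) : |√(nsq (v x))| ^ p = nsq (v x) ^ (p / 2) := by
    rw [abs_of_nonneg (sqrt_nonneg _), sqrt_eq_rpow, ← rpow_mul (nsq_nonneg _), one_div_mul_eq_div]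
  simp only [LpV, LpS, h]

lemma LpG_eq_LpS (p : ℝ) (Ω : Set V2) (v : V2 → V2) :
    LpG p Ω v = LpS p Ω fun x => √(gnsq v x) := by
  have h (x : V2) : |√(gnsq v x)| ^ p = gnsq v x ^ (p / 2) := by
    rw [abs_of_nonneg (sqrt_nonneg _), sqrt_eq_rpow, ← rpow_mul (gnsq_nonneg _ _),
      one_div_mul_eq_div]
  simp only [LpG, LpS, h]

lemma LpV_nonneg (p : ℝ) (Ω : Set V2) (v : V2 → V2) : 0 ≤ LpV p Ω v :=
  LpV_eq_LpS p Ω v ▸ LpS_nonneg _ _ _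

lemma LpG_nonneg (p : ℝ) (Ω : Set V2) (v : V2 → V2) : 0 ≤ LpG p Ω v :=
  LpG_eq_LpS p Ω v ▸ LpS_nonneg _ _ _

lemma LpS_two (Ω : Set V2) (f : V2 → ℝ) : LpS 2 Ω f = √(∫ x in Ω, f x ^ 2) := by
  simp only [LpS, rpow_two, sq_abs, sqrt_eq_rpow]

lemma LpV_two (Ω : Set V2) (v : V2 → V2) : LpV 2 Ω v = √(∫ x in Ω, nsq (v x)) := by
  simp only [LpV_eq_LpS, LpS_two, sq_sqrt (nsq_nonneg _)]

lemma LpS_nsq (hp : 0 < p) (Ω : Set V2) (v : V2 → V2) :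
    LpS p Ω (fun x => nsq (v x)) = LpV (2 * p) Ω v ^ 2 := by
  have h0 : 0 ≤ ∫ x in Ω, nsq (v x) ^ p := integral_nonneg fun x => rpow_nonneg (nsq_nonneg _) _
  simp only [LpS, LpV, abs_of_nonneg (nsq_nonneg _), mul_div_cancel_left₀ p two_ne_zero]
  rw [← rpow_two, ← rpow_mul h0]
  congr 1
  field_simp

lemma LpS_congr (hΩ : IsOpen Ω) (h : ∀ x ∈ Ω, f x = g x) : LpS p Ω f = LpS p Ω g := by
  rw [LpS, LpS, setIntegral_congr_fun hΩ.measurableSet fun x hx => by rw [h x hx]]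

lemma LpV_congr (hΩ : IsOpen Ω) (h : ∀ x ∈ Ω, v x = w x) : LpV p Ω v = LpV p Ω w := by
  rw [LpV_eq_LpS, LpV_eq_LpS, LpS_congr hΩ fun x hx => by rw [h x hx]]

lemma LpS_eq_lpNorm (hp : 0 < p) (Ω : Set V2) (hf : Continuous f) :
    LpS p Ω f = lpNorm f (ENNReal.ofReal p) (volume.restrict Ω) := by
  rw [lpNorm_eq_integral_norm_rpow_toReal (by simpa) ENNReal.ofReal_ne_top
    hf.aestronglyMeasurable, ENNReal.toReal_ofReal hp.le, LpS, one_div]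
  rfl

lemma memLp_of_isBounded (hΩ : IsBounded Ω) (hf : Continuous f) (q : ENNReal) :
    MemLp f q (volume.restrict Ω) := by
  obtain ⟨C, hC⟩ := hΩ.isCompact_closure.exists_bound_of_continuousOn hf.continuousOn
  have : IsFiniteMeasure (volume.restrict (closure Ω)) :=
    isFiniteMeasure_restrict.2 hΩ.isCompact_closure.measure_lt_top.ne
  exact (MemLp.of_bound hf.aestronglyMeasurable C
    (ae_restrict_of_forall_mem isClosed_closure.measurableSet hC)).mono_measure
    (Measure.restrict_mono subset_closure le_rfl)

lemma LpS_mono (hp : 0 < p) (hΩ : IsBounded Ω) (hf : Continuous f) (hg : Continuous g)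
    (h : ∀ x, |f x| ≤ g x) : LpS p Ω f ≤ LpS p Ω g := by
  rw [LpS_eq_lpNorm hp Ω hf, LpS_eq_lpNorm hp Ω hg]
  exact lpNorm_mono_real (memLp_of_isBounded hΩ hg _) h

lemma LpS_add_le (hp : 1 ≤ p) (hΩ : IsBounded Ω) (hf : Continuous f) (hg : Continuous g) :
    LpS p Ω (fun x => f x + g x) ≤ LpS p Ω f + LpS p Ω g := by
  have hp0 : 0 < p := by positivity
  rw [LpS_eq_lpNorm hp0 Ω hf, LpS_eq_lpNorm hp0 Ω hg,
    LpS_eq_lpNorm (f := fun x => f x + g x) hp0 Ω (hf.add hg)]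
  exact lpNorm_add_le (memLp_of_isBounded hΩ hf _) (ENNReal.one_le_ofReal.2 hp)

lemma LpS_const_mul (hp : 0 < p) (Ω : Set V2) (c : ℝ) (hf : Continuous f) :
    LpS p Ω (fun x => c * f x) = |c| * LpS p Ω f := by
  rw [LpS_eq_lpNorm hp Ω hf,
    LpS_eq_lpNorm (f := fun x => c * f x) hp Ω (continuous_const.mul hf)]
  exact lpNorm_const_smul c f _

lemma LpS_sub_le (hp : 1 ≤ p) (hΩ : IsBounded Ω) (hf : Continuous f) (hg : Continuous g) :
    LpS p Ω (fun x => f x - g x) ≤ LpS p Ω f + LpS p Ω g := by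
  have hp0 : 0 < p := by positivity
  rw [LpS_eq_lpNorm hp0 Ω hf, LpS_eq_lpNorm hp0 Ω hg,
    LpS_eq_lpNorm (f := fun x => f x - g x) hp0 Ω (hf.sub hg)]
  exact lpNorm_sub_le (memLp_of_isBounded hΩ hf _) (ENNReal.one_le_ofReal.2 hp)

lemma sqrt_nsq_sub_le (a b : V2) : √(nsq (a - b)) ≤ √(nsq a) + √(nsq b) := by
  refine sqrt_le_iff.2 ⟨by positivity, ?_⟩
  have hexp : nsq (a - b) = nsq a - 2 * dot a b + nsq b := by
    simp only [nsq, dot, Fin.sum_univ_two, Pi.sub_apply]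
    ring
  nlinarith [neg_le_of_abs_le (abs_dot_le a b), sq_sqrt (nsq_nonneg a), sq_sqrt (nsq_nonneg b)]

lemma LpV_sub_le (hp : 1 ≤ p) (hΩ : IsBounded Ω) (hv : Continuous v) (hw : Continuous w) :
    LpV p Ω (fun x => v x - w x) ≤ LpV p Ω v + LpV p Ω w := by
  have hv' := (continuous_nsq hv).sqrt
  have hw' := (continuous_nsq hw).sqrt
  simp only [LpV_eq_LpS]
  exact (LpS_mono (by positivity) hΩ (continuous_nsq (hv.sub hw)).sqrt (hv'.add hw') fun x =>
    (abs_of_nonneg (sqrt_nonneg _)).trans_le (sqrt_nsq_sub_le _ _)).trans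
    (LpS_add_le hp hΩ hv' hw')

lemma LpS_curl2_le (hp : 0 < p) (hΩ : IsBounded Ω) (hv : ContDiff ℝ 1 v) :
    LpS p Ω (curl2 v) ≤ 2 * LpG p Ω v := by
  have hg : Continuous fun x => √(gnsq v x) := (continuous_gnsq hv).sqrt
  rw [LpG_eq_LpS, ← abs_two, ← LpS_const_mul hp Ω 2 hg]
  refine LpS_mono hp hΩ (continuous_curl2 hv) (continuous_const.mul hg) fun x => ?_
  calc |curl2 v x| ≤ |pd 0 (fun y => v y 1) x| + |pd 1 (fun y => v y 0) x| := abs_sub _ _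
    _ ≤ √(gnsq v x) + √(gnsq v x) :=
      add_le_add (abs_le_sqrt (sq_pd_le_gnsq v 1 0 x)) (abs_le_sqrt (sq_pd_le_gnsq v 0 1 x))
    _ = 2 * √(gnsq v x) := (two_mul _).symm

lemma sqrt_gnsq_le (v : V2 → V2) (x : V2) : √(gnsq v x) ≤ ∑ i, ∑ j, |pd j (fun y => v y i) x| := by
  refine sqrt_le_iff.2 ⟨by positivity, ?_⟩
  simp only [gnsq, ← Fintype.sum_prod_type', ← sq_abs (pd _ _ _)]
  exact Finset.sum_sq_le_sq_sum_of_nonneg fun _ _ => abs_nonneg _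

lemma LpS_abs (p : ℝ) (Ω : Set V2) (f : V2 → ℝ) : LpS p Ω (fun x => |f x|) = LpS p Ω f := by
  simp only [LpS, abs_abs]

lemma LpS_sum_le {ι : Type*} (hp : 1 ≤ p) (hΩ : IsBounded Ω) (s : Finset ι) {f : ι → V2 → ℝ}
    (hf : ∀ i, Continuous (f i)) :
    LpS p Ω (fun x => ∑ i ∈ s, f i x) ≤ ∑ i ∈ s, LpS p Ω (f i) := by
  have hp0 : 0 < p := by positivity
  rw [LpS_eq_lpNorm hp0 Ω (continuous_finsetSum s fun i _ => hf i), ← Finset.sum_fn]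
  simp only [LpS_eq_lpNorm hp0 Ω (hf _)]
  exact lpNorm_sum_le (fun i _ => memLp_of_isBounded hΩ (hf i) _) (ENNReal.one_le_ofReal.2 hp)

lemma LpG_le_sum_LpS_pd (hp : 1 ≤ p) (hΩ : IsBounded Ω) (hv : ContDiff ℝ 1 v) :
    LpG p Ω v ≤ ∑ i, ∑ j, LpS p Ω (pd j fun y => v y i) := by
  have habs (i j : Fin 2) : Continuous fun x => |pd j (fun y => v y i) x| :=
    (continuous_pd (contDiff_pi.1 hv i) j).abs
  have hrow (i : Fin 2) : Continuous fun x => ∑ j, |pd j (fun y => v y i) x| :=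
    continuous_finsetSum _ fun j _ => habs i j
  calc LpG p Ω v ≤ LpS p Ω fun x => ∑ i, ∑ j, |pd j (fun y => v y i) x| := by
        rw [LpG_eq_LpS]
        exact LpS_mono (by positivity) hΩ (continuous_gnsq hv).sqrt
          (continuous_finsetSum _ fun i _ => hrow i) fun x =>
          (abs_of_nonneg (sqrt_nonneg _)).trans_le (sqrt_gnsq_le v x)
    _ ≤ ∑ i, ∑ j, LpS p Ω fun x => |pd j (fun y => v y i) x| :=
        (LpS_sum_le hp hΩ _ hrow).trans <|
          Finset.sum_le_sum fun i _ => LpS_sum_le hp hΩ _ (habs i)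
    _ = ∑ i, ∑ j, LpS p Ω (pd j fun y => v y i) := by simp only [LpS_abs]

end LebesgueNorms

/-! ### Solenoidal tangential fields -/

section Solenoidal

lemma pd_apply (i j : Fin 2) (x : V2) : pd j (fun y => y i) x = (Pi.single j 1 : V2) i := by
  rw [pd, (hasFDerivAt_apply i x).fderiv, ContinuousLinearMap.proj_apply]

lemma div2_smul {f : V2 → ℝ} {v : V2 → V2} (hf : Differentiable ℝ f) (hv : Differentiable ℝ v)
    (x : V2) : div2 (fun y => f y • v y) x = dot (v x) (grad f x) + f x * div2 v x := by
  have hmul (k : Fin 2) : pd k (fun y => (f y • v y) k) x =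
      pd k f x * v x k + f x * pd k (fun y => v y k) x :=
    pd_mul k (hf x) (differentiable_pi.1 hv k x)
  simp only [div2, hmul, Finset.sum_add_distrib, Finset.mul_sum, dot, grad, mul_comm (pd _ f x)]

namespace IsDefiningFunction

variable {Ω : Set V2} {φ : V2 → ℝ} (hφ : IsDefiningFunction φ Ω)
include hφ

-- `vᵢ = div (xᵢ v)` in `Ω`, and `xᵢ v` is tangential with `v`.
lemma integral_apply_eq_zero {v : V2 → V2} (hv : ContDiff ℝ 1 v) (hdiv : ∀ x ∈ Ω, div2 v x = 0)
    (ht : ∀ x ∈ frontier Ω, dot (v x) (grad φ x) = 0) (i : Fin 2) : ∫ x in Ω, v x i = 0 := by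
  have hX : ContDiff ℝ 1 fun x : V2 => x i • v x := (contDiff_apply ℝ ℝ i).smul hv
  rw [← hφ.integral_div2_eq_zero hX fun x hx => ?_]
  · refine setIntegral_congr_fun hφ.isOpen.measurableSet fun x hx => ?_
    rw [div2_smul (by fun_prop) (hv.differentiable one_ne_zero), hdiv x hx, mul_zero, add_zero]
    simp [dot, grad, pd_apply, Pi.single_apply]
  · rw [← mul_zero (x i), ← ht x hx]
    simp only [dot, Pi.smul_apply, smul_eq_mul, mul_assoc, Finset.mul_sum]

lemma exists_integral_nsq_le_integral_gnsq (hconv : Convex ℝ Ω) : ∃ C, 0 ≤ C ∧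
    ∀ v : V2 → V2, ContDiff ℝ 1 v → (∀ x ∈ Ω, div2 v x = 0) →
      (∀ x ∈ frontier Ω, dot (v x) (grad φ x) = 0) →
      ∫ x in Ω, nsq (v x) ≤ C * ∫ x in Ω, gnsq v x := by
  obtain ⟨C, hC, poincare⟩ :=
    exists_integral_sq_le_of_integral_eq_zero hφ.isOpen hφ.isBounded hconv
  refine ⟨C, hC, fun v hv hdiv ht => ?_⟩
  have hvi := contDiff_pi.1 hv
  calc ∫ x in Ω, nsq (v x) = ∑ i, ∫ x in Ω, v x i ^ 2 := integral_finsetSum _ fun i _ =>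
        integrableOn_of_isBounded hφ.isBounded ((hvi i).continuous.pow 2)
    _ ≤ ∑ i, C * ∫ x in Ω, nsq (grad (fun y => v y i) x) := Finset.sum_le_sum fun i _ =>
        poincare _ (hvi i) (hφ.integral_apply_eq_zero hv hdiv ht i)
    _ = C * ∫ x in Ω, gnsq v x := by
        rw [← Finset.mul_sum, ← integral_finsetSum _ fun i _ =>
          integrableOn_of_isBounded hφ.isBounded (continuous_nsq_grad (hvi i))]
        rfl

lemma exists_integral_firstOrderDensity_le (hconv : Convex ℝ Ω) : ∃ C, 0 ≤ C ∧
    ∀ v : V2 → V2, ContDiff ℝ 2 v → (∀ x ∈ Ω, div2 v x = 0) →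
      (∀ x ∈ frontier Ω, dot (v x) (grad φ x) = 0) →
      ∫ x in Ω, firstOrderDensity v x ≤ C * ∫ x in Ω, h1Density (curl2 v) x := by
  obtain ⟨C, hC, poincare⟩ := hφ.exists_integral_nsq_le_integral_gnsq hconv
  refine ⟨1 + C, by positivity, fun v hv hdiv ht => ?_⟩
  have hv1 : ContDiff ℝ 1 v := hv.of_le one_le_two
  have hω : ContDiff ℝ 1 (curl2 v) := contDiff_curl2 hv (by norm_num)
  have hint {f : V2 → ℝ} (hf : Continuous f) : IntegrableOn f Ω :=
    integrableOn_of_isBounded hφ.isBounded hf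
  have hω2 := hint (hω.continuous.pow 2)
  have hgω := hint (continuous_nsq_grad hω)
  have hgv := hint (continuous_gnsq hv1)
  have hgωv : IntegrableOn (fun x => nsq (grad (curl2 v) x) + gnsq v x) Ω := hgω.add hgv
  have hgω0 : 0 ≤ ∫ x in Ω, nsq (grad (curl2 v) x) := integral_nonneg fun x => nsq_nonneg _
  have hsplit : ∫ x in Ω, firstOrderDensity v x = (∫ x in Ω, nsq (grad (curl2 v) x)) +
      (∫ x in Ω, gnsq v x) + ∫ x in Ω, nsq (v x) := by
    simp only [firstOrderDensity]
    rw [integral_add hgωv (hint (continuous_nsq hv.continuous)), integral_add hgω hgv]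
  have hsplit' : ∫ x in Ω, h1Density (curl2 v) x =
      (∫ x in Ω, curl2 v x ^ 2) + ∫ x in Ω, nsq (grad (curl2 v) x) := integral_add hω2 hgω
  rw [hsplit, hsplit']
  have hcurl := hφ.integral_gnsq_le_integral_curl2_sq hconv hv hdiv ht
  nlinarith [poincare v hv1 hdiv ht]

lemma exists_integral_h1Density_pd_le (hconv : Convex ℝ Ω) : ∃ C, 0 ≤ C ∧
    ∀ v : V2 → V2, ContDiff ℝ 3 v → (∀ x ∈ Ω, div2 v x = 0) →
      (∀ x ∈ frontier Ω, dot (v x) (grad φ x) = 0) → ∀ i j,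
      ∫ x in Ω, h1Density (pd j fun y => v y i) x ≤ C * ∫ x in Ω, h1Density (curl2 v) x := by
  obtain ⟨K, hK, second⟩ := hφ.exists_integral_nsq_grad_pd_le hconv
  obtain ⟨C, hC, first⟩ := hφ.exists_integral_firstOrderDensity_le hconv
  refine ⟨(2 * K + 2) * C, by positivity, fun v hv hdiv ht i j => ?_⟩
  have hv2 : ContDiff ℝ 2 v := hv.of_le (by norm_num)
  have hpd (i j : Fin 2) : ContDiff ℝ 1 (pd j fun y => v y i) :=
    contDiff_pd (contDiff_pi.1 hv2 i) (by norm_num) j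
  have hint {f : V2 → ℝ} (hf : Continuous f) : IntegrableOn f Ω :=
    integrableOn_of_isBounded hφ.isBounded hf
  have hH := hint (continuous_nsq_grad (hpd 0 0))
  have hD := hint (continuous_firstOrderDensity hv2)
  calc ∫ x in Ω, h1Density (pd j fun y => v y i) x
      ≤ ∫ x in Ω, (2 * nsq (grad (pd 0 fun y => v y 0) x) + 2 * firstOrderDensity v x) := by
        refine setIntegral_mono_on (hint (continuous_h1Density (hpd i j)))
          ((hH.const_mul 2).add (hD.const_mul 2)) hφ.isOpen.measurableSet fun x hx => ?_
        have hgrad := nsq_grad_pd_le hv2 hφ.isOpen hdiv hx i j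
        have hsq := sq_pd_le_gnsq v i j x
        rw [h1Density, firstOrderDensity]
        linarith [nsq_nonneg (v x), gnsq_nonneg v x]
    _ = 2 * (∫ x in Ω, nsq (grad (pd 0 fun y => v y 0) x)) +
          2 * ∫ x in Ω, firstOrderDensity v x := by
        rw [integral_add (hH.const_mul 2) (hD.const_mul 2), integral_const_mul, integral_const_mul]
    _ ≤ (2 * K + 2) * ∫ x in Ω, firstOrderDensity v x := by
        linarith [second v hv hdiv ht]
    _ ≤ (2 * K + 2) * C * ∫ x in Ω, h1Density (curl2 v) x := by
        rw [mul_assoc]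
        gcongr
        exact first v hv2 hdiv ht

theorem exists_LpG_le_of_solenoidal (hconv : Convex ℝ Ω) {p : ℝ} (hp : 2 ≤ p) : ∃ C, 0 ≤ C ∧
    ∀ v : V2 → V2, ContDiff ℝ 3 v → (∀ x ∈ Ω, div2 v x = 0) →
      (∀ x ∈ frontier Ω, dot (v x) (grad φ x) = 0) →
      LpG p Ω v ≤ C * LpS 2 Ω (curl2 v) ^ (2 / p) *
        √(∫ x in Ω, h1Density (curl2 v) x) ^ (1 - 2 / p) := by
  obtain ⟨K, hK, gagliardo⟩ := exists_LpS_le hφ.isOpen hφ.isBounded hconv hp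
  obtain ⟨C, hC, second⟩ := hφ.exists_integral_h1Density_pd_le hconv
  refine ⟨4 * (K * √C ^ (1 - 2 / p)), by positivity, fun v hv hdiv ht => ?_⟩
  have hv1 : ContDiff ℝ 1 v := hv.of_le (by norm_num)
  have hp0 : 0 < p := by linarith
  have hθ : 0 ≤ 1 - 2 / p := sub_nonneg.2 ((div_le_one hp0).2 hp)
  set H := ∫ x in Ω, h1Density (curl2 v) x
  have hentry (i j : Fin 2) : LpS p Ω (pd j fun y => v y i) ≤
      K * √C ^ (1 - 2 / p) * LpS 2 Ω (curl2 v) ^ (2 / p) * √H ^ (1 - 2 / p) := by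
    have hpd : ContDiff ℝ 1 (pd j fun y => v y i) :=
      contDiff_pd (contDiff_pi.1 hv i) (by norm_num) j
    have hsq : ∫ x in Ω, pd j (fun y => v y i) x ^ 2 ≤ ∫ x in Ω, curl2 v x ^ 2 :=
      (integral_mono (integrableOn_of_isBounded hφ.isBounded (hpd.continuous.pow 2))
        (integrableOn_of_isBounded hφ.isBounded (continuous_gnsq hv1))
        fun x => sq_pd_le_gnsq v i j x).trans
        (hφ.integral_gnsq_le_integral_curl2_sq hconv (hv.of_le (by norm_num)) hdiv ht)
    calc LpS p Ω (pd j fun y => v y i) ≤ _ := gagliardo _ hpd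
      _ ≤ K * LpS 2 Ω (curl2 v) ^ (2 / p) * √(C * H) ^ (1 - 2 / p) := by
          rw [LpS_two]
          gcongr
          exact second v hv hdiv ht i j
      _ = _ := by
          rw [sqrt_mul hC, mul_rpow (sqrt_nonneg _) (sqrt_nonneg _)]
          ring
  refine (LpG_le_sum_LpS_pd (one_le_two.trans hp) hφ.isBounded hv1).trans ?_
  simp only [Fin.sum_univ_two]
  linarith [hentry 0 0, hentry 0 1, hentry 1 0, hentry 1 1]

end IsDefiningFunction

end Solenoidal

/-! ### Estimates for the effective viscous flux and the vorticity -/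

lemma rpow_mul_rpow_one_sub_le {a b x y s : ℝ} (hb : 0 ≤ b) (hx : 0 ≤ x) (hy : 0 ≤ y)
    (hs₀ : 0 ≤ s) (hs₁ : s ≤ 1) (hxa : x ≤ a) (hyab : y ≤ a + b) :
    x ^ s * y ^ (1 - s) ≤ a + a ^ s * b ^ (1 - s) := by
  have ha : 0 ≤ a := hx.trans hxa
  have hs₁' : 0 ≤ 1 - s := sub_nonneg.2 hs₁
  calc x ^ s * y ^ (1 - s) ≤ a ^ s * (a ^ (1 - s) + b ^ (1 - s)) := by
        gcongr
        exact (rpow_le_rpow hy hyab hs₁').trans (rpow_add_le_add_rpow ha hb hs₁' (by linarith))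
    _ = a + a ^ s * b ^ (1 - s) := by
        rw [mul_add, ← rpow_add_of_nonneg ha hs₀ hs₁', add_sub_cancel, rpow_one]

lemma contDiff_perp {w : V2 → V2} {n : WithTop ℕ∞} (hw : ContDiff ℝ n w) :
    ContDiff ℝ n fun x => perp (w x) :=
  contDiff_pi.2 <| Fin.forall_fin_two.2 ⟨contDiff_pi.1 hw 1, (contDiff_pi.1 hw 0).neg⟩

lemma div2_perp_grad {g : V2 → ℝ} (hg : ContDiff ℝ 2 g) (x : V2) :
    div2 (fun y => perp (grad g y)) x = 0 := by
  have hneg : pd 1 (fun y => -pd 0 g y) x = -pd 1 (pd 0 g) x := pd_neg 1 (pd 0 g) x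
  simp [div2, perp, grad, hneg, pd_comm hg 0 1 x]

section Curl

variable {v : V2 → V2} {x : V2}

lemma curl2_congr {Ω : Set V2} {w : V2 → V2} (hΩ : IsOpen Ω) (h : ∀ y ∈ Ω, v y = w y)
    (hx : x ∈ Ω) : curl2 v x = curl2 w x := by
  have hcomp (i : Fin 2) : ∀ y ∈ Ω, v y i = w y i := fun y hy => congrFun (h y hy) i
  simp only [curl2, pd_congr hΩ (hcomp _) _ hx]

lemma curl2_add_grad {q : V2 → ℝ} (hv : Differentiable ℝ v) (hq : ContDiff ℝ 2 q) :
    curl2 (fun y => v y + grad q y) x = curl2 v x := by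
  have hadd (i j : Fin 2) : pd j (fun y => v y i + grad q y i) x =
      pd j (fun y => v y i) x + pd j (pd i q) x :=
    pd_add j (differentiable_pi.1 hv i x) (differentiable_pd hq i x)
  simp only [curl2, Pi.add_apply, hadd, pd_comm hq 0 1 x]
  ring

end Curl

section Integral

variable {Ω : Set V2} {p : ℝ}

lemma sqrt_integral_h1Density_le (hΩ : IsBounded Ω) {f : V2 → ℝ} (hf : ContDiff ℝ 1 f) :
    √(∫ x in Ω, h1Density f x) ≤ LpS 2 Ω f + LpV 2 Ω (grad f) := by
  rw [LpS_two, LpV_two]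
  simp only [h1Density]
  have hsq : Continuous fun x => f x ^ 2 := hf.continuous.pow 2
  rw [integral_add (integrableOn_of_isBounded hΩ hsq)
    (integrableOn_of_isBounded hΩ (continuous_nsq_grad hf))]
  simp only [sqrt_eq_rpow]
  exact rpow_add_le_add_rpow (integral_nonneg fun _ => sq_nonneg _)
    (integral_nonneg fun _ => nsq_nonneg _) (by norm_num) (by norm_num)

lemma exists_LpS_two_le_of_integral_eq_zero (hΩ : IsOpen Ω) (hbdd : IsBounded Ω)
    (hconv : Convex ℝ Ω) : ∃ C : ℝ, 0 ≤ C ∧ ∀ f : V2 → ℝ, ContDiff ℝ 1 f →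
      ∫ x in Ω, f x = 0 → LpS 2 Ω f ≤ C * LpV 2 Ω (grad f) := by
  obtain ⟨C, hC, poincare⟩ := exists_integral_sq_le_of_integral_eq_zero hΩ hbdd hconv
  refine ⟨√C, sqrt_nonneg C, fun f hf hmean => ?_⟩
  rw [LpS_two, LpV_two, ← sqrt_mul hC]
  exact sqrt_le_sqrt (poincare f hf hmean)

lemma exists_LpS_le_of_integral_eq_zero (hΩ : IsOpen Ω) (hbdd : IsBounded Ω)
    (hconv : Convex ℝ Ω) (hp : 2 ≤ p) : ∃ C : ℝ, 0 ≤ C ∧ ∀ f : V2 → ℝ, ContDiff ℝ 1 f →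
      ∫ x in Ω, f x = 0 →
      LpS p Ω f ≤ C * LpS 2 Ω f ^ (2 / p) * LpV 2 Ω (grad f) ^ (1 - 2 / p) := by
  obtain ⟨K, hK, gagliardo⟩ := exists_LpS_le hΩ hbdd hconv hp
  obtain ⟨C, hC, poincare⟩ := exists_LpS_two_le_of_integral_eq_zero hΩ hbdd hconv
  refine ⟨K * (C + 1) ^ (1 - 2 / p), by positivity, fun f hf hmean => ?_⟩
  have hexp : 0 ≤ 1 - 2 / p := sub_nonneg.2 (div_le_one_of_le₀ hp (by positivity))
  have hLpS := LpS_nonneg 2 Ω f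
  have hLpV := LpV_nonneg 2 Ω (grad f)
  have hh1 : √(∫ x in Ω, h1Density f x) ≤ (C + 1) * LpV 2 Ω (grad f) := by
    linarith [sqrt_integral_h1Density_le hbdd hf, poincare f hf hmean]
  calc LpS p Ω f ≤ K * LpS 2 Ω f ^ (2 / p) * √(∫ x in Ω, h1Density f x) ^ (1 - 2 / p) :=
        LpS_two Ω f ▸ gagliardo f hf
    _ ≤ K * LpS 2 Ω f ^ (2 / p) * ((C + 1) * LpV 2 Ω (grad f)) ^ (1 - 2 / p) := by gcongr
    _ = K * (C + 1) ^ (1 - 2 / p) * LpS 2 Ω f ^ (2 / p) * LpV 2 Ω (grad f) ^ (1 - 2 / p) := by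
        rw [mul_rpow (by positivity) hLpV]
        ring

end Integral

namespace IsDefiningFunction

variable {Ω : Set V2} {φ : V2 → ℝ} (hφ : IsDefiningFunction φ Ω)
include hφ

section Orthogonality

variable {F g : V2 → ℝ}

-- `∇F · ∇^⊥g = div (F ∇^⊥g)`, and `∇^⊥g` is tangential because `g` vanishes on the boundary.
lemma integral_dot_grad_perp_grad_eq_zero (hF : ContDiff ℝ 1 F) (hg : ContDiff ℝ 2 g)
    (h0 : ∀ x ∈ frontier Ω, g x = 0) : ∫ x in Ω, dot (perp (grad g x)) (grad F x) = 0 := by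
  have hperp : ContDiff ℝ 1 fun x => perp (grad g x) :=
    contDiff_perp (MHD.contDiff_grad hg (by norm_num))
  rw [← hφ.integral_div2_eq_zero (X := fun x => F x • perp (grad g x)) (hF.smul hperp)
    fun x hx => ?_]
  · congr with x
    rw [div2_smul (hF.differentiable one_ne_zero) (hperp.differentiable one_ne_zero),
      div2_perp_grad hg, mul_zero, add_zero]
  · simpa only [dot, Pi.smul_apply, smul_eq_mul, mul_assoc, ← Finset.mul_sum, mul_zero] using
      congrArg (F x * ·) (hφ.dot_perp_grad_eq_zero (hg.of_le one_le_two) h0 hx)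

lemma integral_nsq_grad_sub_smul_perp_grad (hF : ContDiff ℝ 1 F) (hg : ContDiff ℝ 2 g)
    (h0 : ∀ x ∈ frontier Ω, g x = 0) (c : ℝ) :
    ∫ x in Ω, nsq (grad F x - c • perp (grad g x)) =
      (∫ x in Ω, nsq (grad F x)) + c ^ 2 * ∫ x in Ω, nsq (grad g x) := by
  have hg1 : ContDiff ℝ 1 g := hg.of_le one_le_two
  have hexpand (x : V2) : nsq (grad F x - c • perp (grad g x)) =
      nsq (grad F x) + (c ^ 2 * nsq (grad g x) - 2 * c * dot (perp (grad g x)) (grad F x)) := by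
    simp only [nsq, dot, perp, Fin.sum_univ_two, Pi.sub_apply, Pi.smul_apply, smul_eq_mul,
      Matrix.cons_val_zero, Matrix.cons_val_one, Matrix.cons_val_fin_one]
    ring
  have hperp : Continuous fun x => perp (grad g x) :=
    (contDiff_perp (MHD.contDiff_grad (m := 0) hg1 (by norm_num))).continuous
  have integrable {f : V2 → ℝ} (hf : Continuous f) : IntegrableOn f Ω :=
    integrableOn_of_isBounded hφ.isBounded hf
  have hg' := (integrable (continuous_nsq_grad hg1)).const_mul (c ^ 2)
  have hdot := (integrable (continuous_dot hperp (MHD.continuous_grad hF))).const_mul (2 * c)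
  have hsub : IntegrableOn
      (fun x => c ^ 2 * nsq (grad g x) - 2 * c * dot (perp (grad g x)) (grad F x)) Ω := hg'.sub hdot
  simp only [hexpand]
  rw [integral_add (integrable (continuous_nsq_grad hF)) hsub, integral_sub hg' hdot,
    integral_const_mul, integral_const_mul, hφ.integral_dot_grad_perp_grad_eq_zero hF hg h0,
    mul_zero, sub_zero]

lemma LpV_grad_le_LpV_grad_sub_smul_perp_grad (hF : ContDiff ℝ 1 F) (hg : ContDiff ℝ 2 g)
    (h0 : ∀ x ∈ frontier Ω, g x = 0) (c : ℝ) :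
    LpV 2 Ω (grad F) ≤ LpV 2 Ω fun x => grad F x - c • perp (grad g x) := by
  rw [LpV_two, LpV_two, hφ.integral_nsq_grad_sub_smul_perp_grad hF hg h0]
  have hg0 : 0 ≤ ∫ x in Ω, nsq (grad g x) := integral_nonneg fun _ => nsq_nonneg _
  exact sqrt_le_sqrt (le_add_of_nonneg_right (by positivity))

lemma abs_mul_LpV_grad_le_LpV_grad_sub_smul_perp_grad (hF : ContDiff ℝ 1 F)
    (hg : ContDiff ℝ 2 g) (h0 : ∀ x ∈ frontier Ω, g x = 0) (c : ℝ) :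
    |c| * LpV 2 Ω (grad g) ≤ LpV 2 Ω fun x => grad F x - c • perp (grad g x) := by
  rw [LpV_two, LpV_two, hφ.integral_nsq_grad_sub_smul_perp_grad hF hg h0, ← sqrt_sq_eq_abs,
    ← sqrt_mul (sq_nonneg c)]
  exact sqrt_le_sqrt (le_add_of_nonneg_left (integral_nonneg fun _ => nsq_nonneg _))

end Orthogonality

theorem exists_LpG_add_LpS_curl2_le (hconv : Convex ℝ Ω) {p : ℝ} (hp : 2 ≤ p) : ∃ C, 0 ≤ C ∧
    ∀ (w v : V2 → V2) (q : V2 → ℝ), ContDiff ℝ 1 w → ContDiff ℝ 3 v → ContDiff ℝ 2 q →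
      (∀ x ∈ Ω, w x = v x + grad q x) → (∀ x ∈ Ω, div2 v x = 0) →
      (∀ x ∈ frontier Ω, dot (v x) (grad φ x) = 0) →
      LpG p Ω v + LpS p Ω (curl2 w) ≤
        C * LpV 2 Ω (grad (curl2 w)) ^ (1 - 2 / p) * LpG 2 Ω w ^ (2 / p) + C * LpG 2 Ω w := by
  obtain ⟨C, hC, solenoidal⟩ := hφ.exists_LpG_le_of_solenoidal hconv hp
  refine ⟨6 * C, by positivity, fun w v q hw hv hq hdec hdiv ht => ?_⟩
  have hp₀ : 0 < p := by positivity
  have hs₁ : 2 / p ≤ 1 := div_le_one_of_le₀ hp hp₀.le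
  have hv1 : ContDiff ℝ 1 v := hv.of_le (by norm_num)
  have hcurl (x : V2) (hx : x ∈ Ω) : curl2 v x = curl2 w x := by
    rw [curl2_congr hφ.isOpen hdec hx, curl2_add_grad (hv1.differentiable one_ne_zero) hq]
  have hgrad (x : V2) (hx : x ∈ Ω) : grad (curl2 v) x = grad (curl2 w) x :=
    funext fun i => pd_congr hφ.isOpen hcurl i hx
  have hL := LpG_nonneg 2 Ω w
  have hQ := LpV_nonneg 2 Ω (grad (curl2 w))
  have hcurl_le : LpS 2 Ω (curl2 v) ≤ 2 * LpG 2 Ω w :=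
    LpS_congr hφ.isOpen hcurl ▸ LpS_curl2_le two_pos hφ.isBounded hw
  have hh1 := sqrt_integral_h1Density_le hφ.isBounded
    (contDiff_curl2 (m := 1) hv (by norm_num))
  rw [LpV_congr hφ.isOpen hgrad] at hh1
  have hinterp := rpow_mul_rpow_one_sub_le hQ (LpS_nonneg _ _ _) (sqrt_nonneg _)
    (by positivity) hs₁ hcurl_le (hh1.trans (by gcongr))
  rw [mul_rpow two_pos.le hL] at hinterp
  have htwo : (2 : ℝ) ^ (2 / p) ≤ 2 := rpow_le_self_of_one_le one_le_two hs₁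
  calc LpG p Ω v + LpS p Ω (curl2 w) ≤ 3 * LpG p Ω v := by
        linarith [LpS_congr (p := p) hφ.isOpen hcurl, LpS_curl2_le hp₀ hφ.isBounded hv1]
    _ ≤ 3 * (C * (2 * LpG 2 Ω w +
          2 * LpG 2 Ω w ^ (2 / p) * LpV 2 Ω (grad (curl2 w)) ^ (1 - 2 / p))) := by
        have := solenoidal v hv hdiv ht
        rw [mul_assoc] at this
        gcongr
        refine this.trans (by gcongr; exact hinterp.trans (by gcongr))
    _ = 6 * C * LpV 2 Ω (grad (curl2 w)) ^ (1 - 2 / p) * LpG 2 Ω w ^ (2 / p) +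
          6 * C * LpG 2 Ω w := by ring

end IsDefiningFunction

section Vector

variable {v : V2 → V2} {x : V2}

lemma contDiff_nsq {n : WithTop ℕ∞} (hv : ContDiff ℝ n v) : ContDiff ℝ n fun y => nsq (v y) :=
  ContDiff.sum fun i _ => (contDiff_pi.1 hv i).pow 2

lemma contDiff_div2 {m n : WithTop ℕ∞} (hv : ContDiff ℝ n v) (hmn : m + 1 ≤ n) :
    ContDiff ℝ m (div2 v) :=
  ContDiff.sum fun i _ => contDiff_pd (contDiff_pi.1 hv i) hmn i

lemma nsq_smul (c : ℝ) (a : V2) : nsq (c • a) = c ^ 2 * nsq a := by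
  simp only [nsq, Pi.smul_apply, smul_eq_mul, mul_pow, Finset.mul_sum]

lemma lap_apply (hv : ContDiff ℝ 2 v) (i : Fin 2) :
    lap (fun y => v y i) x = pd i (div2 v) x - perp (grad (curl2 v) x) i := by
  have hcomm₀ := pd_comm (contDiff_pi.1 hv 0) 0 1 x
  have hcomm₁ := pd_comm (contDiff_pi.1 hv 1) 0 1 x
  fin_cases i <;>
  · simp [lap, perp, grad, pd_div2 hv, pd_curl2 hv, hcomm₀, hcomm₁]
    try ring

lemma nsq_convect_le (w v : V2 → V2) (x : V2) :
    nsq (convect w v x) ≤ nsq (w x) * gnsq v x := by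
  simp only [nsq, gnsq, convect, dot, grad, Fin.sum_univ_two]
  nlinarith [sq_nonneg (w x 0 * pd 1 (fun y => v y 0) x - w x 1 * pd 0 (fun y => v y 0) x),
    sq_nonneg (w x 0 * pd 1 (fun y => v y 1) x - w x 1 * pd 0 (fun y => v y 1) x)]

lemma pd_nsq (hv : Differentiable ℝ v) (i : Fin 2) :
    pd i (fun y => nsq (v y)) x = 2 * ∑ k, v x k * pd i (fun y => v y k) x := by
  simp only [← dot_self, pd_dot hv hv, Fin.sum_univ_two]
  ring

lemma nsq_grad_nsq_le (hv : Differentiable ℝ v) :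
    nsq (grad (fun y => nsq (v y)) x) ≤ 2 ^ 2 * (nsq (v x) * gnsq v x) := by
  have hgrad : grad (fun y => nsq (v y)) x = fun i => 2 * ∑ k, v x k * pd i (fun y => v y k) x :=
    funext (pd_nsq hv)
  rw [hgrad]
  simp only [nsq, gnsq, Fin.sum_univ_two]
  nlinarith [sq_nonneg (v x 0 * pd 0 (fun y => v y 1) x - v x 1 * pd 0 (fun y => v y 0) x),
    sq_nonneg (v x 0 * pd 1 (fun y => v y 1) x - v x 1 * pd 1 (fun y => v y 0) x)]

lemma dot_inv_sqrt_nsq_smul_eq_zero_iff {g : V2} (hg : g ≠ 0) (w : V2) :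
    dot w ((√(nsq g))⁻¹ • g) = 0 ↔ dot w g = 0 := by
  have hsmul : dot w ((√(nsq g))⁻¹ • g) = (√(nsq g))⁻¹ * dot w g := by
    simp only [dot, Pi.smul_apply, smul_eq_mul, Fin.sum_univ_two]
    ring
  rw [hsmul, mul_eq_zero_iff_left (inv_ne_zero (sqrt_pos.2 (nsq_pos hg)).ne')]

end Vector

section Norm

variable {Ω : Set V2} {p : ℝ} {v w m : V2 → V2}

lemma LpV_le_add_of_eq_add (hp : 1 ≤ p) (hΩ : IsOpen Ω) (hbdd : IsBounded Ω) (hv : Continuous v)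
    (hw : Continuous w) (h : ∀ x ∈ Ω, m x = v x + w x) :
    LpV p Ω v ≤ LpV p Ω m + LpV p Ω w := by
  rw [LpV_congr hΩ h]
  simpa only [Pi.add_apply, add_sub_cancel_right] using LpV_sub_le hp hbdd (hv.fun_add hw) hw

lemma LpV_neg (p : ℝ) (Ω : Set V2) (v : V2 → V2) : LpV p Ω (-v) = LpV p Ω v := by
  simp only [LpV, nsq, Pi.neg_apply, neg_sq]

lemma LpV_convect_le (hp : 0 < p) (hΩ : IsBounded Ω) (hw : Continuous w) (hv : ContDiff ℝ 1 v) :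
    LpV p Ω (convect w v) ≤ LpS p Ω fun x => √(nsq (w x)) * √(gnsq v x) := by
  have hconvect : Continuous (convect w v) :=
    (contDiff_convect (m := 0) (contDiff_zero.2 hw) hv (by norm_num)).continuous
  rw [LpV_eq_LpS]
  refine LpS_mono hp hΩ (continuous_nsq hconvect).sqrt
    ((continuous_nsq hw).sqrt.mul (continuous_gnsq hv).sqrt) fun x => ?_
  rw [abs_of_nonneg (sqrt_nonneg _), ← sqrt_mul (nsq_nonneg _)]
  exact sqrt_le_sqrt (nsq_convect_le w v x)

lemma LpV_half_smul_grad_nsq_le (hp : 0 < p) (hΩ : IsBounded Ω) (hv : ContDiff ℝ 1 v) :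
    LpV p Ω ((1 / 2 : ℝ) • grad fun y => nsq (v y)) ≤
      LpS p Ω fun x => √(nsq (v x)) * √(gnsq v x) := by
  rw [LpV_eq_LpS]
  have hgrad := (continuous_grad (contDiff_nsq hv)).const_smul (1 / 2 : ℝ)
  refine LpS_mono hp hΩ (continuous_nsq hgrad).sqrt
    ((continuous_nsq hv.continuous).sqrt.mul (continuous_gnsq hv).sqrt) fun x => ?_
  rw [abs_of_nonneg (sqrt_nonneg _), ← sqrt_mul (nsq_nonneg _)]
  refine sqrt_le_sqrt ?_
  rw [Pi.smul_apply, nsq_smul]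
  linarith [nsq_grad_nsq_le (x := x) (hv.differentiable one_ne_zero)]

end Norm

section Slice

variable {f : ℝ → V2 → ℝ} {u : ℝ → V2 → V2}

lemma Smooth2.contDiff (hf : Smooth2 f) (t : ℝ) : ContDiff ℝ ∞ (f t) :=
  ContDiff.comp (g := fun z : ℝ × V2 => f z.1 z.2) hf (contDiff_prodMk_right t)

lemma Smooth2.differentiableAt_time (hf : Smooth2 f) (t : ℝ) (x : V2) :
    DifferentiableAt ℝ (fun s => f s x) t :=
  (ContDiff.comp (g := fun z : ℝ × V2 => f z.1 z.2) hf (contDiff_prodMk_left x)).differentiable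
    (by simp) t

lemma Smooth2V.contDiff (hu : Smooth2V u) (t : ℝ) : ContDiff ℝ ∞ (u t) :=
  contDiff_pi.2 fun i => (hu i).contDiff t

end Slice

section Flux

variable {Ω : Set V2} {a γ μ lam t : ℝ} {ρ : ℝ → V2 → ℝ} {u B : ℝ → V2 → V2} {x : V2}

lemma contDiff_const_mul_rpow (hγ : 1 ≤ γ) {r : V2 → ℝ} (hr : ContDiff ℝ 1 r) (a : ℝ) :
    ContDiff ℝ 1 fun x => a * r x ^ γ :=
  contDiff_const.mul ((contDiff_rpow_const_of_le (n := 1) (by exact_mod_cast hγ)).comp hr)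

/-- The effective viscous flux `(2μ+λ) div u − (P − P̄)` of the fluid alone, without the magnetic
pressure. Unlike `Fflux` it has mean zero, so that the Poincaré inequality applies to it. -/
def fluidFlux (Ω : Set V2) (a γ μ lam : ℝ) (ρ : ℝ → V2 → ℝ) (u : ℝ → V2 → V2) (t : ℝ)
    (x : V2) : ℝ :=
  (2 * μ + lam) * div2 (u t) x - (a * ρ t x ^ γ - Pbar Ω a γ ρ t)

lemma contDiff_fluidFlux (hγ : 1 ≤ γ) (hρ : ContDiff ℝ 1 (ρ t)) (hu : ContDiff ℝ 2 (u t)) :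
    ContDiff ℝ 1 (fluidFlux Ω a γ μ lam ρ u t) :=
  (contDiff_const.mul (contDiff_div2 hu (by norm_num))).sub
    ((contDiff_const_mul_rpow hγ hρ a).sub contDiff_const)

lemma pd_fluidFlux (hγ : 1 ≤ γ) (hρ : ContDiff ℝ 1 (ρ t)) (hu : ContDiff ℝ 2 (u t)) (i : Fin 2) :
    pd i (fluidFlux Ω a γ μ lam ρ u t) x =
      (2 * μ + lam) * pd i (div2 (u t)) x - pd i (fun y => a * ρ t y ^ γ) x := by
  have hpress := (contDiff_const_mul_rpow hγ hρ a).differentiable one_ne_zero x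
  have hdiv := (contDiff_div2 (m := 1) hu (by norm_num)).differentiable one_ne_zero x
  have hexpand : pd i (fluidFlux Ω a γ μ lam ρ u t) x = _ :=
    pd_sub i (hdiv.const_mul _) (hpress.sub_const _)
  rw [hexpand, pd_mul i (differentiableAt_const _) hdiv,
    pd_sub i hpress (differentiableAt_const _), pd_const, pd_const]
  ring

lemma Fflux_eq (Ω : Set V2) (a γ μ lam : ℝ) (ρ : ℝ → V2 → ℝ) (u B : ℝ → V2 → V2) (t : ℝ) :
    Fflux Ω a γ μ lam ρ u B t =
      fun x => fluidFlux Ω a γ μ lam ρ u t x - 1 / 2 * nsq (B t x) := by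
  ext x
  simp only [Fflux, fluidFlux]
  ring

lemma contDiff_Fflux (hγ : 1 ≤ γ) (hρ : ContDiff ℝ 1 (ρ t)) (hu : ContDiff ℝ 2 (u t))
    (hB : ContDiff ℝ 1 (B t)) : ContDiff ℝ 1 (Fflux Ω a γ μ lam ρ u B t) :=
  Fflux_eq Ω a γ μ lam ρ u B t ▸
    (contDiff_fluidFlux hγ hρ hu).sub (contDiff_const.mul (contDiff_nsq hB))

lemma grad_Fflux (hγ : 1 ≤ γ) (hρ : ContDiff ℝ 1 (ρ t)) (hu : ContDiff ℝ 2 (u t))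
    (hB : ContDiff ℝ 1 (B t)) : grad (Fflux Ω a γ μ lam ρ u B t) x =
      grad (fluidFlux Ω a γ μ lam ρ u t) x - (1 / 2 : ℝ) • grad (fun y => nsq (B t y)) x := by
  ext i
  have hnsq := (contDiff_nsq hB).differentiable one_ne_zero x
  have hflux := (contDiff_fluidFlux (Ω := Ω) (a := a) (μ := μ) (lam := lam) hγ hρ hu).differentiable
    one_ne_zero x
  rw [grad, Fflux_eq, pd_sub i hflux (hnsq.const_mul _), pd_mul i (differentiableAt_const _) hnsq,
    pd_const]
  simp [grad]

lemma LpS_Fflux_le {p : ℝ} (hp : 1 ≤ p) (hΩ : IsBounded Ω) (hγ : 1 ≤ γ)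
    (hρ : ContDiff ℝ 1 (ρ t)) (hu : ContDiff ℝ 2 (u t)) (hB : Continuous (B t)) :
    LpS p Ω (Fflux Ω a γ μ lam ρ u B t) ≤
      LpS p Ω (fluidFlux Ω a γ μ lam ρ u t) + 1 / 2 * LpV (2 * p) Ω (B t) ^ 2 := by
  have hp₀ : 0 < p := by positivity
  have hnsq := continuous_nsq hB
  rw [Fflux_eq, ← LpS_nsq hp₀, ← abs_of_pos (one_half_pos (α := ℝ)),
    ← LpS_const_mul hp₀ Ω _ hnsq, abs_of_pos one_half_pos]
  exact LpS_sub_le hp hΩ (contDiff_fluidFlux hγ hρ hu).continuous (hnsq.const_mul _)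

lemma LpS_fluidFlux_le {p : ℝ} (hp : 1 ≤ p) (hΩ : IsBounded Ω) (hγ : 1 ≤ γ)
    (hρ : ContDiff ℝ 1 (ρ t)) (hu : ContDiff ℝ 2 (u t)) :
    LpS p Ω (fluidFlux Ω a γ μ lam ρ u t) ≤ |2 * μ + lam| * LpS p Ω (div2 (u t)) +
      LpS p Ω fun x => a * ρ t x ^ γ - Pbar Ω a γ ρ t := by
  have hdiv : Continuous (div2 (u t)) := continuous_div2 (hu.of_le one_le_two)
  rw [← LpS_const_mul (by positivity) Ω _ hdiv]
  exact LpS_sub_le hp hΩ (hdiv.const_mul _)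
    ((contDiff_const_mul_rpow hγ hρ a).continuous.sub continuous_const)

end Flux

-- `u̇` arises from the conservative form because the mass equation kills the multiple of `u`.
lemma dt_mul_add_sum_pd {ρ : ℝ → V2 → ℝ} {u : ℝ → V2 → V2} (hρ : Smooth2 ρ) (hu : Smooth2V u)
    (t : ℝ) (x : V2) (i : Fin 2) :
    dt (fun s y => ρ s y * u s y i) t x + ∑ j, pd j (fun y => ρ t y * u t y i * u t y j) x =
      ρ t x * matD u t x i + u t x i * (dt ρ t x + div2 (fun y j => ρ t y * u t y j) x) := by
  have hdt : dt (fun s y => ρ s y * u s y i) t x =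
      dt ρ t x * u t x i + ρ t x * dt (fun s y => u s y i) t x :=
    deriv_fun_mul (hρ.differentiableAt_time t x) ((hu i).differentiableAt_time t x)
  have hui (k : Fin 2) : DifferentiableAt ℝ (fun y => u t y k) x :=
    ((hu k).contDiff t).differentiable (by simp) x
  have hρx : DifferentiableAt ℝ (ρ t) x := (hρ.contDiff t).differentiable (by simp) x
  have hpd (j : Fin 2) : pd j (fun y => ρ t y * u t y i * u t y j) x =
      pd j (fun y => u t y i) x * (ρ t x * u t x j) +
        u t x i * pd j (fun y => ρ t y * u t y j) x := by
    rw [← pd_mul j (hui i) (hρx.fun_mul (hui j))]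
    congr 1 with y
    ring
  simp only [hdt, hpd, matD, div2, dot, grad, Fin.sum_univ_two]
  ring

lemma integral_sub_avg {Ω : Set V2} (hΩ : IsBounded Ω) (f : V2 → ℝ) :
    ∫ x in Ω, (f x - avg Ω f) = 0 := by
  have : IsFiniteMeasure (volume.restrict Ω) :=
    isFiniteMeasure_restrict.2 hΩ.measure_lt_top.ne
  have havg : avg Ω f = ⨍ x in Ω, f x := by
    rw [setAverage_eq, smul_eq_mul, avg, div_eq_inv_mul, measureReal_def]
  rw [havg]
  exact integral_sub_average _ _

/-- A smooth barotropic flow `(ρ, u)` which at time `t` satisfies the mass and momentum balance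
and the Navier-slip condition with conormal `n`. It is driven by the Lorentz force of a field `B`
that is subject to no equation of its own. -/
structure IsSlipFlowAt (Ω : Set V2) (n : V2 → V2) (a γ μ lam : ℝ) (ρ : ℝ → V2 → ℝ)
    (u B : ℝ → V2 → V2) (t : ℝ) : Prop where
  smooth_density : Smooth2 ρ
  smooth_velocity : Smooth2V u
  smooth_field : Smooth2V B
  mass : ∀ x ∈ Ω, dt ρ t x + div2 (fun y j => ρ t y * u t y j) x = 0
  momentum : ∀ x ∈ Ω, ∀ i,
    dt (fun s y => ρ s y * u s y i) t x
      + (∑ j, pd j (fun y => ρ t y * u t y i * u t y j) x)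
      + pd i (fun y => a * ρ t y ^ γ) x
    = μ * lap (fun y => u t y i) x
      + (μ + lam) * pd i (div2 (u t)) x
      + convect (B t) (B t) x i
      - pd i (fun y => nsq (B t y)) x / 2
  slip : ∀ x ∈ frontier Ω, dot (u t x) (n x) = 0 ∧ curl2 (u t) x = 0

namespace IsSlipFlowAt

variable {Ω : Set V2} {n m : V2 → V2} {φ : V2 → ℝ} {a γ μ lam t : ℝ} {ρ : ℝ → V2 → ℝ}
  {u B : ℝ → V2 → V2}

lemma congr_normal (h : IsSlipFlowAt Ω n a γ μ lam ρ u B t)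
    (hnm : ∀ x ∈ frontier Ω, ∀ w, dot w (n x) = 0 ↔ dot w (m x) = 0) :
    IsSlipFlowAt Ω m a γ μ lam ρ u B t :=
  { h with slip := fun x hx => (h.slip x hx).imp_left (hnm x hx _).1 }

section Smooth

variable (h : IsSlipFlowAt Ω n a γ μ lam ρ u B t)
include h

lemma contDiff_density : ContDiff ℝ 1 (ρ t) :=
  (h.smooth_density.contDiff t).of_le ENat.LEInfty.out

lemma contDiff_velocity : ContDiff ℝ 3 (u t) :=
  (h.smooth_velocity.contDiff t).of_le ENat.LEInfty.out

lemma contDiff_two_velocity : ContDiff ℝ 2 (u t) :=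
  (h.smooth_velocity.contDiff t).of_le ENat.LEInfty.out

lemma contDiff_field : ContDiff ℝ 1 (B t) :=
  (h.smooth_field.contDiff t).of_le ENat.LEInfty.out

lemma contDiff_curl2_velocity : ContDiff ℝ 2 (curl2 (u t)) :=
  contDiff_curl2 h.contDiff_velocity (by norm_num)

lemma contDiff_fluidFlux (hγ : 1 ≤ γ) : ContDiff ℝ 1 (fluidFlux Ω a γ μ lam ρ u t) :=
  MHD.contDiff_fluidFlux hγ h.contDiff_density h.contDiff_two_velocity

lemma contDiff_Fflux (hγ : 1 ≤ γ) : ContDiff ℝ 1 (Fflux Ω a γ μ lam ρ u B t) :=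
  MHD.contDiff_Fflux hγ h.contDiff_density h.contDiff_two_velocity h.contDiff_field

lemma mul_matD_eq (hγ : 1 ≤ γ) {x : V2} (hx : x ∈ Ω) :
    (fun k => ρ t x * matD u t x k) = grad (Fflux Ω a γ μ lam ρ u B t) x -
      μ • perp (grad (curl2 (u t)) x) + convect (B t) (B t) x := by
  rw [grad_Fflux hγ h.contDiff_density h.contDiff_two_velocity h.contDiff_field]
  ext i
  have hmom := h.momentum x hx i
  rw [dt_mul_add_sum_pd h.smooth_density h.smooth_velocity, h.mass x hx,
    lap_apply h.contDiff_two_velocity] at hmom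
  simp only [Pi.add_apply, Pi.sub_apply, Pi.smul_apply, smul_eq_mul, grad,
    pd_fluidFlux hγ h.contDiff_density h.contDiff_two_velocity] at hmom ⊢
  linear_combination hmom

end Smooth

variable (h : IsSlipFlowAt Ω (grad φ) a γ μ lam ρ u B t) (hφ : IsDefiningFunction φ Ω)
include h hφ

lemma integral_fluidFlux_eq_zero (hγ : 1 ≤ γ) : ∫ x in Ω, fluidFlux Ω a γ μ lam ρ u t x = 0 := by
  have hpress := (contDiff_const_mul_rpow hγ h.contDiff_density a).continuous
  have hut := h.contDiff_velocity.of_le (m := 1) (by norm_num)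
  have hdiv := hφ.integral_div2_eq_zero hut fun x hx => (h.slip x hx).1
  simp only [fluidFlux]
  rw [integral_sub, integral_const_mul, hdiv, mul_zero, zero_sub, neg_eq_zero]
  · exact integral_sub_avg hφ.isBounded fun x => a * ρ t x ^ γ
  · exact integrableOn_of_isBounded hφ.isBounded ((continuous_div2 hut).const_mul _)
  · exact integrableOn_of_isBounded hφ.isBounded (hpress.sub continuous_const)

-- In `∇F - μ ∇^⊥ω = ρ u̇ - B·∇B` the two terms on the left are orthogonal in `L²`.
lemma LpV_sub_smul_perp_grad_curl2_le (hγ : 1 ≤ γ) :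
    LpV 2 Ω (fun x => grad (Fflux Ω a γ μ lam ρ u B t) x - μ • perp (grad (curl2 (u t)) x)) ≤
      LpV 2 Ω (fun x k => ρ t x * matD u t x k) + LpV 2 Ω (convect (B t) (B t)) := by
  have hperp : ContDiff ℝ 1 fun x => perp (grad (curl2 (u t)) x) :=
    contDiff_perp (contDiff_grad h.contDiff_curl2_velocity (by norm_num))
  have hconvect : ContDiff ℝ 0 (convect (B t) (B t)) :=
    contDiff_convect (h.contDiff_field.of_le zero_le_one) h.contDiff_field (by norm_num)
  exact LpV_le_add_of_eq_add one_le_two hφ.isOpen hφ.isBounded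
    ((continuous_grad (h.contDiff_Fflux hγ)).sub (hperp.continuous.const_smul μ))
    hconvect.continuous fun x hx => h.mul_matD_eq hγ hx

lemma abs_mul_LpV_grad_curl2_le (hγ : 1 ≤ γ) : |μ| * LpV 2 Ω (grad (curl2 (u t))) ≤
    LpV 2 Ω (fun x k => ρ t x * matD u t x k) + LpV 2 Ω (convect (B t) (B t)) :=
  (hφ.abs_mul_LpV_grad_le_LpV_grad_sub_smul_perp_grad (h.contDiff_Fflux hγ)
    h.contDiff_curl2_velocity (fun x hx => (h.slip x hx).2) μ).trans
    (h.LpV_sub_smul_perp_grad_curl2_le hφ hγ)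

lemma LpV_grad_Fflux_le (hγ : 1 ≤ γ) : LpV 2 Ω (grad (Fflux Ω a γ μ lam ρ u B t)) ≤
    LpV 2 Ω (fun x k => ρ t x * matD u t x k) +
      LpS 2 Ω fun x => √(nsq (B t x)) * √(gnsq (B t) x) := by
  refine (hφ.LpV_grad_le_LpV_grad_sub_smul_perp_grad (h.contDiff_Fflux hγ)
    h.contDiff_curl2_velocity (fun x hx => (h.slip x hx).2) μ).trans ?_
  linarith [h.LpV_sub_smul_perp_grad_curl2_le hφ hγ,
    LpV_convect_le two_pos hφ.isBounded h.contDiff_field.continuous h.contDiff_field]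

lemma LpV_grad_fluidFlux_le (hγ : 1 ≤ γ) : LpV 2 Ω (grad (fluidFlux Ω a γ μ lam ρ u t)) ≤
    LpV 2 Ω (fun x k => ρ t x * matD u t x k) +
      2 * LpS 2 Ω fun x => √(nsq (B t x)) * √(gnsq (B t) x) := by
  have hle := LpV_le_add_of_eq_add (m := grad (Fflux Ω a γ μ lam ρ u B t)) one_le_two hφ.isOpen
    hφ.isBounded (continuous_grad (h.contDiff_fluidFlux hγ))
    ((continuous_grad (contDiff_nsq h.contDiff_field)).const_smul (1 / 2 : ℝ)).neg
    fun x _ => (grad_Fflux hγ h.contDiff_density h.contDiff_two_velocity h.contDiff_field).trans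
      (sub_eq_add_neg _ _)
  rw [LpV_neg] at hle
  linarith [LpV_half_smul_grad_nsq_le two_pos hφ.isBounded h.contDiff_field,
    h.LpV_grad_Fflux_le hφ hγ]

end IsSlipFlowAt

section Estimates

variable {Ω : Set V2} {n : V2 → V2} {φ : V2 → ℝ} {p μ : ℝ}

lemma IsMHDSol.isSlipFlowAt {a γ lam ν t : ℝ} {I : Set ℝ} {ρ : ℝ → V2 → ℝ} {u B : ℝ → V2 → V2}
    (h : IsMHDSol Ω n a γ μ lam ν I ρ u B) (hρ : Smooth2 ρ) (hu : Smooth2V u) (hB : Smooth2V B)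
    (ht : t ∈ I) : IsSlipFlowAt Ω n a γ μ lam ρ u B t :=
  ⟨hρ, hu, hB, h.mass t ht, h.momentum t ht, h.slipU t ht⟩

lemma SmoothDomain.exists_isDefiningFunction (hΩ : SmoothDomain Ω n) :
    ∃ φ, IsDefiningFunction φ Ω ∧
      ∀ x ∈ frontier Ω, ∀ w, dot w (n x) = 0 ↔ dot w (grad φ x) = 0 := by
  obtain ⟨φ, hsmooth, hneg, hfrontier, hgrad, hn⟩ := hΩ.defining
  refine ⟨φ, ⟨hΩ.bounded, hsmooth, hneg, hfrontier, hgrad⟩, fun x hx w => ?_⟩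
  rw [hn x hx, dot_inv_sqrt_nsq_smul_eq_zero_iff (hgrad x hx)]

namespace IsDefiningFunction

variable (hφ : IsDefiningFunction φ Ω) (hconv : Convex ℝ Ω)
include hφ hconv

theorem exists_LpG_solenoidal_add_LpS_curl2_le (hμ : μ ≠ 0) (hp : 2 ≤ p) : ∃ C : ℝ, 0 ≤ C ∧
    ∀ (a γ lam t : ℝ) (ρ : ℝ → V2 → ℝ) (u B : ℝ → V2 → V2), 1 ≤ γ →
      IsSlipFlowAt Ω (grad φ) a γ μ lam ρ u B t →
      ∀ (v : V2 → V2) (q : V2 → ℝ), ContDiff ℝ 3 v → ContDiff ℝ 2 q →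
        (∀ x ∈ Ω, u t x = v x + grad q x) → (∀ x ∈ Ω, div2 v x = 0) →
        (∀ x ∈ frontier Ω, dot (v x) (grad φ x) = 0) →
        LpG p Ω v + LpS p Ω (curl2 (u t)) ≤
          C * (LpV 2 Ω (fun x k => ρ t x * matD u t x k) + LpV 2 Ω (convect (B t) (B t)))
              ^ (1 - 2 / p) * LpG 2 Ω (u t) ^ (2 / p)
            + C * LpG 2 Ω (u t) := by
  obtain ⟨C, hC, projection⟩ := hφ.exists_LpG_add_LpS_curl2_le hconv hp
  refine ⟨C * (1 + |μ|⁻¹ ^ (1 - 2 / p)), by positivity,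
    fun a γ lam t ρ u B hγ h v q hv hq hdec hdiv ht => ?_⟩
  have hexp : 0 ≤ 1 - 2 / p := sub_nonneg.2 (div_le_one_of_le₀ hp (by positivity))
  have hcurl := h.abs_mul_LpV_grad_curl2_le hφ hγ
  set G := LpG 2 Ω (u t)
  set S := LpV 2 Ω (fun x k => ρ t x * matD u t x k) + LpV 2 Ω (convect (B t) (B t))
  have hG : 0 ≤ G := LpG_nonneg _ _ _
  have hS : 0 ≤ S := add_nonneg (LpV_nonneg _ _ _) (LpV_nonneg _ _ _)
  have hω : 0 ≤ LpV 2 Ω (grad (curl2 (u t))) := LpV_nonneg _ _ _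
  have hM : 0 ≤ |μ|⁻¹ ^ (1 - 2 / p) := by positivity
  calc LpG p Ω v + LpS p Ω (curl2 (u t))
      ≤ C * LpV 2 Ω (grad (curl2 (u t))) ^ (1 - 2 / p) * G ^ (2 / p) + C * G :=
        projection (u t) v q (h.contDiff_velocity.of_le (by norm_num)) hv hq hdec hdiv ht
    _ ≤ C * (|μ|⁻¹ * S) ^ (1 - 2 / p) * G ^ (2 / p) + C * G := by
        gcongr
        exact (le_inv_mul_iff₀ (abs_pos.2 hμ)).2 hcurl
    _ = C * |μ|⁻¹ ^ (1 - 2 / p) * S ^ (1 - 2 / p) * G ^ (2 / p) + C * 1 * G := by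
        rw [mul_rpow (by positivity) hS]
        ring
    _ ≤ _ := by gcongr <;> linarith

theorem exists_LpS_two_Fflux_add_LpV_grad_Fflux_le : ∃ C : ℝ, 0 ≤ C ∧
    ∀ (a γ μ lam t : ℝ) (ρ : ℝ → V2 → ℝ) (u B : ℝ → V2 → V2), 1 ≤ γ →
      IsSlipFlowAt Ω (grad φ) a γ μ lam ρ u B t →
      LpS 2 Ω (Fflux Ω a γ μ lam ρ u B t) + LpV 2 Ω (grad (Fflux Ω a γ μ lam ρ u B t)) ≤
        C * (LpV 2 Ω (fun x k => ρ t x * matD u t x k) +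
          LpS 2 Ω (fun x => √(nsq (B t x)) * √(gnsq (B t) x)) + LpV 4 Ω (B t) ^ 2) := by
  obtain ⟨C, hC, poincare⟩ :=
    exists_LpS_two_le_of_integral_eq_zero hφ.isOpen hφ.isBounded hconv
  refine ⟨2 * C + 1, by positivity, fun a γ μ lam t ρ u B hγ h => ?_⟩
  have hF := LpS_Fflux_le (a := a) (μ := μ) (lam := lam) one_le_two hφ.isBounded hγ
    h.contDiff_density h.contDiff_two_velocity h.contDiff_field.continuous
  have hfluid := (poincare _ (h.contDiff_fluidFlux hγ) (h.integral_fluidFlux_eq_zero hφ hγ)).trans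
    (mul_le_mul_of_nonneg_left (h.LpV_grad_fluidFlux_le hφ hγ) hC)
  have hgrad := h.LpV_grad_Fflux_le hφ hγ
  have hA := mul_nonneg hC (LpV_nonneg 2 Ω fun x k => ρ t x * matD u t x k)
  have hD : 0 ≤ C * LpV 4 Ω (B t) ^ 2 := by positivity
  rw [show (2 * 2 : ℝ) = 4 by norm_num] at hF
  linarith [sq_nonneg (LpV 4 Ω (B t))]

theorem exists_LpS_Fflux_le (hp : 2 ≤ p) : ∃ C : ℝ, 0 ≤ C ∧
    ∀ (a γ μ lam t : ℝ) (ρ : ℝ → V2 → ℝ) (u B : ℝ → V2 → V2), 1 ≤ γ →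
      IsSlipFlowAt Ω (grad φ) a γ μ lam ρ u B t →
      LpS p Ω (Fflux Ω a γ μ lam ρ u B t) ≤
        C * (|2 * μ + lam| * LpS 2 Ω (div2 (u t)) +
            LpS 2 Ω (fun x => a * ρ t x ^ γ - Pbar Ω a γ ρ t)) ^ (2 / p) *
          (LpV 2 Ω (fun x k => ρ t x * matD u t x k) +
            LpS 2 Ω (fun x => √(nsq (B t x)) * √(gnsq (B t) x))) ^ (1 - 2 / p)
          + C * LpV (2 * p) Ω (B t) ^ 2 := by
  obtain ⟨C, hC, gagliardo⟩ :=
    exists_LpS_le_of_integral_eq_zero hφ.isOpen hφ.isBounded hconv hp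
  refine ⟨C * 2 ^ (1 - 2 / p) + 1, by positivity, fun a γ μ lam t ρ u B hγ h => ?_⟩
  have hexp : 0 ≤ 1 - 2 / p := sub_nonneg.2 (div_le_one_of_le₀ hp (by positivity))
  have hX := LpS_fluidFlux_le (a := a) (μ := μ) (lam := lam) one_le_two hφ.isBounded hγ
    h.contDiff_density h.contDiff_two_velocity
  have hA := LpV_nonneg 2 Ω fun x k => ρ t x * matD u t x k
  have hY := h.LpV_grad_fluidFlux_le hφ hγ
  have hN := LpS_nonneg 2 Ω fun x => √(nsq (B t x)) * √(gnsq (B t) x)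
  set X := |2 * μ + lam| * LpS 2 Ω (div2 (u t)) +
    LpS 2 Ω fun x => a * ρ t x ^ γ - Pbar Ω a γ ρ t
  set E := LpV 2 Ω (fun x k => ρ t x * matD u t x k) +
    LpS 2 Ω fun x => √(nsq (B t x)) * √(gnsq (B t) x)
  have hf₀ := LpS_nonneg 2 Ω (fluidFlux Ω a γ μ lam ρ u t)
  have hg₀ := LpV_nonneg 2 Ω (grad (fluidFlux Ω a γ μ lam ρ u t))
  have hX₀ : 0 ≤ X := hf₀.trans hX
  calc LpS p Ω (Fflux Ω a γ μ lam ρ u B t)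
      ≤ LpS p Ω (fluidFlux Ω a γ μ lam ρ u t) + 1 / 2 * LpV (2 * p) Ω (B t) ^ 2 :=
        LpS_Fflux_le (one_le_two.trans hp) hφ.isBounded hγ h.contDiff_density
          h.contDiff_two_velocity h.contDiff_field.continuous
    _ ≤ C * X ^ (2 / p) * (2 * E) ^ (1 - 2 / p) + 1 / 2 * LpV (2 * p) Ω (B t) ^ 2 := by
        grw [gagliardo _ (h.contDiff_fluidFlux hγ) (h.integral_fluidFlux_eq_zero hφ hγ)]
        gcongr
        linarith
    _ = C * 2 ^ (1 - 2 / p) * X ^ (2 / p) * E ^ (1 - 2 / p) +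
          1 / 2 * LpV (2 * p) Ω (B t) ^ 2 := by
        rw [mul_rpow two_pos.le (by positivity)]
        ring
    _ ≤ _ := by
        have : 0 ≤ C * 2 ^ (1 - 2 / p) := by positivity
        gcongr <;> linarith

end IsDefiningFunction

theorem stmt_9_general (hΩ : SmoothDomain Ω n) (hconv : Convex ℝ Ω) (hμ : μ ≠ 0) (hp : 2 ≤ p) :
    ∃ C > (0 : ℝ), ∀ (a γ lam t : ℝ) (ρ : ℝ → V2 → ℝ) (u B : ℝ → V2 → V2),
      1 ≤ γ → 0 ≤ 2 * μ + lam → IsSlipFlowAt Ω n a γ μ lam ρ u B t →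
      (∀ (v : V2 → V2) (q : V2 → ℝ), ContDiff ℝ 3 v → ContDiff ℝ 2 q →
        (∀ x ∈ Ω, u t x = v x + grad q x) → (∀ x ∈ Ω, div2 v x = 0) →
        (∀ x ∈ frontier Ω, dot (v x) (n x) = 0) →
        LpG p Ω v + LpS p Ω (curl2 (u t)) ≤
          C * (LpV 2 Ω (fun x k => ρ t x * matD u t x k) + LpV 2 Ω (convect (B t) (B t)))
              ^ (1 - 2 / p) * LpG 2 Ω (u t) ^ (2 / p)
            + C * LpG 2 Ω (u t)) ∧
      LpS 2 Ω (Fflux Ω a γ μ lam ρ u B t) + LpV 2 Ω (grad (Fflux Ω a γ μ lam ρ u B t)) ≤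
        C * (LpV 2 Ω (fun x k => ρ t x * matD u t x k) + LpG 2 Ω (u t) +
          LpS 2 Ω (fun x => √(nsq (B t x)) * √(gnsq (B t) x)) + LpV 4 Ω (B t) ^ 2) ∧
      LpS p Ω (Fflux Ω a γ μ lam ρ u B t) ≤
        C * ((2 * μ + lam) * LpS 2 Ω (div2 (u t)) +
            LpS 2 Ω (fun x => a * ρ t x ^ γ - Pbar Ω a γ ρ t)) ^ (2 / p) *
          (LpV 2 Ω (fun x k => ρ t x * matD u t x k) + LpG 2 Ω (u t) +
            LpS 2 Ω (fun x => √(nsq (B t x)) * √(gnsq (B t) x))) ^ (1 - 2 / p)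
          + C * LpV (2 * p) Ω (B t) ^ 2 := by
  obtain ⟨φ, hφ, hn⟩ := hΩ.exists_isDefiningFunction
  obtain ⟨C₁, hC₁, projection⟩ := hφ.exists_LpG_solenoidal_add_LpS_curl2_le hconv hμ hp
  obtain ⟨C₂, hC₂, flux_h1⟩ := hφ.exists_LpS_two_Fflux_add_LpV_grad_Fflux_le hconv
  obtain ⟨C₃, hC₃, flux_lp⟩ := hφ.exists_LpS_Fflux_le hconv hp
  refine ⟨1 + C₁ + C₂ + C₃, by positivity, fun a γ lam t ρ u B hγ hlam hflow => ?_⟩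
  have h := hflow.congr_normal hn
  have hexp : 0 ≤ 1 - 2 / p := sub_nonneg.2 (div_le_one_of_le₀ hp (by positivity))
  have hG := LpG_nonneg 2 Ω (u t)
  have hA := LpV_nonneg 2 Ω fun x k => ρ t x * matD u t x k
  have hS := LpV_nonneg 2 Ω (convect (B t) (B t))
  have hN := LpS_nonneg 2 Ω fun x => √(nsq (B t x)) * √(gnsq (B t) x)
  have hdiv := LpS_nonneg 2 Ω (div2 (u t))
  have hpress := LpS_nonneg 2 Ω fun x => a * ρ t x ^ γ - Pbar Ω a γ ρ t
  refine ⟨fun v q hv hq hdec hsol htan => ?_, ?_, ?_⟩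
  · grw [projection a γ lam t ρ u B hγ h v q hv hq hdec hsol fun x hx => (hn x hx _).1 (htan x hx)]
    gcongr <;> linarith
  · grw [flux_h1 a γ μ lam t ρ u B hγ h]
    gcongr <;> linarith
  · grw [flux_lp a γ μ lam t ρ u B hγ h]
    rw [abs_of_nonneg hlam]
    gcongr <;> linarith

end Estimates

/-- Lemma 2.7, estimates (2.5)–(2.7).
For smooth solutions of compressible MHD with Navier-slip boundary conditions and
`2 ≤ p < ∞`, with `C = C(p, μ, Ω)`:
(i) `‖∇𝒫u‖_{L^p} + ‖ω‖_{L^p} ≤ C(‖ρu̇‖_{L²}+‖B·∇B‖_{L²})^{1−2/p}‖∇u‖_{L²}^{2/p} + C‖∇u‖_{L²}`;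
(ii) `‖F‖_{H¹} ≤ C(‖ρu̇‖_{L²}+‖∇u‖_{L²}+‖|B||∇B|‖_{L²}+‖B‖²_{L⁴})`;
(iii) `‖F‖_{L^p} ≤ C[(2μ+λ)‖div u‖_{L²}+‖P−P̄‖_{L²}]^{2/p}
        (‖ρu̇‖_{L²}+‖∇u‖_{L²}+‖|B||∇B|‖_{L²})^{1−2/p} + C‖B‖²_{L^{2p}}`,
`𝒫u` being expressed through a Helmholtz decomposition `u = v + ∇q`. -/
theorem stmt_9
    (Ω : Set V2) (n : V2 → V2) (hΩ : SmoothDomain Ω n) (hconv : Convex ℝ Ω)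
    (μ : ℝ) (hμ : 0 < μ) (p : ℝ) (hp : 2 ≤ p) :
    ∃ C > (0:ℝ), ∀ (a γ lam ν T : ℝ) (ρ : ℝ → V2 → ℝ) (u B : ℝ → V2 → V2),
      0 < a → 1 < γ → 0 ≤ μ + lam → 0 < ν → 0 < T →
      Smooth2 ρ → Smooth2V u → Smooth2V B →
      IsMHDSol Ω n a γ μ lam ν (Ioc 0 T) ρ u B →
      ∀ t ∈ Ioc 0 T,
        (∀ (v : V2 → V2) (q : V2 → ℝ),
          (∀ i, ContDiff ℝ (⊤ : ℕ∞) fun y => v y i) → ContDiff ℝ (⊤ : ℕ∞) q →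
          (∀ x ∈ Ω, u t x = v x + grad q x) →
          (∀ x ∈ Ω, div2 v x = 0) →
          (∀ x ∈ frontier Ω, dot (v x) (n x) = 0) →
          LpG p Ω v + LpS p Ω (curl2 (u t))
            ≤ C * (LpV 2 Ω (fun x k => ρ t x * matD u t x k)
                  + LpV 2 Ω (fun x k => dot (B t x) (grad (fun y => B t y k) x)))
                    ^ (1 - 2 / p)
                * (LpG 2 Ω (u t)) ^ (2 / p)
              + C * LpG 2 Ω (u t)) ∧
        (LpS 2 Ω (Fflux Ω a γ μ lam ρ u B t)
            + LpV 2 Ω (grad (Fflux Ω a γ μ lam ρ u B t))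
          ≤ C * (LpV 2 Ω (fun x k => ρ t x * matD u t x k)
              + LpG 2 Ω (u t)
              + LpS 2 Ω (fun x => Real.sqrt (nsq (B t x)) * Real.sqrt (gnsq (B t) x))
              + (LpV 4 Ω (B t)) ^ 2)) ∧
        (LpS p Ω (Fflux Ω a γ μ lam ρ u B t)
          ≤ C * ((2 * μ + lam) * LpS 2 Ω (div2 (u t))
                + LpS 2 Ω (fun x => a * ρ t x ^ γ - Pbar Ω a γ ρ t)) ^ (2 / p)
              * (LpV 2 Ω (fun x k => ρ t x * matD u t x k)
                + LpG 2 Ω (u t)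
                + LpS 2 Ω (fun x => Real.sqrt (nsq (B t x)) * Real.sqrt (gnsq (B t) x)))
                  ^ (1 - 2 / p)
            + C * (LpV (2 * p) Ω (B t)) ^ 2) := by
  obtain ⟨C, hC, estimates⟩ := stmt_9_general hΩ hconv hμ.ne' hp
  refine ⟨C, hC, fun a γ lam ν T ρ u B _ hγ hlam _ _ hρ hu hB hsol t ht => ?_⟩
  refine (estimates a γ lam t ρ u B hγ.le (by linarith) (hsol.isSlipFlowAt hρ hu hB ht)).imp_left ?_
  exact fun projection v q hv hq =>
    projection v q ((contDiff_pi.2 hv).of_le ENat.LEInfty.out) (hq.of_le ENat.LEInfty.out)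

end MHD
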